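/- arXiv:2309.15322 — 3 statements merged into one kernel-verified Lean document; each statement's English description precedes it below -/
import Mathlib

section
/- There exist constants C, c, C₃ > 0 such that the following holds. If the partition is balanced, k ≥ 2, and n ≥ C·k²·p·(log n)¹²/(p−q)², then with probability at least 1 − c/n over the choice of E, for every vertex u ∈ V, ‖P_{Ĝ_k}·E_u‖ ≤ C₃·(√(kp)·(log n)² + √(log n)). -/
open MeasureTheory ProbabilityTheory Matrix Finset

namespace SBM

/-- Euclidean norm of a vector. -/
noncomputable def enorm {m : Type*} [Fintype m] (x : m → ℝ) : ℝ :=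
  Real.sqrt (∑ i, x i ^ 2)

/-- Spectral (ℓ²-operator) norm of a matrix. -/
noncomputable def specNorm {n : ℕ} (A : Matrix (Fin n) (Fin n) ℝ) : ℝ :=
  ‖Matrix.toEuclideanCLM (𝕜 := ℝ) A‖

/-- The `2 → ∞` norm: maximal Euclidean norm of a row. -/
noncomputable def n2i {n : ℕ} (A : Matrix (Fin n) (Fin n) ℝ) : ℝ :=
  ⨆ i : Fin n, enorm (A i)

/-- The mean matrix `G` of the SSBM with cluster assignment `cl`. -/
def meanMatrix (n k : ℕ) (p q : ℝ) (cl : Fin n → Fin k) : Matrix (Fin n) (Fin n) ℝ :=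
  Matrix.of fun u v => if cl u = cl v then p else q

/-- The size of cluster `i`. -/
def clusterSize {n k : ℕ} (cl : Fin n → Fin k) (i : Fin k) : ℕ :=
  (Finset.univ.filter fun v => cl v = i).card

/-- The partition is balanced: every cluster size is within a `1 ± 1/(16 log n)` factor
of `n / k`. -/
noncomputable def Balanced (n k : ℕ) (cl : Fin n → Fin k) : Prop :=
  ∀ i : Fin k,
    (1 - 1 / (16 * Real.log n)) * ((n : ℝ) / k) ≤ (clusterSize cl i : ℝ) ∧
    (clusterSize cl i : ℝ) ≤ (1 + 1 / (16 * Real.log n)) * ((n : ℝ) / k)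

/-- `lam, v` is a spectral decomposition of `A`: eigenvalues in non-increasing order with
an orthonormal eigenbasis. -/
def IsSpectralDecomp {n : ℕ} (A : Matrix (Fin n) (Fin n) ℝ)
    (lam : Fin n → ℝ) (v : Fin n → Fin n → ℝ) : Prop :=
  Antitone lam ∧
  (∀ i j, dotProduct (v i) (v j) = if i = j then (1 : ℝ) else 0) ∧
  A = ∑ i, lam i • Matrix.vecMulVec (v i) (v i)

/-- Orthogonal projection onto the span of the top `k` eigenvectors `v 0, …, v (k-1)`. -/
noncomputable def projTop {n : ℕ} (k : ℕ) (v : Fin n → Fin n → ℝ) :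
    Matrix (Fin n) (Fin n) ℝ :=
  ∑ i ∈ Finset.univ.filter (fun i : Fin n => (i : ℕ) < k), Matrix.vecMulVec (v i) (v i)

/-- The column of `A` indexed by `u`. -/
def column {n : ℕ} (A : Matrix (Fin n) (Fin n) ℝ) (u : Fin n) : Fin n → ℝ :=
  fun i => A i u

/-- `ψ(M) = A·M² + B·M` where `A = -1/(λ₁μ)`, `B = 1/λ₁ + 1/μ`. -/
noncomputable def psiM {n : ℕ} (lam1 mu : ℝ) (M : Matrix (Fin n) (Fin n) ℝ) :
    Matrix (Fin n) (Fin n) ℝ :=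
  (-(1 / (lam1 * mu))) • (M * M) + (1 / lam1 + 1 / mu) • M

/-- `φ(M) = ψ(M)^r`. -/
noncomputable def phiM {n : ℕ} (lam1 mu : ℝ) (r : ℕ) (M : Matrix (Fin n) (Fin n) ℝ) :
    Matrix (Fin n) (Fin n) ℝ :=
  psiM lam1 mu M ^ r

/-- `ψ(t) = A·t² + B·t` where `A = -1/(λ₁μ)`, `B = 1/λ₁ + 1/μ`. -/
noncomputable def psiR (lam1 mu t : ℝ) : ℝ :=
  (-(1 / (lam1 * mu))) * t ^ 2 + (1 / lam1 + 1 / mu) * t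

/-- `φ(t) = ψ(t)^r`. -/
noncomputable def phiR (lam1 mu : ℝ) (r : ℕ) (t : ℝ) : ℝ := psiR lam1 mu t ^ r

end SBM

namespace SBM

/-- The SSBM noise model: `E` is a random symmetric matrix whose upper-triangular entries
are independent, with `E_{uv} = 1 − G_{uv}` with probability `G_{uv}` and
`E_{uv} = −G_{uv}` with probability `1 − G_{uv}`, where `G` is the mean matrix. -/
def NoiseModel {Ω : Type*} [MeasureSpace Ω] {n k : ℕ} (p q : ℝ) (cl : Fin n → Fin k)
    (E : Ω → Matrix (Fin n) (Fin n) ℝ) : Prop :=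
  (∀ ω, (E ω).IsSymm) ∧
  (∀ u v : Fin n, Measurable fun ω => E ω u v) ∧
  iIndepFun (m := fun _ : {e : Fin n × Fin n // e.1 ≤ e.2} => (inferInstance : MeasurableSpace ℝ))
    (fun e ω => E ω e.1.1 e.1.2) ℙ ∧
  (∀ u v : Fin n, u ≤ v →
    Measure.map (fun ω => E ω u v) ℙ =
      ENNReal.ofReal (meanMatrix n k p q cl u v) •
        Measure.dirac (1 - meanMatrix n k p q cl u v) +
      ENNReal.ofReal (1 - meanMatrix n k p q cl u v) •
        Measure.dirac (-(meanMatrix n k p q cl u v)))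

end SBM

namespace SBMAux
set_option linter.unusedSectionVars false

/-- Numerical value of a bit. -/
noncomputable def bv (b : Bool) : ℝ := if b then 1 else 0

/-- Bernoulli weight of a bit. -/
noncomputable def wt (g : ℝ) (b : Bool) : ℝ := if b then g else 1 - g

/-- Product weight of a configuration. -/
noncomputable def pw {ι : Type*} [Fintype ι] (g : ι → ℝ) (x : ι → Bool) : ℝ :=
  ∏ i, wt (g i) (x i)

/-- Expectation under the product Bernoulli law. -/
noncomputable def ex {ι : Type*} [Fintype ι] [DecidableEq ι] (g : ι → ℝ)
    (f : (ι → Bool) → ℝ) : ℝ := ∑ x, pw g x * f x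

section
variable {ι : Type*} [Fintype ι] [DecidableEq ι] {g : ι → ℝ}

lemma wt_nonneg {g : ℝ} (h0 : 0 ≤ g) (h1 : g ≤ 1) (b : Bool) : 0 ≤ wt g b := by
  unfold wt; split_ifs <;> linarith

lemma pw_nonneg (hg : ∀ i, 0 ≤ g i ∧ g i ≤ 1) (x : ι → Bool) : 0 ≤ pw g x :=
  Finset.prod_nonneg fun i _ => wt_nonneg (hg i).1 (hg i).2 _

lemma ex_mono (hg : ∀ i, 0 ≤ g i ∧ g i ≤ 1) {f h : (ι → Bool) → ℝ} (hfh : ∀ x, f x ≤ h x) :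
    ex g f ≤ ex g h :=
  Finset.sum_le_sum fun x _ => mul_le_mul_of_nonneg_left (hfh x) (pw_nonneg hg x)

lemma ex_add (f h : (ι → Bool) → ℝ) : ex g (fun x => f x + h x) = ex g f + ex g h := by
  simp [ex, mul_add, Finset.sum_add_distrib]

lemma ex_mul (c : ℝ) (f : (ι → Bool) → ℝ) : ex g (fun x => c * f x) = c * ex g f := by
  simp only [ex, Finset.mul_sum]
  refine Finset.sum_congr rfl fun x _ => by ring

lemma ex_sum {κ : Type*} (s : Finset κ) (f : κ → (ι → Bool) → ℝ) :
    ex g (fun x => ∑ j ∈ s, f j x) = ∑ j ∈ s, ex g (f j) := by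
  simp only [ex, Finset.mul_sum]
  rw [Finset.sum_comm]

lemma ex_one : ex g (fun _ => 1) = 1 := by
  have h := Finset.prod_univ_sum (fun _ : ι => (Finset.univ : Finset Bool))
    (fun i b => wt (g i) b)
  simp only [ex, pw, mul_one]
  rw [Fintype.piFinset_univ] at h
  rw [← h]
  refine Finset.prod_eq_one fun i _ => ?_
  simp [wt]

lemma ex_const (c : ℝ) : ex g (fun _ => c) = c := by
  have := ex_mul (g := g) c (fun _ => 1)
  simpa [ex_one] using this

/-- Resampling one coordinate. -/
lemma ex_resample (i : ι) (f : (ι → Bool) → ℝ) :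
    ex g f = ex g (fun x => g i * f (Function.update x i true)
      + (1 - g i) * f (Function.update x i false)) := by
  have hinv : Function.Involutive (fun x : ι → Bool => Function.update x i (!(x i))) := by
    intro x; funext j
    by_cases h : j = i
    · subst h; simp
    · simp [h]
  have key : ∀ h : (ι → Bool) → ℝ,
      ∑ x, h x = ∑ x, h (Function.update x i (!(x i))) := by
    intro h
    exact (Equiv.sum_comp hinv.toPerm h).symm
  have hw : ∀ x, pw g x = wt (g i) (x i) * ∏ j ∈ Finset.univ.erase i, wt (g j) (x j) := by
    intro x
    exact (Finset.mul_prod_erase _ (fun j => wt (g j) (x j)) (Finset.mem_univ i)).symm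
  have hr : ∀ x b, ∏ j ∈ Finset.univ.erase i, wt (g j) (Function.update x i b j)
      = ∏ j ∈ Finset.univ.erase i, wt (g j) (x j) := by
    intro x b
    refine Finset.prod_congr rfl fun j hj => ?_
    rw [Function.update_of_ne (Finset.ne_of_mem_erase hj)]
  have h2 : ∀ h : (ι → Bool) → ℝ, 2 * ∑ x, h x
      = ∑ x, (h x + h (Function.update x i (!(x i)))) := by
    intro h
    rw [Finset.sum_add_distrib, ← key h]; ring
  have : 2 * ex g f = 2 * ex g (fun x => g i * f (Function.update x i true)
      + (1 - g i) * f (Function.update x i false)) := by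
    unfold ex
    rw [h2, h2]
    refine Finset.sum_congr rfl fun x _ => ?_
    simp only [hw, hr, Function.update_self, Function.update_idem]
    have hx : Function.update x i (x i) = x := Function.update_eq_self i x
    cases hxi : x i
    · rw [hxi] at hx
      simp only [wt, Bool.not_false, if_true, Bool.false_eq_true, if_false, hx]
      ring
    · rw [hxi] at hx
      simp only [wt, Bool.not_true, if_true, Bool.false_eq_true, if_false, hx]
      ring
  linarith

/-- Markov inequality. -/
lemma ex_markov (hg : ∀ i, 0 ≤ g i ∧ g i ≤ 1) (f : (ι → Bool) → ℝ) (hf : ∀ x, 0 ≤ f x)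
    (P : (ι → Bool) → Prop) [DecidablePred P] {t : ℝ} (ht : 0 < t) (h : ∀ x, P x → t ≤ f x) :
    ex g (fun x => if P x then 1 else 0) ≤ ex g f / t := by
  rw [le_div_iff₀ ht, mul_comm, ← ex_mul]
  refine ex_mono hg fun x => ?_
  split_ifs with hP
  · simpa using h x hP
  · simpa using hf x

end
end SBMAux

namespace SBMAux
set_option linter.unusedSectionVars false

lemma exp_quad {z : ℝ} (h : |z| ≤ 1) : Real.exp z ≤ 1 + z + z ^ 2 := by
  have := abs_le.1 (Real.abs_exp_sub_one_sub_id_le h)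
  linarith [this.2]

section
variable {H : Type*} [NormedAddCommGroup H] [InnerProductSpace ℝ H]

/-- Smoothed norm. -/
noncomputable def sn (a : ℝ) (x : H) : ℝ := Real.sqrt (a ^ 2 + ‖x‖ ^ 2)

lemma norm_le_sn (a : ℝ) (x : H) : ‖x‖ ≤ sn a x :=
  Real.le_sqrt_of_sq_le (by nlinarith [sq_nonneg a])

lemma le_sn (a : ℝ) (x : H) : a ≤ sn a x :=
  Real.le_sqrt_of_sq_le (by nlinarith [sq_nonneg ‖x‖])

lemma sn_step {a : ℝ} (ha : 0 < a) (S y : H) (c : ℝ) :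
    sn a (S + c • y) ≤ sn a S + (c * inner ℝ S y / sn a S + c ^ 2 * ‖y‖ ^ 2 / (2 * sn a S)) := by
  have hN : 0 < sn a S := lt_of_lt_of_le ha (le_sn a S)
  have hN2 : sn a S ^ 2 = a ^ 2 + ‖S‖ ^ 2 := Real.sq_sqrt (by positivity)
  set N := sn a S with hNdef
  have hexp : ‖S + c • y‖ ^ 2 = ‖S‖ ^ 2 + 2 * (c * inner ℝ S y) + c ^ 2 * ‖y‖ ^ 2 := by
    rw [norm_add_sq_real, inner_smul_right, norm_smul, mul_pow, Real.norm_eq_abs, sq_abs]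
  have heq : N + (c * inner ℝ S y / N + c ^ 2 * ‖y‖ ^ 2 / (2 * N))
      = (N ^ 2 + (N ^ 2 + (2 * (c * inner ℝ S y) + c ^ 2 * ‖y‖ ^ 2))) / (2 * N) := by
    field_simp
    ring
  have hW : a ^ 2 + ‖S + c • y‖ ^ 2 = N ^ 2 + (2 * (c * inner ℝ S y) + c ^ 2 * ‖y‖ ^ 2) := by
    rw [hexp, hN2]; ring
  have hWnn : 0 ≤ a ^ 2 + ‖S + c • y‖ ^ 2 := by positivity
  rw [heq, ← hW]
  unfold sn
  rw [le_div_iff₀ (by positivity)]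
  have := Real.sq_sqrt hWnn
  nlinarith [sq_nonneg (Real.sqrt (a ^ 2 + ‖S + c • y‖ ^ 2) - N)]

lemma sn_avg {l d g : ℝ} (hl : 0 < l) (hd : l * d ≤ 1 / 2) (hg0 : 0 ≤ g) (hg1 : g ≤ 1)
    (S y : H) (hy : ‖y‖ ≤ d) :
    g * Real.exp (l * sn (1 / l) (S + (1 - g) • y))
      + (1 - g) * Real.exp (l * sn (1 / l) (S + (-g) • y))
      ≤ Real.exp (l * sn (1 / l) S + 3 * l ^ 2 * g * ‖y‖ ^ 2) := by
  have ha : 0 < 1 / l := by positivity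
  have hN : 0 < sn (1 / l) S := lt_of_lt_of_le ha (le_sn _ S)
  have hNl : 1 ≤ l * sn (1 / l) S := by
    have := le_sn (1 / l) S
    rw [div_le_iff₀ hl] at this; linarith
  have hNS := norm_le_sn (1 / l) S
  set N := sn (1 / l) S with hNdef
  set r := inner ℝ S y / N with hr
  set w := ‖y‖ with hw
  have hw0 : 0 ≤ w := norm_nonneg y
  have hrw : |r| ≤ w := by
    rw [hr, abs_div, abs_of_pos hN, div_le_iff₀ hN]
    calc |inner ℝ S y| ≤ ‖S‖ * ‖y‖ := abs_real_inner_le_norm S y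
      _ ≤ w * N := by rw [mul_comm]; exact mul_le_mul_of_nonneg_left hNS hw0
  set s := w ^ 2 / (2 * N) with hs
  have hs0 : 0 ≤ s := by positivity
  have hs1 : s ≤ l * w ^ 2 / 2 := by
    rw [hs, div_le_iff₀ (by positivity)]
    nlinarith [mul_nonneg (sub_nonneg.2 hNl) (sq_nonneg w)]
  have hlw : l * w ≤ 1 / 2 := le_trans (mul_le_mul_of_nonneg_left hy hl.le) hd
  have hlw0 : 0 ≤ l * w := by positivity
  have step : ∀ c : ℝ, |c| ≤ 1 → Real.exp (l * sn (1 / l) (S + c • y))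
      ≤ Real.exp (l * N) * (1 + l * (c * r + c ^ 2 * s) + 2 * (l * w) ^ 2 * c ^ 2) := by
    intro c hc
    have h1 := sn_step ha S y c
    have h2 : sn (1 / l) (S + c • y) ≤ N + (c * r + c ^ 2 * s) := by
      refine h1.trans (le_of_eq ?_)
      rw [hr, hs]; ring
    set z := l * (c * r + c ^ 2 * s) with hz
    have hzabs : |z| ≤ (5 / 4) * (l * w) * |c| := by
      have e1 : |c * r + c ^ 2 * s| ≤ |c| * w + |c| * s := by
        refine (abs_add_le _ _).trans ?_
        rw [abs_mul, abs_mul, abs_of_nonneg hs0, abs_pow]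
        have : |c| ^ 2 ≤ |c| := by nlinarith [abs_nonneg c]
        gcongr
      rw [hz, abs_mul, abs_of_pos hl]
      have e2 : l * s ≤ (1 / 4) * (l * w) := by
        have : l * s ≤ l * (l * w ^ 2 / 2) := mul_le_mul_of_nonneg_left hs1 hl.le
        nlinarith
      calc l * |c * r + c ^ 2 * s| ≤ l * (|c| * w + |c| * s) := mul_le_mul_of_nonneg_left e1 hl.le
        _ = |c| * (l * w + l * s) := by ring
        _ ≤ |c| * (l * w + (1 / 4) * (l * w)) := by gcongr
        _ = _ := by ring
    have hz1 : |z| ≤ 1 := by nlinarith [abs_nonneg c]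
    have hz2 : z ^ 2 ≤ 2 * (l * w) ^ 2 * c ^ 2 := by
      have : z ^ 2 ≤ ((5 / 4) * (l * w) * |c|) ^ 2 := by
        rw [← sq_abs z]; gcongr
      rw [mul_pow (5 / 4 * (l * w)) |c|, sq_abs] at this
      nlinarith [mul_nonneg (sq_nonneg (l * w)) (sq_nonneg c)]
    calc Real.exp (l * sn (1 / l) (S + c • y)) ≤ Real.exp (l * N + z) := by
          apply Real.exp_le_exp.2
          rw [hz, ← mul_add]
          exact mul_le_mul_of_nonneg_left h2 hl.le
      _ = Real.exp (l * N) * Real.exp z := Real.exp_add _ _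
      _ ≤ Real.exp (l * N) * (1 + z + z ^ 2) := by gcongr; exact exp_quad hz1
      _ ≤ _ := by gcongr
  have hA := step (1 - g) (by rw [abs_le]; constructor <;> linarith)
  have hB := step (-g) (by rw [abs_le]; constructor <;> linarith)
  have hE := Real.exp_pos (l * N)
  have hl2 : l * s ≤ (l * w) ^ 2 := by
    have : l * s ≤ l * (l * w ^ 2 / 2) := mul_le_mul_of_nonneg_left hs1 hl.le
    nlinarith [sq_nonneg (l * w)]
  calc _ ≤ g * (Real.exp (l * N) * (1 + l * ((1 - g) * r + (1 - g) ^ 2 * s)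
          + 2 * (l * w) ^ 2 * (1 - g) ^ 2))
        + (1 - g) * (Real.exp (l * N) * (1 + l * ((-g) * r + (-g) ^ 2 * s)
          + 2 * (l * w) ^ 2 * (-g) ^ 2)) := by
        have : 0 ≤ 1 - g := by linarith
        gcongr
    _ = Real.exp (l * N) * (1 + (g * (1 - g)) * (l * s + 2 * (l * w) ^ 2)) := by ring
    _ ≤ Real.exp (l * N) * (1 + g * (3 * (l * w) ^ 2)) := by
        have h0 : 0 ≤ l * s := by positivity
        have h1 : g * (1 - g) ≤ g := by nlinarith
        have h2 : g * (1 - g) * (l * s + 2 * (l * w) ^ 2) ≤ g * (3 * (l * w) ^ 2) :=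
          mul_le_mul h1 (by linarith) (by positivity) hg0
        exact mul_le_mul_of_nonneg_left (by linarith) hE.le
    _ ≤ Real.exp (l * N) * Real.exp (3 * l ^ 2 * g * w ^ 2) := by
        gcongr
        have := Real.add_one_le_exp (3 * l ^ 2 * g * w ^ 2)
        calc _ = 3 * l ^ 2 * g * w ^ 2 + 1 := by ring
          _ ≤ _ := this
    _ = _ := (Real.exp_add _ _).symm

/-- Vector Bernstein-type exponential moment bound. -/
lemma vec_mgf {ι κ : Type*} [Fintype ι] [DecidableEq ι] [Fintype κ] [DecidableEq κ] {g : ι → ℝ}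
    (hg : ∀ i, 0 ≤ g i ∧ g i ≤ 1) (e : κ → ι) (he : Function.Injective e)
    (y : (ι → Bool) → κ → H) (hinv : ∀ x v b, y (Function.update x (e v) b) = y x)
    {p l d K : ℝ} (hp : ∀ v, g (e v) ≤ p) (hl : 0 < l) (hd : l * d ≤ 1 / 2)
    (hy : ∀ x v, ‖y x v‖ ≤ d) (hK : ∀ x, ∑ v, ‖y x v‖ ^ 2 ≤ K) (hp0 : 0 ≤ p) :
    ex g (fun x => Real.exp (l * ‖∑ v, (bv (x (e v)) - g (e v)) • y x v‖))
      ≤ Real.exp (1 + 3 * l ^ 2 * p * K) := by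
  have main : ∀ s : Finset κ, ex g (fun x => Real.exp (
      l * sn (1 / l) (∑ v ∈ s, (bv (x (e v)) - g (e v)) • y x v)
        - 3 * l ^ 2 * p * ∑ v ∈ s, ‖y x v‖ ^ 2)) ≤ Real.exp 1 := by
    intro s
    induction s using Finset.induction_on with
    | empty =>
      simp only [Finset.sum_empty, mul_zero, sub_zero]
      rw [ex_const]
      apply Real.exp_le_exp.2
      simp only [sn, norm_zero]
      rw [show (1 / l) ^ 2 + (0 : ℝ) ^ 2 = (1 / l) ^ 2 by ring, Real.sqrt_sq (by positivity)]
      field_simp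
      rfl
    | insert v s hv ih =>
      refine le_trans ?_ ih
      rw [ex_resample (e v)]
      refine ex_mono hg fun x => ?_
      simp only [hinv, Finset.sum_insert hv, Function.update_self]
      have hS : ∀ b, ∑ w ∈ s, (bv (Function.update x (e v) b (e w)) - g (e w)) • y x w
          = ∑ w ∈ s, (bv (x (e w)) - g (e w)) • y x w := by
        intro b
        refine Finset.sum_congr rfl fun w hw => ?_
        rw [Function.update_of_ne]
        intro h
        exact hv (he h ▸ hw)
      simp only [hS]
      set S := ∑ w ∈ s, (bv (x (e w)) - g (e w)) • y x w
      set T := ∑ w ∈ s, ‖y x w‖ ^ 2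
      have h := sn_avg hl hd (hg (e v)).1 (hg (e v)).2 S (y x v) (hy x v)
      have e1 : bv true - g (e v) = 1 - g (e v) := by simp [bv]
      have e2 : bv false - g (e v) = - g (e v) := by simp [bv]
      rw [e1, e2, add_comm _ S, add_comm _ S]
      simp only [mul_add, sub_eq_add_neg (l * _), neg_add, Real.exp_add]
      have hq := mul_le_mul_of_nonneg_right h
        (Real.exp_pos (-(3 * l ^ 2 * p * ‖y x v‖ ^ 2) + -(3 * l ^ 2 * p * T))).le
      have hfin : Real.exp (l * sn (1 / l) S + 3 * l ^ 2 * g (e v) * ‖y x v‖ ^ 2)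
          * Real.exp (-(3 * l ^ 2 * p * ‖y x v‖ ^ 2) + -(3 * l ^ 2 * p * T))
          ≤ Real.exp (l * sn (1 / l) S) * Real.exp (-(3 * l ^ 2 * p * T)) := by
        rw [← Real.exp_add, ← Real.exp_add]
        apply Real.exp_le_exp.2
        have : 3 * l ^ 2 * g (e v) * ‖y x v‖ ^ 2 ≤ 3 * l ^ 2 * p * ‖y x v‖ ^ 2 := by
          gcongr
          exact hp v
        linarith
      refine le_trans (le_of_eq ?_) (hq.trans hfin)
      rw [Real.exp_add]
      ring
  have h := main Finset.univ
  have h2 : ex g (fun x => Real.exp (-(3 * l ^ 2 * p * K)) *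
      Real.exp (l * ‖∑ v, (bv (x (e v)) - g (e v)) • y x v‖)) ≤ Real.exp 1 := by
    refine le_trans (ex_mono hg fun x => ?_) h
    rw [← Real.exp_add]
    apply Real.exp_le_exp.2
    have a1 := mul_le_mul_of_nonneg_left (norm_le_sn (1 / l)
      (∑ v, (bv (x (e v)) - g (e v)) • y x v)) hl.le
    have a2 : 3 * l ^ 2 * p * ∑ v, ‖y x v‖ ^ 2 ≤ 3 * l ^ 2 * p * K :=
      mul_le_mul_of_nonneg_left (hK x) (by positivity)
    linarith
  rw [ex_mul, Real.exp_neg, inv_mul_le_iff₀ (Real.exp_pos _), ← Real.exp_add] at h2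
  rwa [add_comm]

end

/-- Exponential moment of a degree. -/
lemma deg_mgf {ι κ : Type*} [Fintype ι] [DecidableEq ι] [DecidableEq κ] {g : ι → ℝ}
    (hg : ∀ i, 0 ≤ g i ∧ g i ≤ 1) (e : κ → ι) (he : Function.Injective e)
    {p : ℝ} (hp : ∀ v, g (e v) ≤ p) (s : Finset κ) :
    ex g (fun x => Real.exp (∑ v ∈ s, bv (x (e v)))) ≤ Real.exp (2 * p * s.card) := by
  induction s using Finset.induction_on with
  | empty => simp [ex_const]
  | insert v s hv ih =>
    rw [ex_resample (e v)]
    have hS : ∀ (x : ι → Bool) b, ∑ w ∈ s, bv (Function.update x (e v) b (e w)) = ∑ w ∈ s, bv (x (e w)) := by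
      intro x b
      refine Finset.sum_congr rfl fun w hw => ?_
      rw [Function.update_of_ne]
      intro h
      exact hv (he h ▸ hw)
    simp only [Finset.sum_insert hv, hS, Function.update_self, Real.exp_add]
    have e1 : Real.exp (bv true) ≤ 3 := by simp only [bv, if_true]; linarith [Real.exp_one_lt_d9]
    have e2 : Real.exp (bv false) = 1 := by simp [bv]
    have hle : ex g (fun x => g (e v) * (Real.exp (bv true) * Real.exp (∑ w ∈ s, bv (x (e w))))
        + (1 - g (e v)) * (Real.exp (bv false) * Real.exp (∑ w ∈ s, bv (x (e w)))))
        ≤ ex g (fun x => Real.exp (2 * p) * Real.exp (∑ w ∈ s, bv (x (e w)))) := by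
      refine ex_mono hg fun x => ?_
      have hP := Real.exp_pos (∑ w ∈ s, bv (x (e w)))
      have h3 := Real.add_one_le_exp (2 * p)
      have hq : g (e v) * Real.exp (bv true) + (1 - g (e v)) * Real.exp (bv false)
          ≤ Real.exp (2 * p) := by
        rw [e2]
        nlinarith [(hg (e v)).1, hp v]
      calc _ = (g (e v) * Real.exp (bv true) + (1 - g (e v)) * Real.exp (bv false))
            * Real.exp (∑ w ∈ s, bv (x (e w))) := by ring
        _ ≤ _ := by gcongr
    refine hle.trans ?_
    rw [ex_mul, Finset.card_insert_of_notMem hv]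
    refine (mul_le_mul_of_nonneg_left ih (Real.exp_pos _).le).trans (le_of_eq ?_)
    rw [← Real.exp_add]; congr 1; push_cast; ring

end SBMAux

namespace SBMAux
set_option linter.unusedSectionVars false

/-- Orthonormal basis, in coordinates. -/
def ONB {n : ℕ} (v : Fin n → Fin n → ℝ) : Prop :=
  ∀ i j, dotProduct (v i) (v j) = if i = j then (1 : ℝ) else 0

section
variable {n : ℕ} {v : Fin n → Fin n → ℝ}

lemma ONB.mul_transpose (h : ONB v) : Matrix.of v * (Matrix.of v)ᵀ = 1 := by
  ext i j
  rw [Matrix.mul_apply]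
  have := h i j
  simp only [dotProduct] at this
  simp only [Matrix.of_apply, Matrix.transpose_apply, this, Matrix.one_apply]

lemma ONB.transpose_mul (h : ONB v) : (Matrix.of v)ᵀ * Matrix.of v = 1 :=
  mul_eq_one_comm.1 h.mul_transpose

lemma parseval (h : ONB v) (x y : Fin n → ℝ) :
    ∑ i, (v i ⬝ᵥ x) * (v i ⬝ᵥ y) = x ⬝ᵥ y := by
  have e : ∑ i, (v i ⬝ᵥ x) * (v i ⬝ᵥ y) = (Matrix.of v *ᵥ x) ⬝ᵥ (Matrix.of v *ᵥ y) := rfl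
  rw [e, Matrix.dotProduct_mulVec, ← Matrix.mulVec_transpose, Matrix.mulVec_mulVec,
    h.transpose_mul, Matrix.one_mulVec]

lemma trace_onb (h : ONB v) (Z : Matrix (Fin n) (Fin n) ℝ) :
    Z.trace = ∑ b, v b ⬝ᵥ (Z *ᵥ v b) := by
  have e : Z.trace = (Matrix.of v * Z * (Matrix.of v)ᵀ).trace := by
    rw [Matrix.trace_mul_comm, ← Matrix.mul_assoc, h.transpose_mul, Matrix.one_mul]
  rw [e, Matrix.trace]
  refine Finset.sum_congr rfl fun b _ => ?_
  rw [Matrix.diag_apply, Matrix.mul_assoc]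
  simp only [Matrix.mul_apply, dotProduct, Matrix.mulVec, Matrix.of_apply, Matrix.transpose_apply]

lemma exists_eig {A : Matrix (Fin n) (Fin n) ℝ} (hA : A.IsSymm) :
    ∃ (lam : Fin n → ℝ) (v : Fin n → Fin n → ℝ), ONB v ∧ ∀ i, A *ᵥ v i = lam i • v i := by
  have hH : A.IsHermitian := by
    rw [Matrix.IsHermitian, Matrix.conjTranspose_eq_transpose_of_trivial]; exact hA
  refine ⟨hH.eigenvalues, fun i => (hH.eigenvectorBasis i).ofLp, ?_, ?_⟩
  · intro i j
    have := orthonormal_iff_ite.1 hH.eigenvectorBasis.orthonormal i j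
    rw [← this, EuclideanSpace.inner_eq_star_dotProduct, dotProduct_comm]
    simp
  · intro i
    exact hH.mulVec_eigenvectorBasis i

lemma dot_symm {A : Matrix (Fin n) (Fin n) ℝ} (hA : A.IsSymm) (x y : Fin n → ℝ) :
    x ⬝ᵥ (A *ᵥ y) = (A *ᵥ x) ⬝ᵥ y := by
  rw [Matrix.dotProduct_mulVec, ← Matrix.mulVec_transpose, hA.eq]

lemma pow_eig {A : Matrix (Fin n) (Fin n) ℝ} {lam : ℝ} {w : Fin n → ℝ}
    (h : A *ᵥ w = lam • w) (j : ℕ) : (A ^ j) *ᵥ w = lam ^ j • w := by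
  induction j with
  | zero => simp
  | succ j ih => rw [pow_succ, ← Matrix.mulVec_mulVec, h, Matrix.mulVec_smul, ih, smul_smul,
      pow_succ, mul_comm]

lemma pow_symm {A : Matrix (Fin n) (Fin n) ℝ} (hA : A.IsSymm) (j : ℕ) : (A ^ j).IsSymm := by
  rw [Matrix.IsSymm, Matrix.transpose_pow, hA.eq]

lemma quad_eig {A : Matrix (Fin n) (Fin n) ℝ} (hA : A.IsSymm) {lam : Fin n → ℝ} (hv : ONB v)
    (he : ∀ i, A *ᵥ v i = lam i • v i) (z : Fin n → ℝ) :
    z ⬝ᵥ (A *ᵥ z) = ∑ i, lam i * (v i ⬝ᵥ z) ^ 2 := by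
  rw [← parseval hv]
  refine Finset.sum_congr rfl fun i _ => ?_
  rw [dot_symm hA, he, smul_dotProduct, smul_eq_mul]; ring

lemma pow_mul_le (x y : ℝ) {j l r : ℕ} (h : j + l = 2 * r) :
    x ^ j * y ^ l ≤ x ^ (2 * r) + y ^ (2 * r) := by
  have hx : 0 ≤ |x| := abs_nonneg x
  have hy : 0 ≤ |y| := abs_nonneg y
  have ex : x ^ (2 * r) = |x| ^ (2 * r) := by rw [pow_mul, pow_mul, sq_abs]
  have ey : y ^ (2 * r) = |y| ^ (2 * r) := by rw [pow_mul, pow_mul, sq_abs]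
  rw [ex, ey]
  have h1 : x ^ j * y ^ l ≤ |x| ^ j * |y| ^ l := by
    refine (le_abs_self _).trans (le_of_eq ?_)
    rw [abs_mul, abs_pow, abs_pow]
  refine h1.trans ?_
  rcases le_total |x| |y| with hxy | hxy
  · calc |x| ^ j * |y| ^ l ≤ |y| ^ j * |y| ^ l := by gcongr
      _ = |y| ^ (2 * r) := by rw [← pow_add, h]
      _ ≤ _ := le_add_of_nonneg_left (by positivity)
  · calc |x| ^ j * |y| ^ l ≤ |x| ^ j * |x| ^ l := by gcongr
      _ = |x| ^ (2 * r) := by rw [← pow_add, h]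
      _ ≤ _ := le_add_of_nonneg_right (by positivity)

lemma trace_mixed {A X Y : Matrix (Fin n) (Fin n) ℝ} (hA : A.IsSymm) (hX : X.IsSymm)
    {x y : Fin n → ℝ} {u w : Fin n → Fin n → ℝ} (hu : ONB u) (hw : ONB w)
    (hux : ∀ i, X *ᵥ u i = x i • u i) (hwy : ∀ i, Y *ᵥ w i = y i • w i) (j l : ℕ) :
    (A * X ^ j * A * Y ^ l).trace
      = ∑ b, ∑ a, x a ^ j * y b ^ l * (u a ⬝ᵥ (A *ᵥ w b)) ^ 2 := by
  rw [trace_onb hw]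
  refine Finset.sum_congr rfl fun b _ => ?_
  rw [← Matrix.mulVec_mulVec, pow_eig (hwy b), Matrix.mulVec_smul, dotProduct_smul,
    Matrix.mul_assoc, ← Matrix.mulVec_mulVec, dot_symm hA, ← Matrix.mulVec_mulVec,
    quad_eig (pow_symm hX j) hu (fun i => pow_eig (hux i) j), smul_eq_mul, Finset.mul_sum]
  refine Finset.sum_congr rfl fun a _ => by ring

lemma trace_mixed_le {A X Y : Matrix (Fin n) (Fin n) ℝ} (hA : A.IsSymm) (hX : X.IsSymm)
    (hY : Y.IsSymm) {j l r : ℕ} (h : j + l = 2 * r) :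
    (A * X ^ j * A * Y ^ l).trace ≤ (A * A * X ^ (2 * r)).trace + (A * A * Y ^ (2 * r)).trace := by
  obtain ⟨x, u, hu, hux⟩ := exists_eig hX
  obtain ⟨y, w, hw, hwy⟩ := exists_eig hY
  have e1 : (A * A * X ^ (2 * r)).trace = (A * X ^ (2 * r) * A * Y ^ 0).trace := by
    rw [pow_zero, Matrix.mul_one, Matrix.trace_mul_comm, ← Matrix.mul_assoc,
      Matrix.trace_mul_comm, ← Matrix.mul_assoc]
  have e2 : (A * A * Y ^ (2 * r)).trace = (A * X ^ 0 * A * Y ^ (2 * r)).trace := by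
    rw [pow_zero, Matrix.mul_one]
  rw [e1, e2, trace_mixed hA hX hu hw hux hwy, trace_mixed hA hX hu hw hux hwy,
    trace_mixed hA hX hu hw hux hwy, ← Finset.sum_add_distrib]
  refine Finset.sum_le_sum fun b _ => ?_
  rw [← Finset.sum_add_distrib]
  refine Finset.sum_le_sum fun a _ => ?_
  rw [← add_mul]
  have := pow_mul_le (x a) (y b) h
  gcongr
  simpa using this

lemma pow_sub_pow_noncomm (X Y : Matrix (Fin n) (Fin n) ℝ) (N : ℕ) :
    X ^ N - Y ^ N = ∑ i ∈ Finset.range N, X ^ i * (X - Y) * Y ^ (N - 1 - i) := by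
  induction N with
  | zero => simp
  | succ N ih =>
    rw [Finset.sum_range_succ']
    have e : X ^ (N + 1) - Y ^ (N + 1) = X * (X ^ N - Y ^ N) + (X - Y) * Y ^ N := by
      rw [pow_succ', pow_succ', mul_sub, sub_mul]; abel
    rw [e, ih, Finset.mul_sum]
    congr 1
    · refine Finset.sum_congr rfl fun i hi => ?_
      have : N + 1 - 1 - (i + 1) = N - 1 - i := by omega
      rw [this, pow_succ']; simp only [Matrix.mul_assoc]
    · simp

lemma trace_diff {A X Y : Matrix (Fin n) (Fin n) ℝ} (hA : A.IsSymm) (hX : X.IsSymm)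
    (hY : Y.IsSymm) (hAXY : X - Y = A) (r : ℕ) :
    (A * X ^ (2 * r + 1)).trace - (A * Y ^ (2 * r + 1)).trace ≤
      (2 * r + 1) * ((A * A * X ^ (2 * r)).trace + (A * A * Y ^ (2 * r)).trace) := by
  rw [← Matrix.trace_sub, ← mul_sub, pow_sub_pow_noncomm, hAXY, Finset.mul_sum, Matrix.trace_sum]
  have hb : ∀ i ∈ Finset.range (2 * r + 1), (A * (X ^ i * A * Y ^ (2 * r + 1 - 1 - i))).trace
      ≤ (A * A * X ^ (2 * r)).trace + (A * A * Y ^ (2 * r)).trace := by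
    intro i hi
    have hi' := Finset.mem_range.1 hi
    have := trace_mixed_le hA hX hY (j := i) (l := 2 * r + 1 - 1 - i) (r := r) (by omega)
    refine le_trans (le_of_eq ?_) this
    simp only [Matrix.mul_assoc]
  refine (Finset.sum_le_card_nsmul _ _ _ hb).trans (le_of_eq ?_)
  rw [Finset.card_range, nsmul_eq_mul]; push_cast; ring

lemma diag_even_nonneg {X : Matrix (Fin n) (Fin n) ℝ} (hX : X.IsSymm) (r : ℕ) (u : Fin n) :
    0 ≤ (X ^ (2 * r)) u u := by
  have : X ^ (2 * r) = X ^ r * (X ^ r)ᵀ := by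
    rw [(pow_symm hX r).eq, ← pow_add]; congr 1; omega
  rw [this, Matrix.mul_apply]
  exact Finset.sum_nonneg fun i _ => by
    rw [Matrix.transpose_apply]; exact mul_self_nonneg _

lemma entry_pow_le {X : Matrix (Fin n) (Fin n) ℝ} (h1 : ∀ u v, |X u v| ≤ 1) (j : ℕ) (u v : Fin n) :
    |(X ^ j) u v| ≤ (n : ℝ) ^ j := by
  induction j generalizing u v with
  | zero =>
    rw [pow_zero, pow_zero, Matrix.one_apply]; split_ifs <;> simp
  | succ j ih =>
    rw [pow_succ, Matrix.mul_apply]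
    refine (Finset.abs_sum_le_sum_abs _ _).trans ?_
    have : ∀ i ∈ (Finset.univ : Finset (Fin n)), |(X ^ j) u i * X i v| ≤ (n : ℝ) ^ j := by
      intro i _
      rw [abs_mul]
      calc _ ≤ (n : ℝ) ^ j * 1 := by gcongr; exacts [ih u i, h1 i v]
        _ = _ := mul_one _
    refine (Finset.sum_le_card_nsmul _ _ _ this).trans (le_of_eq ?_)
    rw [Finset.card_univ, Fintype.card_fin, nsmul_eq_mul]; ring

/-- Operator norm bound from a trace bound. -/
lemma opbd_of_trace {X : Matrix (Fin n) (Fin n) ℝ} (hX : X.IsSymm) {m : ℕ} (hm : m ≠ 0) {B : ℝ}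
    (hB : 0 ≤ B) (h : (X ^ (2 * m)).trace ≤ B ^ (2 * m)) (z : Fin n → ℝ) :
    (X *ᵥ z) ⬝ᵥ (X *ᵥ z) ≤ B ^ 2 * (z ⬝ᵥ z) := by
  obtain ⟨x, u, hu, hux⟩ := exists_eig hX
  have htr : (X ^ (2 * m)).trace = ∑ i, x i ^ (2 * m) := by
    rw [trace_onb hu]
    refine Finset.sum_congr rfl fun i _ => ?_
    rw [pow_eig (hux i), dotProduct_smul, hu i i]; simp
  have hx : ∀ i, x i ^ 2 ≤ B ^ 2 := by
    intro i
    have h1 : x i ^ (2 * m) ≤ B ^ (2 * m) := by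
      refine le_trans ?_ (htr ▸ h)
      refine Finset.single_le_sum (f := fun i => x i ^ (2 * m)) (fun j _ => ?_) (Finset.mem_univ i)
      show 0 ≤ x j ^ (2 * m)
      rw [pow_mul]; positivity
    rw [pow_mul, pow_mul] at h1
    exact (pow_le_pow_iff_left₀ (by positivity) (by positivity) hm).1 h1
  rw [← parseval hu z z, ← parseval hu (X *ᵥ z), Finset.mul_sum]
  refine Finset.sum_le_sum fun i _ => ?_
  rw [dot_symm hX, hux, smul_dotProduct, smul_eq_mul]
  nlinarith [mul_le_mul_of_nonneg_right (hx i) (mul_self_nonneg (u i ⬝ᵥ z))]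

end
end SBMAux

namespace SBMAux
set_option linter.unusedSectionVars false

/-- Unordered pairs, as in the noise model. -/
abbrev Edge (n : ℕ) := {e : Fin n × Fin n // e.1 ≤ e.2}

/-- The edge joining two vertices. -/
def eg {n : ℕ} (u v : Fin n) : Edge n :=
  if h : u ≤ v then ⟨(u, v), h⟩ else ⟨(v, u), (not_le.1 h).le⟩

lemma eg_comm {n : ℕ} (u v : Fin n) : eg u v = eg v u := by
  unfold eg
  rcases lt_trichotomy u v with h | h | h
  · rw [dif_pos h.le, dif_neg (not_le.2 h)]
  · subst h; rfl
  · rw [dif_neg (not_le.2 h), dif_pos h.le]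

lemma eg_eq_iff {n : ℕ} (u v a b : Fin n) :
    eg u v = eg a b ↔ (u = a ∧ v = b) ∨ (u = b ∧ v = a) := by
  unfold eg
  split_ifs with h1 h2 h2 <;> simp only [Subtype.mk.injEq, Prod.mk.injEq] <;>
  · constructor
    · rintro ⟨rfl, rfl⟩; simp
    · rintro (⟨rfl, rfl⟩ | ⟨rfl, rfl⟩) <;>
        first
        | exact ⟨rfl, rfl⟩
        | (constructor <;> omega)

lemma eg_inj {n : ℕ} (u : Fin n) : Function.Injective (eg u) := by
  intro v w h
  rcases (eg_eq_iff _ _ _ _).1 h with h | h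
  · exact h.2
  · exact h.2.trans h.1

section
variable {n : ℕ} {g : Edge n → ℝ}

/-- The noise matrix of a configuration. -/
noncomputable def EM (g : Edge n → ℝ) (x : Edge n → Bool) : Matrix (Fin n) (Fin n) ℝ :=
  Matrix.of fun u v => bv (x (eg u v)) - g (eg u v)

/-- Elementary symmetric matrix of an edge. -/
noncomputable def AM (e : Edge n) : Matrix (Fin n) (Fin n) ℝ :=
  Matrix.of fun u v => if eg u v = e then 1 else 0

lemma EM_symm (x : Edge n → Bool) : (EM g x).IsSymm := by
  ext u v; simp [EM, eg_comm u v]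

lemma AM_symm (e : Edge n) : (AM e).IsSymm := by
  ext u v; simp [AM, eg_comm u v]

lemma bv_mem (b : Bool) : 0 ≤ bv b ∧ bv b ≤ 1 := by cases b <;> simp [bv]

lemma EM_entry (hg : ∀ i, 0 ≤ g i ∧ g i ≤ 1) (x : Edge n → Bool) (u v : Fin n) :
    |EM g x u v| ≤ 1 := by
  have h1 := bv_mem (x (eg u v)); have h2 := hg (eg u v)
  simp only [EM, Matrix.of_apply, abs_le]
  constructor <;> linarith

lemma EM_sum (x : Edge n → Bool) : EM g x = ∑ e, (bv (x e) - g e) • AM e := by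
  ext u v
  rw [Matrix.sum_apply]
  simp [EM, AM]

lemma EM_update (x : Edge n → Bool) (e : Edge n) :
    EM g (Function.update x e true) - EM g (Function.update x e false) = AM e := by
  ext u v
  simp only [EM, AM, Matrix.sub_apply, Matrix.of_apply]
  by_cases h : eg u v = e
  · subst h; simp [bv]
  · simp [h]

lemma AM_sq (e : Edge n) : AM e * AM e = Matrix.diagonal fun u => ∑ v, AM e u v := by
  ext u w
  rw [Matrix.mul_apply, Matrix.diagonal_apply]
  by_cases h : u = w
  · subst h
    rw [if_pos rfl]
    refine Finset.sum_congr rfl fun v _ => ?_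
    simp only [AM, Matrix.of_apply, eg_comm v u]
    split_ifs <;> simp
  · rw [if_neg h]
    refine Finset.sum_eq_zero fun v _ => ?_
    simp only [AM, Matrix.of_apply]
    by_cases h1 : eg u v = e
    · by_cases h2 : eg v w = e
      · exfalso
        rw [eg_comm u v] at h1
        exact h (eg_inj v (h1.trans h2.symm))
      · simp [h2]
    · simp [h1]

lemma trace_AM_sq (e : Edge n) (Z : Matrix (Fin n) (Fin n) ℝ) :
    (AM e * AM e * Z).trace = ∑ u, ∑ v, AM e u v * Z u u := by
  rw [AM_sq, Matrix.trace]
  refine Finset.sum_congr rfl fun u _ => ?_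
  rw [Matrix.diag_apply, Matrix.diagonal_mul, Finset.sum_mul]

lemma trace_AM_sq_nonneg (e : Edge n) (x : Edge n → Bool) (r : ℕ) :
    0 ≤ (AM e * AM e * EM g x ^ (2 * r)).trace := by
  rw [trace_AM_sq]
  refine Finset.sum_nonneg fun u _ => Finset.sum_nonneg fun v _ => ?_
  refine mul_nonneg ?_ (diag_even_nonneg (EM_symm x) r u)
  simp only [AM, Matrix.of_apply]; split_ifs <;> simp

/-- Degree-type quantity. -/
noncomputable def Dg (g : Edge n → ℝ) (x : Edge n → Bool) (u : Fin n) : ℝ :=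
  ∑ v, (bv (x (eg u v)) + g (eg u v))

/-- One step of the trace moment recursion. -/
lemma trace_rec (hg : ∀ i, 0 ≤ g i ∧ g i ≤ 1) (r : ℕ) :
    ex g (fun x => (EM g x ^ (2 * (r + 1))).trace)
      ≤ (2 * r + 1) * ex g (fun x => ∑ u, Dg g x u * (EM g x ^ (2 * r)) u u) := by
  have h1 : ∀ x, (EM g x ^ (2 * (r + 1))).trace
      = ∑ e, (bv (x e) - g e) * (AM e * EM g x ^ (2 * r + 1)).trace := by
    intro x
    have : EM g x ^ (2 * (r + 1)) = EM g x * EM g x ^ (2 * r + 1) := by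
      rw [← pow_succ']; congr 1
    rw [this]
    nth_rewrite 1 [EM_sum x]
    rw [Finset.sum_mul, Matrix.trace_sum]
    refine Finset.sum_congr rfl fun e _ => ?_
    rw [Matrix.smul_mul, Matrix.trace_smul, smul_eq_mul]
  have h2 : ∀ x, ∑ u, Dg g x u * (EM g x ^ (2 * r)) u u
      = ∑ e, (bv (x e) + g e) * (AM e * AM e * EM g x ^ (2 * r)).trace := by
    intro x
    simp only [trace_AM_sq, Dg, Finset.mul_sum, Finset.sum_mul]
    rw [Finset.sum_comm' (t' := Finset.univ) (s' := fun _ => Finset.univ) (by simp)]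
    rw [Finset.sum_comm]
    conv_rhs => rw [Finset.sum_comm]
    refine Finset.sum_congr rfl fun u _ => ?_
    conv_rhs => rw [Finset.sum_comm]
    refine Finset.sum_congr rfl fun v _ => ?_
    simp [AM]
  simp only [h1, h2]
  rw [ex_sum, ex_sum, Finset.mul_sum]
  refine Finset.sum_le_sum fun e _ => ?_
  rw [← ex_mul, ex_resample e, ex_resample e (fun x => (2 * (r : ℝ) + 1) * _)]
  refine ex_mono hg fun x => ?_
  simp only [Function.update_self]
  have hb1 : bv true = 1 := by simp [bv]
  have hb0 : bv false = 0 := by simp [bv]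
  rw [hb1, hb0]
  have hd := trace_diff (AM_symm e) (EM_symm (Function.update x e true))
    (EM_symm (Function.update x e false)) (EM_update (g := g) x e) r
  have n1 := trace_AM_sq_nonneg (g := g) e (Function.update x e true) r
  have n0 := trace_AM_sq_nonneg (g := g) e (Function.update x e false) r
  set f1 := (AM e * AM e * EM g (Function.update x e true) ^ (2 * r)).trace
  set f0 := (AM e * AM e * EM g (Function.update x e false) ^ (2 * r)).trace
  set t1 := (AM e * EM g (Function.update x e true) ^ (2 * r + 1)).trace
  set t0 := (AM e * EM g (Function.update x e false) ^ (2 * r + 1)).trace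
  obtain ⟨g0, g1⟩ := hg e
  have hgg : 0 ≤ g e * (1 - g e) := mul_nonneg g0 (by linarith)
  have hr : (0 : ℝ) ≤ 2 * r + 1 := by positivity
  calc g e * ((1 - g e) * t1) + (1 - g e) * ((0 - g e) * t0) = g e * (1 - g e) * (t1 - t0) := by ring
    _ ≤ g e * (1 - g e) * ((2 * r + 1) * (f1 + f0)) := mul_le_mul_of_nonneg_left hd hgg
    _ ≤ _ := by
      have a1 : 0 ≤ (2 * (r : ℝ) + 1) * (g e * f1) := by positivity
      have a2 : 0 ≤ (2 * (r : ℝ) + 1) * (g e * f1) * g e := mul_nonneg a1 g0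
      nlinarith

/-- Probability that some degree is large. -/
lemma bad_deg (hg : ∀ i, 0 ≤ g i ∧ g i ≤ 1) {p : ℝ} (hp : ∀ i, g i ≤ p) :
    ex g (fun x => if ∃ u, 4 * n * p < Dg g x u then 1 else 0) ≤ n * Real.exp (-(n * p)) := by
  have h1 : ∀ x, (if ∃ u, 4 * n * p < Dg g x u then (1 : ℝ) else 0)
      ≤ ∑ u, Real.exp (-(3 * n * p)) * Real.exp (∑ v, bv (x (eg u v))) := by
    intro x
    have hpos : ∀ u ∈ (Finset.univ : Finset (Fin n)),
      0 ≤ Real.exp (-(3 * n * p)) * Real.exp (∑ v, bv (x (eg u v))) := fun u _ => by positivity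
    split_ifs with h
    · obtain ⟨u, hu⟩ := h
      refine le_trans ?_ (Finset.single_le_sum hpos (Finset.mem_univ u))
      rw [← Real.exp_add]
      apply Real.one_le_exp
      have : Dg g x u ≤ ∑ v, bv (x (eg u v)) + n * p := by
        unfold Dg
        rw [Finset.sum_add_distrib]
        gcongr
        refine (Finset.sum_le_card_nsmul _ _ p fun v _ => hp _).trans (le_of_eq ?_)
        simp
      linarith
    · exact Finset.sum_nonneg hpos
  refine (ex_mono hg h1).trans ?_
  rw [ex_sum]
  refine (Finset.sum_le_card_nsmul _ _ (Real.exp (-(n * p))) fun u _ => ?_).trans (le_of_eq ?_)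
  · rw [ex_mul]
    have := deg_mgf hg (eg u) (eg_inj u) (fun v => hp _) Finset.univ
    refine (mul_le_mul_of_nonneg_left this (Real.exp_pos _).le).trans (le_of_eq ?_)
    rw [← Real.exp_add]
    congr 1; simp; ring
  · simp

/-- Truncated recursion. -/
lemma trace_rec' (hn : 0 < n) (hg : ∀ i, 0 ≤ g i ∧ g i ≤ 1) {p : ℝ} (hp : ∀ i, g i ≤ p) (r : ℕ)
    (hsmall : 2 * (n : ℝ) ^ (2 * r + 3) * Real.exp (-(n * p)) ≤ 1) :
    ex g (fun x => (EM g x ^ (2 * (r + 1))).trace)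
      ≤ (2 * r + 1) * (4 * n * p * ex g (fun x => (EM g x ^ (2 * r)).trace) + 1) := by
  refine (trace_rec hg r).trans ?_
  refine mul_le_mul_of_nonneg_left ?_ (by positivity)
  have h1 : ∀ x, ∑ u, Dg g x u * (EM g x ^ (2 * r)) u u
      ≤ 4 * n * p * (EM g x ^ (2 * r)).trace
        + 2 * (n : ℝ) ^ (2 * r + 2) * (if ∃ u, 4 * n * p < Dg g x u then 1 else 0) := by
    intro x
    have hZ : ∀ u, 0 ≤ (EM g x ^ (2 * r)) u u := diag_even_nonneg (EM_symm x) r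
    split_ifs with h
    · have hp0 : 0 ≤ p := by
        obtain ⟨u, _⟩ := h
        exact (hg (eg u u)).1.trans (hp _)
      have htr : 0 ≤ (EM g x ^ (2 * r)).trace := Finset.sum_nonneg fun u _ => hZ u
      have : ∀ u ∈ (Finset.univ : Finset (Fin n)), Dg g x u * (EM g x ^ (2 * r)) u u
          ≤ (2 * n) * (n : ℝ) ^ (2 * r) := by
        intro u _
        have hD : Dg g x u ≤ 2 * n := by
          refine (Finset.sum_le_card_nsmul _ _ 2 fun v _ => ?_).trans (le_of_eq ?_)
          · linarith [(bv_mem (x (eg u v))).2, (hg (eg u v)).2]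
          · simp [mul_comm]
        have hZ2 := (le_abs_self _).trans (entry_pow_le (EM_entry hg x) (2 * r) u u)
        exact mul_le_mul hD hZ2 (hZ u) (by positivity)
      have h3 := Finset.sum_le_card_nsmul _ _ _ this
      rw [Finset.card_univ, Fintype.card_fin, nsmul_eq_mul] at h3
      have : 0 ≤ 4 * n * p * (EM g x ^ (2 * r)).trace := by positivity
      calc _ ≤ _ := h3
        _ = 2 * (n : ℝ) ^ (2 * r + 2) * 1 := by ring
        _ ≤ _ := by linarith
    · push Not at h
      rw [mul_zero, add_zero, Matrix.trace, Finset.mul_sum]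
      exact Finset.sum_le_sum fun u _ => mul_le_mul_of_nonneg_right (h u) (hZ u)
  refine (ex_mono hg h1).trans ?_
  rw [ex_add, ex_mul, ex_mul]
  have hb := bad_deg hg hp
  have : 2 * (n : ℝ) ^ (2 * r + 2) * ex g (fun x => if ∃ u, 4 * n * p < Dg g x u then 1 else 0)
      ≤ 1 := by
    refine (mul_le_mul_of_nonneg_left hb (by positivity)).trans (le_trans (le_of_eq ?_) hsmall)
    ring
  linarith

lemma trace_moment (hn : 0 < n) (hg : ∀ i, 0 ≤ g i ∧ g i ≤ 1) {p : ℝ} (hp : ∀ i, g i ≤ p)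
    (hnp : 1 ≤ n * p) (m : ℕ)
    (hsmall : 2 * (n : ℝ) ^ (2 * m + 1) * Real.exp (-(n * p)) ≤ 1) (r : ℕ) (hr : r ≤ m) :
    ex g (fun x => (EM g x ^ (2 * r)).trace) ≤ n * (10 * m * (n * p)) ^ r := by
  induction r with
  | zero => simp [ex_const]
  | succ r ih =>
    have hn1 : (1 : ℝ) ≤ n := by exact_mod_cast hn
    have hm1 : (1 : ℝ) ≤ m := by exact_mod_cast (by omega : 1 ≤ m)
    have hrm : (r : ℝ) + 1 ≤ m := by exact_mod_cast hr
    have ih' := ih (by omega)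
    have hs : 2 * (n : ℝ) ^ (2 * r + 3) * Real.exp (-(n * p)) ≤ 1 := by
      refine le_trans ?_ hsmall
      have h3 := pow_le_pow_right₀ hn1 (by omega : 2 * r + 3 ≤ 2 * m + 1)
      exact mul_le_mul_of_nonneg_right (by linarith) (Real.exp_pos _).le
    refine (trace_rec' hn hg hp r hs).trans ?_
    set Q := 10 * m * (n * p) with hQ
    have hQ1 : 1 ≤ Q := by nlinarith
    have hQr : 1 ≤ (n : ℝ) * Q ^ r := by
      have := one_le_pow₀ hQ1 (n := r); nlinarith
    have h5 : 4 * n * p * ex g (fun x => (EM g x ^ (2 * r)).trace) + 1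
        ≤ 5 * (n * p) * (n * Q ^ r) := by
      have := mul_le_mul_of_nonneg_left ih' (by linarith : (0 : ℝ) ≤ 4 * (n * p))
      nlinarith
    calc _ ≤ (2 * m) * (5 * (n * p) * (n * Q ^ r)) := by
          apply mul_le_mul (by linarith) h5 _ (by linarith)
          have : 0 ≤ ex g (fun x => (EM g x ^ (2 * r)).trace) := by
            rw [← ex_const (g := g) 0]
            exact ex_mono hg fun x =>
              Finset.sum_nonneg fun u _ => diag_even_nonneg (EM_symm x) r u
          nlinarith
      _ = _ := by rw [pow_succ, hQ]; ring

open Classical in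
/-- Spectral norm bound with high probability. -/
lemma opnorm_prob (hn : 0 < n) (hg : ∀ i, 0 ≤ g i ∧ g i ≤ 1) {p : ℝ} (hp : ∀ i, g i ≤ p)
    (hnp : 1 ≤ n * p) (hl1 : 1 ≤ Real.log n) (hbig : 1 + 7 * Real.log n ^ 2 ≤ n * p)
    {B : ℝ} (hB : B ^ 2 = 500 * (n * p) * Real.log n) :
    ex g (fun x => if ∃ z, B ^ 2 * (z ⬝ᵥ z) < (EM g x *ᵥ z) ⬝ᵥ (EM g x *ᵥ z) then 1 else 0)
      ≤ 1 / (n : ℝ) ^ 2 := by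
  set m := ⌈Real.log n⌉₊ with hm
  have hn1 : (0 : ℝ) < n := by exact_mod_cast hn
  have hml : Real.log n ≤ m := Nat.le_ceil _
  have hmu : (m : ℝ) ≤ 2 * Real.log n := by
    have := Nat.ceil_lt_add_one (a := Real.log n) (by linarith)
    linarith
  have hm0 : m ≠ 0 := by
    intro h; rw [h] at hml; norm_num at hml; linarith
  have hnexp : (n : ℝ) = Real.exp (Real.log n) := (Real.exp_log hn1).symm
  have hsmall : 2 * (n : ℝ) ^ (2 * m + 1) * Real.exp (-(n * p)) ≤ 1 := by
    have h2 : (2 : ℝ) ≤ Real.exp 1 := by linarith [Real.add_one_le_exp (1 : ℝ)]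
    have h3 : (n : ℝ) ^ (2 * m + 1) = Real.exp ((2 * m + 1) * Real.log n) := by
      have := Real.exp_nat_mul (Real.log n) (2 * m + 1)
      rw [Real.exp_log hn1] at this
      rw [← this]; push_cast; rfl
    rw [h3]
    calc 2 * Real.exp ((2 * m + 1) * Real.log n) * Real.exp (-(n * p))
        ≤ Real.exp 1 * Real.exp ((2 * m + 1) * Real.log n) * Real.exp (-(n * p)) := by gcongr
      _ = Real.exp (1 + (2 * m + 1) * Real.log n + -(n * p)) := by rw [Real.exp_add, Real.exp_add]
      _ ≤ 1 := by
        rw [Real.exp_le_one_iff]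
        nlinarith
  have hmom := trace_moment hn hg hp hnp m hsmall m le_rfl
  have hnp0 : 0 ≤ n * p := by linarith
  have hQ : 0 < 10 * m * (n * p) := by
    have : 0 < (m : ℝ) := by positivity
    positivity
  have ht : 0 < (n : ℝ) ^ 3 * (10 * m * (n * p)) ^ m := by positivity
  have hmk := ex_markov hg (fun x => (EM g x ^ (2 * m)).trace)
    (fun x => Finset.sum_nonneg fun u _ => diag_even_nonneg (EM_symm x) m u)
    (fun x => ∃ z, B ^ 2 * (z ⬝ᵥ z) < (EM g x *ᵥ z) ⬝ᵥ (EM g x *ᵥ z)) ht (by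
      rintro x ⟨z, hz⟩
      by_contra hcon
      push Not at hcon
      have hB0 : B ^ 2 = |B| ^ 2 := (sq_abs B).symm
      have := opbd_of_trace (EM_symm x) hm0 (abs_nonneg B) (le_trans hcon.le ?_) z
      · rw [hB0] at hz; linarith
      · rw [pow_mul, ← hB0, hB]
        have e3 : (n : ℝ) ^ 3 ≤ (25 : ℝ) ^ m := by
          have h25 : Real.exp 3 ≤ 25 := by
            have : Real.exp 3 = Real.exp 1 ^ 3 := by rw [← Real.exp_nat_mul]; norm_num
            rw [this]
            calc Real.exp 1 ^ 3 ≤ 2.72 ^ 3 := by gcongr; linarith [Real.exp_one_lt_d9]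
              _ ≤ 25 := by norm_num
          calc (n : ℝ) ^ 3 = Real.exp (3 * Real.log n) := by
                have := Real.exp_nat_mul (Real.log n) 3
                rw [Real.exp_log hn1] at this
                rw [← this]; norm_num
            _ ≤ Real.exp (m * 3) := by apply Real.exp_le_exp.2; linarith
            _ = Real.exp 3 ^ m := Real.exp_nat_mul _ _
            _ ≤ _ := by gcongr
        calc _ ≤ (25 : ℝ) ^ m * (10 * m * (n * p)) ^ m := by gcongr
          _ = (25 * (10 * m * (n * p))) ^ m := (mul_pow _ _ _).symm
          _ ≤ _ := by
            have h9 : 25 * (10 * m * (n * p)) ≤ 500 * (n * p) * Real.log n := by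
              have := mul_le_mul_of_nonneg_left hmu hnp0
              nlinarith
            exact pow_le_pow_left₀ (by positivity) h9 m)
  refine hmk.trans ?_
  · rw [div_le_div_iff₀ ht (by positivity)]
    nlinarith [mul_le_mul_of_nonneg_left hmom (by positivity : (0 : ℝ) ≤ (n : ℝ) ^ 2)]

end
end SBMAux

namespace SBMAux
set_option linter.unusedSectionVars false

section
variable {n : ℕ} {v : Fin n → Fin n → ℝ}

/-- Euclidean norm through the dot product. -/
noncomputable def nr (x : Fin n → ℝ) : ℝ := Real.sqrt (x ⬝ᵥ x)

/-- Euclidean norm of the coordinates in `T` with respect to the family `v`. -/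
noncomputable def pn (T : Finset (Fin n)) (v : Fin n → Fin n → ℝ) (x : Fin n → ℝ) : ℝ :=
  Real.sqrt (∑ i ∈ T, (v i ⬝ᵥ x) ^ 2)

lemma dot_self_nonneg (x : Fin n → ℝ) : 0 ≤ x ⬝ᵥ x :=
  Finset.sum_nonneg fun _ _ => mul_self_nonneg _

lemma nr_nonneg (x : Fin n → ℝ) : 0 ≤ nr x := Real.sqrt_nonneg _
lemma nr_sq (x : Fin n → ℝ) : nr x ^ 2 = x ⬝ᵥ x := Real.sq_sqrt (dot_self_nonneg x)
lemma pn_nonneg (T : Finset (Fin n)) (x : Fin n → ℝ) : 0 ≤ pn T v x := Real.sqrt_nonneg _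
lemma pn_sq (T : Finset (Fin n)) (x : Fin n → ℝ) : pn T v x ^ 2 = ∑ i ∈ T, (v i ⬝ᵥ x) ^ 2 :=
  Real.sq_sqrt (Finset.sum_nonneg fun _ _ => sq_nonneg _)

lemma cs (x y : Fin n → ℝ) : |x ⬝ᵥ y| ≤ nr x * nr y := by
  apply abs_le_of_sq_le_sq _ (mul_nonneg (nr_nonneg x) (nr_nonneg y))
  rw [mul_pow, nr_sq, nr_sq]
  have := Finset.sum_mul_sq_le_sq_mul_sq Finset.univ x y
  simpa [dotProduct, sq] using this

lemma pn_add_le (T : Finset (Fin n)) (x y : Fin n → ℝ) :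
    pn T v (x + y) ≤ pn T v x + pn T v y := by
  have key : ∀ z, pn T v z = ‖(WithLp.toLp 2 (fun i : T => v i ⬝ᵥ z) : EuclideanSpace ℝ T)‖ := by
    intro z
    rw [EuclideanSpace.norm_eq, pn, ← Finset.sum_coe_sort]
    simp
  rw [key, key, key]
  refine le_trans (le_of_eq ?_) (norm_add_le _ _)
  congr 1
  ext i
  simp [dotProduct_add]

lemma pn_le_nr (hv : ONB v) (T : Finset (Fin n)) (x : Fin n → ℝ) : pn T v x ≤ nr x := by
  apply Real.sqrt_le_sqrt
  rw [← parseval hv x x]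
  simp only [← sq]
  exact Finset.sum_le_sum_of_subset_of_nonneg (Finset.subset_univ T) fun _ _ _ => sq_nonneg _

lemma pn_eig {X : Matrix (Fin n) (Fin n) ℝ} (hX : X.IsSymm) {lam : Fin n → ℝ}
    (he : ∀ i, X *ᵥ v i = lam i • v i) {T : Finset (Fin n)} {t : ℝ} (ht : 0 ≤ t)
    (hT : ∀ i ∈ T, t ≤ lam i) (x : Fin n → ℝ) : t * pn T v x ≤ pn T v (X *ᵥ x) := by
  apply Real.le_sqrt_of_sq_le
  rw [mul_pow, pn_sq, Finset.mul_sum]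
  refine Finset.sum_le_sum fun i hi => ?_
  rw [dot_symm hX, he, smul_dotProduct, smul_eq_mul, mul_pow]
  have := hT i hi
  gcongr

/-- Operator norm bound. -/
def OpBd (A : Matrix (Fin n) (Fin n) ℝ) (B : ℝ) : Prop :=
  ∀ z, (A *ᵥ z) ⬝ᵥ (A *ᵥ z) ≤ B ^ 2 * (z ⬝ᵥ z)

lemma OpBd.nr_le {A : Matrix (Fin n) (Fin n) ℝ} {B : ℝ} (h : OpBd A B) (hB : 0 ≤ B)
    (z : Fin n → ℝ) : nr (A *ᵥ z) ≤ B * nr z := by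
  apply Real.sqrt_le_iff.2
  refine ⟨mul_nonneg hB (nr_nonneg z), ?_⟩
  rw [mul_pow, nr_sq]; exact h z

/-- What we use about the mean matrix. -/
structure MeanData (G Q : Matrix (Fin n) (Fin n) ℝ) (k : ℕ) (L s : ℝ) : Prop where
  gs : G.IsSymm
  qs : Q.IsSymm
  qq : Q * Q = Q
  gq : G * Q = G
  quad : ∀ x, L * ((Q *ᵥ x) ⬝ᵥ (Q *ᵥ x)) ≤ x ⬝ᵥ (G *ᵥ x)
  tr : Q.trace = k
  dg : ∀ u, Q u u ≤ s ^ 2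
  dim : ∀ i : ℕ, i < k → ∀ f : Fin i → Fin n → ℝ, ∃ x, x ≠ 0 ∧ Q *ᵥ x = x ∧ ∀ j, f j ⬝ᵥ x = 0

section
variable {G Q : Matrix (Fin n) (Fin n) ℝ} {k : ℕ} {L s : ℝ}

lemma MeanData.qq_dot (h : MeanData G Q k L s) (x : Fin n → ℝ) :
    (Q *ᵥ x) ⬝ᵥ (Q *ᵥ x) = x ⬝ᵥ (Q *ᵥ x) := by
  rw [← dot_symm h.qs, Matrix.mulVec_mulVec, h.qq]

lemma MeanData.G_compl (h : MeanData G Q k L s) (x : Fin n → ℝ) : G *ᵥ (x - Q *ᵥ x) = 0 := by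
  rw [Matrix.mulVec_sub, Matrix.mulVec_mulVec, h.gq, sub_self]

/-- Splitting of an eigenvector. -/
lemma MeanData.split (h : MeanData G Q k L s) {E' : Matrix (Fin n) (Fin n) ℝ} {B μ : ℝ} (hB : 0 ≤ B)
    (hE : OpBd E' B) {w : Fin n → ℝ} (hw : w ⬝ᵥ w = 1) (he : (G + E') *ᵥ w = μ • w) :
    μ * (1 - nr (Q *ᵥ w) ^ 2) ≤ B * nr (w - Q *ᵥ w) ∧
    nr (w - Q *ᵥ w) ^ 2 = 1 - nr (Q *ᵥ w) ^ 2 ∧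
    (L - μ) * nr (Q *ᵥ w) ^ 2 ≤ B * nr (Q *ᵥ w) := by
  have hE1 : nr (E' *ᵥ w) ≤ B := by
    have := hE.nr_le hB w
    rwa [nr, nr, hw, Real.sqrt_one, mul_one] at this
  set a := Q *ᵥ w with ha
  set b := w - a with hb
  have hQa : a ⬝ᵥ a = w ⬝ᵥ a := h.qq_dot w
  have hbb : b ⬝ᵥ b = 1 - a ⬝ᵥ a := by
    rw [hb, sub_dotProduct, dotProduct_sub, dotProduct_sub, hw, dotProduct_comm a w, hQa]; ring
  have hbw : b ⬝ᵥ w = 1 - a ⬝ᵥ a := by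
    rw [hb, sub_dotProduct, hw, dotProduct_comm a w, hQa]
  have hGb : G *ᵥ b = 0 := h.G_compl w
  have hGw : G *ᵥ w = G *ᵥ a := by
    have : w = a + b := by rw [hb]; abel
    rw [this, Matrix.mulVec_add, hGb, add_zero]
  refine ⟨?_, ?_, ?_⟩
  · rw [nr_sq, ← hbw, ← smul_eq_mul, ← dotProduct_smul, ← he, Matrix.add_mulVec, dotProduct_add,
      dot_symm h.gs, hGb, zero_dotProduct, zero_add]
    calc b ⬝ᵥ E' *ᵥ w ≤ nr b * nr (E' *ᵥ w) := (le_abs_self _).trans (cs _ _)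
      _ ≤ B * nr b := by rw [mul_comm]; exact mul_le_mul_of_nonneg_right hE1 (nr_nonneg b)
  · rw [nr_sq, nr_sq, hbb]
  · rw [nr_sq]
    have h1 : μ * (a ⬝ᵥ a) = a ⬝ᵥ (G *ᵥ a) + a ⬝ᵥ (E' *ᵥ w) := by
      rw [← hGw, ← dotProduct_add, ← Matrix.add_mulVec, he, dotProduct_smul, smul_eq_mul,
        dotProduct_comm a w, hQa]
    have h2 := h.quad a
    have hQQ : Q *ᵥ a = a := by rw [ha, Matrix.mulVec_mulVec, h.qq]
    rw [hQQ] at h2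
    have h3 := (abs_le.1 (cs a (E' *ᵥ w))).1
    have h4 : nr a * nr (E' *ᵥ w) ≤ B * nr a := by
      rw [mul_comm]; exact mul_le_mul_of_nonneg_right hE1 (nr_nonneg a)
    linarith

lemma MeanData.dichotomy (h : MeanData G Q k L s) {E' : Matrix (Fin n) (Fin n) ℝ} {B μ : ℝ}
    (hB : 0 < B) (hE : OpBd E' B) {w : Fin n → ℝ} (hw : w ⬝ᵥ w = 1)
    (he : (G + E') *ᵥ w = μ • w) : μ < 2 * B ∨ L - 2 * B < μ := by
  by_contra hcon
  push Not at hcon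
  obtain ⟨h1, h2⟩ := hcon
  obtain ⟨e1, e2, e3⟩ := h.split hB.le hE hw he
  have ha := nr_nonneg (Q *ᵥ w)
  have hb := nr_nonneg (w - Q *ᵥ w)
  set a := nr (Q *ᵥ w)
  set b := nr (w - Q *ᵥ w)
  rw [← e2] at e1
  have hb2 : b ≤ 1 / 2 := by
    by_contra hc
    push Not at hc
    nlinarith [mul_pos hB (lt_trans (by norm_num) hc), mul_nonneg (sub_nonneg.2 h1) (sq_nonneg b)]
  have ha2 : a ≤ 1 / 2 := by
    by_contra hc
    push Not at hc
    nlinarith [mul_pos hB (lt_trans (by norm_num) hc),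
      mul_nonneg (sub_nonneg.2 h2) (sq_nonneg a)]
  nlinarith

lemma MeanData.card_le (h : MeanData G Q k L s) {E' : Matrix (Fin n) (Fin n) ℝ} {B : ℝ}
    (hB : 0 < B) (hE : OpBd E' B) {μ : Fin n → ℝ} {w : Fin n → Fin n → ℝ} (hw : ONB w)
    (he : ∀ i, (G + E') *ᵥ w i = μ i • w i) {T : Finset (Fin n)} (hT : ∀ i ∈ T, 2 * B ≤ μ i) :
    (T.card : ℝ) ≤ 2 * k := by
  have h1 : ∀ i ∈ T, (1 / 2 : ℝ) ≤ w i ⬝ᵥ (Q *ᵥ w i) := by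
    intro i hi
    have hwi : w i ⬝ᵥ w i = 1 := by simpa using hw i i
    obtain ⟨e1, e2, e3⟩ := h.split hB.le hE hwi (he i)
    rw [← h.qq_dot, ← nr_sq]
    have hb := nr_nonneg (w i - Q *ᵥ w i)
    rw [← e2] at e1
    set b := nr (w i - Q *ᵥ w i)
    have h1 := hT i hi
    have hb2 : b ≤ 1 / 2 := by
      by_contra hc
      push Not at hc
      nlinarith [mul_pos hB (lt_trans (by norm_num) hc), mul_nonneg (sub_nonneg.2 h1) (sq_nonneg b)]
    nlinarith
  have h2 := Finset.card_nsmul_le_sum T _ _ h1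
  have h3 : ∑ i ∈ T, w i ⬝ᵥ (Q *ᵥ w i) ≤ k := by
    rw [← h.tr, trace_onb hw]
    refine Finset.sum_le_sum_of_subset_of_nonneg (Finset.subset_univ T) fun i _ _ => ?_
    rw [← h.qq_dot]; exact dot_self_nonneg _
  rw [nsmul_eq_mul] at h2
  linarith

/-- Lower bound on the top eigenvalues. -/
lemma MeanData.top (h : MeanData G Q k L s) {E : Matrix (Fin n) (Fin n) ℝ} (hEs : E.IsSymm) {B : ℝ}
    (hB : 0 ≤ B) (hE : OpBd E B) {lam : Fin n → ℝ} (hlam : Antitone lam)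
    {v : Fin n → Fin n → ℝ} (hv : ONB v)
    (he : ∀ i, (G + E) *ᵥ v i = lam i • v i) (i : Fin n) (hi : (i : ℕ) < k) : L - B ≤ lam i := by
  obtain ⟨x, hx0, hQx, hx⟩ := h.dim i hi (fun j => v ⟨j, j.2.trans i.2⟩)
  have hxx : 0 < x ⬝ᵥ x := by
    refine lt_of_le_of_ne (dot_self_nonneg x) fun hc => hx0 ?_
    exact dotProduct_self_eq_zero.1 hc.symm
  have hs : (G + E).IsSymm := by rw [Matrix.IsSymm, Matrix.transpose_add, h.gs.eq, hEs.eq]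
  have h1 : x ⬝ᵥ ((G + E) *ᵥ x) ≤ lam i * (x ⬝ᵥ x) := by
    rw [quad_eig hs hv he, ← parseval hv x x, Finset.mul_sum]
    refine Finset.sum_le_sum fun j _ => ?_
    by_cases hj : j < i
    · have : v j ⬝ᵥ x = 0 := hx ⟨j, hj⟩
      rw [this]; simp
    · rw [← sq]
      exact mul_le_mul_of_nonneg_right (hlam (not_lt.1 hj)) (sq_nonneg _)
  have h2 := h.quad x
  rw [hQx] at h2
  rw [Matrix.add_mulVec, dotProduct_add] at h1
  have h3 := (abs_le.1 (cs x (E *ᵥ x))).1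
  have h4 : nr x * nr (E *ᵥ x) ≤ B * (x ⬝ᵥ x) := by
    calc nr x * nr (E *ᵥ x) ≤ nr x * (B * nr x) :=
          mul_le_mul_of_nonneg_left (hE.nr_le hB x) (nr_nonneg x)
      _ = B * (x ⬝ᵥ x) := by rw [← nr_sq]; ring
  by_contra hc
  push Not at hc
  nlinarith

/-- Standard basis vector. -/
noncomputable def bs (u : Fin n) : Fin n → ℝ := Pi.single u 1

lemma dot_bs (x : Fin n → ℝ) (u : Fin n) : x ⬝ᵥ bs u = x u := by simp [bs]

lemma bs_dot_self (u : Fin n) : bs u ⬝ᵥ bs u = 1 := by simp [bs]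

lemma MeanData.nr_Q (h : MeanData G Q k L s) (hs : 0 ≤ s) (u : Fin n) : nr (Q *ᵥ bs u) ≤ s := by
  apply Real.sqrt_le_iff.2 ⟨hs, ?_⟩
  rw [h.qq_dot, dotProduct_comm, dot_bs]
  simpa [bs] using h.dg u

lemma MeanData.nr_compl (h : MeanData G Q k L s) (u : Fin n) : nr (bs u - Q *ᵥ bs u) ≤ 1 := by
  apply Real.sqrt_le_iff.2 ⟨by norm_num, ?_⟩
  rw [sub_dotProduct, dotProduct_sub, dotProduct_sub, bs_dot_self, h.qq_dot, ← h.qq_dot,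
    dotProduct_comm _ (bs u), ← h.qq_dot]
  linarith [dot_self_nonneg (Q *ᵥ bs u)]

/-- Incoherence. -/
lemma MeanData.row (h : MeanData G Q k L s) (hs : 0 ≤ s) (hL : 0 < L)
    {E : Matrix (Fin n) (Fin n) ℝ} (hEs : E.IsSymm) {lam : Fin n → ℝ}
    {v : Fin n → Fin n → ℝ} (hv : ONB v) (he : ∀ i, (G + E) *ᵥ v i = lam i • v i)
    {T : Finset (Fin n)} (hT : ∀ i ∈ T, L / 2 ≤ lam i) (u : Fin n) :
    pn T v (bs u) ≤ s + 2 / L * pn T v (E *ᵥ (bs u - Q *ᵥ bs u)) := by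
  have hsy : (G + E).IsSymm := by rw [Matrix.IsSymm, Matrix.transpose_add, h.gs.eq, hEs.eq]
  have h1 := pn_eig hsy he (by positivity) hT (bs u - Q *ᵥ bs u)
  rw [Matrix.add_mulVec, h.G_compl, zero_add] at h1
  have h2 : pn T v (bs u) ≤ pn T v (Q *ᵥ bs u) + pn T v (bs u - Q *ᵥ bs u) := by
    refine le_trans (le_of_eq ?_) (pn_add_le T _ _)
    congr 1; abel
  have h3 := (pn_le_nr hv T (Q *ᵥ bs u)).trans (h.nr_Q hs u)
  have h4 : pn T v (bs u - Q *ᵥ bs u) ≤ 2 / L * pn T v (E *ᵥ (bs u - Q *ᵥ bs u)) := by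
    calc _ = 2 / L * (L / 2 * pn T v (bs u - Q *ᵥ bs u)) := by field_simp
      _ ≤ _ := by gcongr
  linarith

lemma MeanData.row' (h : MeanData G Q k L s) (hs : 0 ≤ s) (hL : 0 < L)
    {E : Matrix (Fin n) (Fin n) ℝ} (hEs : E.IsSymm) {B : ℝ} (hB : 0 ≤ B) (hE : OpBd E B)
    {lam : Fin n → ℝ}
    {v : Fin n → Fin n → ℝ} (hv : ONB v) (he : ∀ i, (G + E) *ᵥ v i = lam i • v i)
    {T : Finset (Fin n)} (hT : ∀ i ∈ T, L / 2 ≤ lam i) (u : Fin n) :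
    pn T v (bs u) ≤ s + 2 * (B / L) := by
  refine (h.row hs hL hEs hv he hT u).trans ?_
  have h1 : pn T v (E *ᵥ (bs u - Q *ᵥ bs u)) ≤ B := by
    refine (pn_le_nr hv T _).trans ((hE.nr_le hB _).trans ?_)
    exact mul_le_of_le_one_right hB (h.nr_compl u)
  calc _ ≤ s + 2 / L * B := by gcongr
    _ = _ := by ring

end

/-- Zero out the row and column of `u`. -/
def zrow (u : Fin n) (E : Matrix (Fin n) (Fin n) ℝ) : Matrix (Fin n) (Fin n) ℝ :=
  Matrix.of fun a b => if a = u ∨ b = u then 0 else E a b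

lemma zrow_symm (u : Fin n) {E : Matrix (Fin n) (Fin n) ℝ} (hE : E.IsSymm) :
    (zrow u E).IsSymm := by
  ext a b
  simp only [zrow, Matrix.transpose_apply, Matrix.of_apply, or_comm (a := b = u), hE.apply]

lemma zrow_opbd (u : Fin n) {E : Matrix (Fin n) (Fin n) ℝ} {B : ℝ} (hE : OpBd E B) :
    OpBd (zrow u E) B := by
  intro z
  set z' : Fin n → ℝ := fun b => if b = u then 0 else z b with hz'
  have h1 := hE z'
  have h2 : z' ⬝ᵥ z' ≤ z ⬝ᵥ z := by
    refine Finset.sum_le_sum fun b _ => ?_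
    simp only [hz']
    split_ifs
    · simpa using mul_self_nonneg (z b)
    · exact le_rfl
  have h3 : (zrow u E *ᵥ z) ⬝ᵥ (zrow u E *ᵥ z) ≤ (E *ᵥ z') ⬝ᵥ (E *ᵥ z') := by
    refine Finset.sum_le_sum fun a _ => ?_
    by_cases ha : a = u
    · have : (zrow u E *ᵥ z) a = 0 := by simp [Matrix.mulVec, dotProduct, zrow, ha]
      rw [this, zero_mul]; exact mul_self_nonneg _
    · have : (zrow u E *ᵥ z) a = (E *ᵥ z') a := by
        simp only [Matrix.mulVec, dotProduct, zrow, hz', Matrix.of_apply, ha, false_or]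
        refine Finset.sum_congr rfl fun b _ => ?_
        split_ifs <;> simp
      rw [this]
  calc _ ≤ _ := h3
    _ ≤ _ := h1
    _ ≤ _ := by gcongr

lemma zrow_diff (u : Fin n) {E : Matrix (Fin n) (Fin n) ℝ} (hE : E.IsSymm) (x w : Fin n → ℝ) :
    x ⬝ᵥ ((E - zrow u E) *ᵥ w) = (x ⬝ᵥ (E *ᵥ bs u)) * w u
      + x u * ((fun b => if b = u then 0 else E b u) ⬝ᵥ w) := by
  have hent : ∀ a b, (E - zrow u E) a b = (if b = u then E a u else 0)
      + (if a = u then (if b = u then 0 else E b u) else 0) := by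
    intro a b
    simp only [Matrix.sub_apply, zrow, Matrix.of_apply]
    by_cases ha : a = u <;> by_cases hb : b = u <;> simp [ha, hb, hE.apply]
  simp only [dotProduct, Matrix.mulVec, hent, add_mul, Finset.sum_add_distrib, mul_add]
  congr 1
  · simp [bs, Finset.sum_mul, mul_assoc, Pi.single_apply]
  · simp

end
end SBMAux

namespace SBMAux
set_option linter.unusedSectionVars false

section
variable {n : ℕ} {G Q : Matrix (Fin n) (Fin n) ℝ} {k : ℕ} {L s : ℝ}

lemma mulVec_bs (E : Matrix (Fin n) (Fin n) ℝ) (u b : Fin n) : (E *ᵥ bs u) b = E b u := by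
  simp [bs]

/-- Perturbation step: cross terms between the two eigenbases. -/
lemma cross_sum {E : Matrix (Fin n) (Fin n) ℝ} (hEs : E.IsSymm) {B : ℝ} (hE : OpBd E B)
    (hsG : G.IsSymm)
    {lam μ : Fin n → ℝ} {v w : Fin n → Fin n → ℝ} (hw : ONB w)
    (he : ∀ i, (G + E) *ᵥ v i = lam i • v i) (u : Fin n)
    (hew : ∀ i, (G + zrow u E) *ᵥ w i = μ i • w i)
    {T S : Finset (Fin n)} (hL : 0 < L) (hgap : ∀ i ∈ T, ∀ j ∈ S, L / 2 ≤ lam i - μ j) :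
    (L / 2) ^ 2 * ∑ i ∈ T, ∑ j ∈ S, (w j ⬝ᵥ v i) ^ 2 ≤
      2 * (pn T v (E *ᵥ bs u) ^ 2 + pn T v (bs u) ^ 2 * B ^ 2) := by
  set Eu := E *ᵥ bs u with hEu
  set E2 : Fin n → ℝ := fun b => if b = u then 0 else E b u with hE2
  have hEuB : Eu ⬝ᵥ Eu ≤ B ^ 2 := by
    have := hE (bs u); rwa [bs_dot_self, mul_one] at this
  have hE2B : E2 ⬝ᵥ E2 ≤ B ^ 2 := by
    refine le_trans (Finset.sum_le_sum fun b _ => ?_) hEuB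
    rw [hEu, mulVec_bs, hE2]
    dsimp only
    split_ifs
    · simpa using mul_self_nonneg (E b u)
    · exact le_rfl
  have hsy : (G + E).IsSymm := by rw [Matrix.IsSymm, Matrix.transpose_add, hsG.eq, hEs.eq]
  have h1 : ∀ i j, (lam i - μ j) * (w j ⬝ᵥ v i) = v i ⬝ᵥ ((E - zrow u E) *ᵥ w j) := by
    intro i j
    have e1 : E - zrow u E = (G + E) - (G + zrow u E) := by abel
    rw [e1, Matrix.sub_mulVec, dotProduct_sub, dot_symm hsy, he, hew, smul_dotProduct,
      dotProduct_smul, smul_eq_mul, smul_eq_mul, dotProduct_comm (w j)]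
    ring
  have h2 : ∀ i ∈ T, (L / 2) ^ 2 * ∑ j ∈ S, (w j ⬝ᵥ v i) ^ 2 ≤
      2 * ((v i ⬝ᵥ Eu) ^ 2 + (v i ⬝ᵥ bs u) ^ 2 * B ^ 2) := by
    intro i hi
    have h3 : ∀ j ∈ S, (L / 2) ^ 2 * (w j ⬝ᵥ v i) ^ 2 ≤
        2 * ((v i ⬝ᵥ Eu) ^ 2 * (w j ⬝ᵥ bs u) ^ 2 + (v i ⬝ᵥ bs u) ^ 2 * (w j ⬝ᵥ E2) ^ 2) := by
      intro j hj
      have hg := hgap i hi j hj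
      calc (L / 2) ^ 2 * (w j ⬝ᵥ v i) ^ 2 ≤ (lam i - μ j) ^ 2 * (w j ⬝ᵥ v i) ^ 2 := by gcongr
        _ = (v i ⬝ᵥ ((E - zrow u E) *ᵥ w j)) ^ 2 := by rw [← h1]; ring
        _ ≤ _ := by
          rw [zrow_diff u hEs, dot_bs, dot_bs, dotProduct_comm (w j) E2]
          nlinarith [sq_nonneg ((v i ⬝ᵥ Eu) * w j u - v i u * (E2 ⬝ᵥ w j))]
    rw [Finset.mul_sum]
    refine (Finset.sum_le_sum h3).trans ?_
    refine (Finset.sum_le_sum_of_subset_of_nonneg (Finset.subset_univ S)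
      fun _ _ _ => by positivity).trans ?_
    rw [← Finset.mul_sum, Finset.sum_add_distrib, ← Finset.mul_sum, ← Finset.mul_sum]
    have p1 := parseval hw (bs u) (bs u)
    have p2 := parseval hw E2 E2
    simp only [← sq] at p1 p2
    rw [p1, p2, bs_dot_self, mul_one]
    gcongr
  rw [Finset.mul_sum]
  refine (Finset.sum_le_sum h2).trans (le_of_eq ?_)
  rw [pn_sq, pn_sq, ← Finset.mul_sum, Finset.sum_add_distrib, Finset.sum_mul]

/-- Deterministic leave-one-out bound. -/
lemma MeanData.loo (h : MeanData G Q k L s) (hs : 0 ≤ s)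
    {E : Matrix (Fin n) (Fin n) ℝ} (hEs : E.IsSymm) {B : ℝ} (hB : 0 < B) (hE : OpBd E B)
    (hBL : 100 * B ≤ L)
    {lam μ : Fin n → ℝ} {v w : Fin n → Fin n → ℝ} (hv : ONB v) (hw : ONB w)
    (he : ∀ i, (G + E) *ᵥ v i = lam i • v i) (u : Fin n)
    (hew : ∀ i, (G + zrow u E) *ᵥ w i = μ i • w i)
    {T T' : Finset (Fin n)} (hT : ∀ i ∈ T, L - B ≤ lam i)
    (hT' : ∀ j, L / 2 ≤ μ j → j ∈ T') :
    pn T v (E *ᵥ bs u) ≤ 2 * pn T' w (E *ᵥ bs u) + 4 * (B / L) * B * s := by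
  have hL : 0 < L := by linarith
  have hcr := cross_sum (S := univ \ T') (T := T) hEs hE h.gs hw he u hew hL (by
    intro i hi j hj
    have h1 := hT i hi
    have hwj : w j ⬝ᵥ w j = 1 := by simpa using hw j j
    have h2 := h.dichotomy hB (zrow_opbd u hE) hwj (hew j)
    have h3 : ¬ (L / 2 ≤ μ j) := fun hc => (Finset.mem_sdiff.1 hj).2 (hT' j hc)
    rcases h2 with h2 | h2
    · linarith
    · exfalso; apply h3; linarith)
  set Eu := E *ᵥ bs u with hEu
  have hEuB : Eu ⬝ᵥ Eu ≤ B ^ 2 := by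
    have := hE (bs u); rwa [bs_dot_self, mul_one] at this
  have hrow := h.row hs hL hEs hv he (T := T) (fun i hi => by have := hT i hi; linarith) u
  have ha := pn_nonneg (v := v) T Eu
  have hb := pn_nonneg (v := v) T (bs u)
  have ht := pn_nonneg (v := w) T' Eu
  have hEQ : pn T v (E *ᵥ (bs u - Q *ᵥ bs u)) ≤ pn T v Eu + B * s := by
    have e1 : E *ᵥ (bs u - Q *ᵥ bs u) = Eu + E *ᵥ (-(Q *ᵥ bs u)) := by
      rw [hEu, ← Matrix.mulVec_add, sub_eq_add_neg]
    rw [e1]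
    refine (pn_add_le T _ _).trans (add_le_add_right ?_ _)
    refine (pn_le_nr hv T _).trans ((hE.nr_le hB.le _).trans ?_)
    refine mul_le_mul_of_nonneg_left ?_ hB.le
    have : nr (-(Q *ᵥ bs u)) = nr (Q *ᵥ bs u) := by simp [nr]
    rw [this]; exact h.nr_Q hs u
  set z : Fin n → ℝ := ∑ j ∈ T', (w j ⬝ᵥ Eu) • w j with hz
  have hwz : ∀ j, w j ⬝ᵥ z = if j ∈ T' then w j ⬝ᵥ Eu else 0 := by
    intro j
    rw [hz, dotProduct_sum]
    simp only [dotProduct_smul, hw j, smul_eq_mul, mul_ite, mul_one, mul_zero]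
    simp
  have hzt : nr z = pn T' w Eu := by
    rw [nr, pn, ← parseval hw z z]
    congr 1
    simp only [hwz, ← sq, ite_pow]
    simp [Finset.sum_ite_mem]
  have hz' : pn T v (Eu - z) ≤ 3 * (B / L) * (pn T v Eu + pn T v (bs u) * B) := by
    have h1 : ∀ i ∈ T, (v i ⬝ᵥ (Eu - z)) ^ 2 ≤ (∑ j ∈ univ \ T', (w j ⬝ᵥ v i) ^ 2) * B ^ 2 := by
      intro i _
      have e1 : v i ⬝ᵥ (Eu - z) = ∑ j ∈ univ \ T', (w j ⬝ᵥ v i) * (w j ⬝ᵥ Eu) := by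
        rw [← parseval hw, ← Finset.sum_sdiff (Finset.subset_univ T')]
        rw [Finset.sum_eq_zero (s := T'), add_zero]
        · refine Finset.sum_congr rfl fun j hj => ?_
          rw [dotProduct_sub, hwz, if_neg (Finset.mem_sdiff.1 hj).2, sub_zero]
        · intro j hj
          rw [dotProduct_sub, hwz, if_pos hj, sub_self, mul_zero]
      rw [e1]
      refine (Finset.sum_mul_sq_le_sq_mul_sq _ _ _).trans ?_
      refine mul_le_mul_of_nonneg_left ?_ (Finset.sum_nonneg fun _ _ => sq_nonneg _)
      refine le_trans ?_ hEuB
      rw [← parseval hw Eu Eu]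
      simp only [← sq]
      exact Finset.sum_le_sum_of_subset_of_nonneg (Finset.subset_univ _) fun _ _ _ => sq_nonneg _
    apply Real.sqrt_le_iff.2 ⟨by positivity, ?_⟩
    refine (Finset.sum_le_sum h1).trans ?_
    rw [← Finset.sum_mul]
    set X := ∑ i ∈ T, ∑ j ∈ univ \ T', (w j ⬝ᵥ v i) ^ 2
    have hX : X ≤ 8 / L ^ 2 * (pn T v Eu ^ 2 + pn T v (bs u) ^ 2 * B ^ 2) := by
      have : X = 4 / L ^ 2 * ((L / 2) ^ 2 * X) := by field_simp; ring
      rw [this]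
      calc _ ≤ 4 / L ^ 2 * (2 * (pn T v Eu ^ 2 + pn T v (bs u) ^ 2 * B ^ 2)) := by gcongr
        _ = _ := by ring
    calc X * B ^ 2 ≤ 8 / L ^ 2 * (pn T v Eu ^ 2 + pn T v (bs u) ^ 2 * B ^ 2) * B ^ 2 := by gcongr
      _ = 8 * (B / L) ^ 2 * (pn T v Eu ^ 2 + pn T v (bs u) ^ 2 * B ^ 2) := by ring
      _ ≤ 9 * (B / L) ^ 2 * (pn T v Eu + pn T v (bs u) * B) ^ 2 := by
        gcongr
        · norm_num
        · nlinarith [mul_nonneg ha (mul_nonneg hb hB.le)]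
      _ = _ := by ring
  have hmain : pn T v Eu ≤ pn T' w Eu + pn T v (Eu - z) := by
    have e1 : Eu = z + (Eu - z) := by abel
    calc pn T v Eu = pn T v (z + (Eu - z)) := by rw [← e1]
      _ ≤ pn T v z + pn T v (Eu - z) := pn_add_le T _ _
      _ ≤ _ := by rw [← hzt]; exact add_le_add_left (pn_le_nr hv T z) _
  set a := pn T v Eu
  set b := pn T v (bs u)
  set t := pn T' w Eu
  set ε := B / L with hε
  have hε0 : 0 ≤ ε := by positivity
  have hε1 : ε ≤ 1 / 100 := by rw [hε, div_le_iff₀ hL]; linarith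
  have hbB : b * B ≤ s * B + 2 * ε * (a + B * s) := by
    have : b ≤ s + 2 / L * (a + B * s) := hrow.trans (by gcongr)
    calc b * B ≤ (s + 2 / L * (a + B * s)) * B := by gcongr
      _ = _ := by rw [hε]; ring
  have hBs : 0 ≤ B * s := by positivity
  have h5 : a ≤ t + 3 * ε * (a + (s * B + 2 * ε * (a + B * s))) :=
    hmain.trans (by gcongr; exact hz'.trans (by gcongr))
  have h6 : ε * a ≤ 1 / 100 * a := by gcongr
  have h7 : ε * (ε * a) ≤ 1 / 100 * (1 / 100 * a) := by gcongr
  have h8 : ε * (ε * (B * s)) ≤ 1 / 100 * (ε * (B * s)) := by gcongr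
  have h9 : 0 ≤ ε * (B * s) := by positivity
  nlinarith

end
end SBMAux

namespace SBMAux
set_option linter.unusedSectionVars false

section
variable {n : ℕ} {G Q : Matrix (Fin n) (Fin n) ℝ} {k : ℕ} {L s : ℝ}

open Classical in
/-- A choice of eigenvalues. -/
noncomputable def evs (A : Matrix (Fin n) (Fin n) ℝ) : Fin n → ℝ :=
  if h : A.IsSymm then (exists_eig h).choose else 0

open Classical in
/-- A choice of eigenvectors. -/
noncomputable def evc (A : Matrix (Fin n) (Fin n) ℝ) : Fin n → Fin n → ℝ :=
  if h : A.IsSymm then (exists_eig h).choose_spec.choose else 0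

lemma evc_spec {A : Matrix (Fin n) (Fin n) ℝ} (h : A.IsSymm) :
    ONB (evc A) ∧ ∀ i, A *ᵥ evc A i = evs A i • evc A i := by
  unfold evc evs
  rw [dif_pos h, dif_pos h]
  exact (exists_eig h).choose_spec.choose_spec

/-- Indices of large eigenvalues. -/
noncomputable def tset (A : Matrix (Fin n) (Fin n) ℝ) (t : ℝ) : Finset (Fin n) :=
  univ.filter fun j => t ≤ evs A j

lemma zrow_EM_update (g : Edge n → ℝ) (u : Fin n) (x : Edge n → Bool) (v : Fin n) (b : Bool) :
    zrow u (EM g (Function.update x (eg u v) b)) = zrow u (EM g x) := by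
  ext i j
  simp only [zrow, Matrix.of_apply, EM]
  by_cases h : i = u ∨ j = u
  · simp [h]
  · rw [if_neg h, if_neg h]
    push Not at h
    have : eg i j ≠ eg u v := by
      intro hc
      rcases (eg_eq_iff _ _ _ _).1 hc with hc | hc
      · exact h.1 hc.1
      · exact h.2 hc.2
    rw [Function.update_of_ne this]

open Classical in
/-- Rows of the truncated eigenvector matrix of the leave-one-out matrix. -/
noncomputable def yrow (A E' : Matrix (Fin n) (Fin n) ℝ) (B t : ℝ) (a : Fin n) :
    EuclideanSpace ℝ (Fin n) :=
  if OpBd E' B then WithLp.toLp 2 (fun j => if j ∈ tset A t then evc A j a else 0) else 0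

lemma yrow_norm {A E' : Matrix (Fin n) (Fin n) ℝ} {B t : ℝ} (h : OpBd E' B) (a : Fin n) :
    ‖yrow A E' B t a‖ = pn (tset A t) (evc A) (bs a) := by
  rw [yrow, if_pos h, EuclideanSpace.norm_eq, pn]
  congr 1
  simp only [dot_bs, Real.norm_eq_abs, sq_abs, ite_pow]
  simp [Finset.sum_ite_mem]

lemma yrow_sum {A E' : Matrix (Fin n) (Fin n) ℝ} {B t : ℝ} (h : OpBd E' B) (c : Fin n → ℝ) :
    ‖∑ a, c a • yrow A E' B t a‖ = pn (tset A t) (evc A) c := by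
  have e : ∑ a, c a • yrow A E' B t a =
      WithLp.toLp 2 (fun j => if j ∈ tset A t then evc A j ⬝ᵥ c else 0) := by
    ext j
    simp only [yrow, if_pos h, WithLp.ofLp_sum, WithLp.ofLp_smul, Finset.sum_apply, Pi.smul_apply,
      smul_eq_mul, mul_ite, mul_zero]
    split_ifs with hj
    · simp only [dotProduct, mul_comm]
    · simp
  rw [e, EuclideanSpace.norm_eq, pn]
  congr 1
  simp only [Real.norm_eq_abs, sq_abs, ite_pow]
  simp [Finset.sum_ite_mem]

open Classical in
/-- Leave-one-out concentration for a single vertex. -/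
lemma MeanData.loo_prob (h : MeanData G Q k L s) (hs : 0 ≤ s) {g : Edge n → ℝ}
    (hg : ∀ i, 0 ≤ g i ∧ g i ≤ 1) {p : ℝ} (hp0 : 0 ≤ p) (hp : ∀ i, g i ≤ p)
    {B : ℝ} (hB : 0 < B) (hBL : 100 * B ≤ L) {l r : ℝ} (hl : 0 < l)
    (hd : l * (s + 2 * (B / L)) ≤ 1 / 2) (u : Fin n) :
    ex g (fun x => if OpBd (EM g x) B ∧
      r < pn (tset (G + zrow u (EM g x)) (L / 2)) (evc (G + zrow u (EM g x))) (EM g x *ᵥ bs u)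
      then 1 else 0) ≤ Real.exp (1 + 6 * l ^ 2 * p * k) / Real.exp (l * r) := by
  have hL : 0 < L := by linarith
  have hsy : ∀ x, (G + zrow u (EM g x)).IsSymm := by
    intro x
    rw [Matrix.IsSymm, Matrix.transpose_add, h.gs.eq, (zrow_symm u (EM_symm x)).eq]
  set y : (Edge n → Bool) → Fin n → EuclideanSpace ℝ (Fin n) := fun x =>
    yrow (G + zrow u (EM g x)) (zrow u (EM g x)) B (L / 2) with hy
  have hmem : ∀ x, ∀ j ∈ tset (G + zrow u (EM g x)) (L / 2),
      L / 2 ≤ evs (G + zrow u (EM g x)) j := fun x j hj => (Finset.mem_filter.1 hj).2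
  have hmgf := vec_mgf (H := EuclideanSpace ℝ (Fin n)) hg (eg u) (eg_inj u) y
    (by intro x v b; simp only [hy, zrow_EM_update]) (p := p) (l := l) (d := s + 2 * (B / L))
    (K := 2 * k) (fun v => hp _) hl hd
    (by
      intro x a
      by_cases ho : OpBd (zrow u (EM g x)) B
      · rw [hy]
        dsimp only
        rw [yrow_norm ho]
        exact h.row' hs hL (zrow_symm u (EM_symm x)) hB.le ho (evc_spec (hsy x)).1
          (evc_spec (hsy x)).2 (hmem x) a
      · simp only [hy, yrow, if_neg ho, norm_zero]; positivity)
    (by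
      intro x
      by_cases ho : OpBd (zrow u (EM g x)) B
      · simp only [hy, yrow_norm ho, pn_sq]
        rw [Finset.sum_comm]
        have hc := h.card_le hB ho (evc_spec (hsy x)).1 (evc_spec (hsy x)).2
          (T := tset (G + zrow u (EM g x)) (L / 2))
          (fun i hi => by have := hmem x i hi; linarith)
        refine le_trans (le_of_eq ?_) hc
        rw [Finset.card_eq_sum_ones, Nat.cast_sum]
        refine Finset.sum_congr rfl fun j _ => ?_
        have := (evc_spec (hsy x)).1 j j
        simp only [if_true, dotProduct] at this
        simp only [dot_bs, sq, this, Nat.cast_one]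
      · simp only [hy, yrow, if_neg ho, norm_zero]
        simp) hp0
  have hmk := ex_markov hg
    (fun x => Real.exp (l * ‖∑ v, (bv (x (eg u v)) - g (eg u v)) • y x v‖))
    (fun x => (Real.exp_pos _).le)
    (fun x => OpBd (EM g x) B ∧
      r < pn (tset (G + zrow u (EM g x)) (L / 2)) (evc (G + zrow u (EM g x))) (EM g x *ᵥ bs u))
    (Real.exp_pos (l * r)) (by
      rintro x ⟨ho, hr⟩
      apply Real.exp_le_exp.2
      refine mul_le_mul_of_nonneg_left ?_ hl.le
      have e1 := yrow_sum (A := G + zrow u (EM g x)) (t := L / 2) (zrow_opbd u ho)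
        (fun a => bv (x (eg u a)) - g (eg u a))
      simp only [hy]
      rw [e1]
      refine hr.le.trans (le_of_eq ?_)
      congr 1
      funext b
      rw [mulVec_bs, EM, Matrix.of_apply, eg_comm])
  refine hmk.trans ?_
  refine div_le_div_of_nonneg_right (hmgf.trans (le_of_eq ?_)) (Real.exp_pos _).le
  congr 1; ring

/-- The good event. -/
def Good (G : Matrix (Fin n) (Fin n) ℝ) (k : ℕ) (R : ℝ) (E : Matrix (Fin n) (Fin n) ℝ) : Prop :=
  ∀ (lam : Fin n → ℝ) (v : Fin n → Fin n → ℝ), Antitone lam → ONB v →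
    (∀ i, (G + E) *ᵥ v i = lam i • v i) →
    ∀ u, pn (univ.filter fun i : Fin n => (i : ℕ) < k) v (E *ᵥ bs u) ≤ R

open Classical in
lemma MeanData.fail_prob (h : MeanData G Q k L s) (hs : 0 ≤ s) {g : Edge n → ℝ} (hn : 0 < n)
    (hg : ∀ i, 0 ≤ g i ∧ g i ≤ 1) {p : ℝ} (hp0 : 0 ≤ p) (hp : ∀ i, g i ≤ p)
    (hnp : 1 ≤ n * p) (hl1 : 1 ≤ Real.log n) (hbig : 1 + 7 * Real.log n ^ 2 ≤ n * p)
    {B : ℝ} (hB : 0 < B) (hB2 : B ^ 2 = 500 * (n * p) * Real.log n)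
    (hBL : 100 * B ≤ L) {l r : ℝ} (hl : 0 < l)
    (hd : l * (s + 2 * (B / L)) ≤ 1 / 2) :
    ex g (fun x => if Good G k (2 * r + 4 * (B / L) * B * s) (EM g x) then 0 else 1)
      ≤ 1 / (n : ℝ) ^ 2 + n * (Real.exp (1 + 6 * l ^ 2 * p * k) / Real.exp (l * r)) := by
  have hop := opnorm_prob hn hg hp hnp hl1 hbig hB2
  have hlo := fun u => h.loo_prob hs hg hp0 hp hB hBL (r := r) hl hd u
  have hsum : ∑ u : Fin n, ex g (fun x => if OpBd (EM g x) B ∧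
      r < pn (tset (G + zrow u (EM g x)) (L / 2)) (evc (G + zrow u (EM g x))) (EM g x *ᵥ bs u)
      then 1 else 0) ≤ n * (Real.exp (1 + 6 * l ^ 2 * p * k) / Real.exp (l * r)) := by
    refine (Finset.sum_le_sum fun u _ => hlo u).trans ?_
    simp
  refine le_trans ?_ (add_le_add hop hsum)
  rw [← ex_sum, ← ex_add]
  refine ex_mono hg fun x => ?_
  have hpos : ∀ u, (0 : ℝ) ≤ (if OpBd (EM g x) B ∧
      r < pn (tset (G + zrow u (EM g x)) (L / 2)) (evc (G + zrow u (EM g x))) (EM g x *ᵥ bs u)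
      then 1 else 0) := by intro u; split_ifs <;> norm_num
  by_cases ho : OpBd (EM g x) B
  · by_cases hu : ∃ u, r < pn (tset (G + zrow u (EM g x)) (L / 2)) (evc (G + zrow u (EM g x)))
        (EM g x *ᵥ bs u)
    · obtain ⟨u, hu⟩ := hu
      have h1 := Finset.single_le_sum (fun u _ => hpos u) (Finset.mem_univ u)
      rw [if_pos ⟨ho, hu⟩] at h1
      have h2 : (if Good G k (2 * r + 4 * (B / L) * B * s) (EM g x) then (0 : ℝ) else 1) ≤ 1 := by
        split_ifs <;> norm_num
      have h3 : (0 : ℝ) ≤ (if ∃ z, B ^ 2 * (z ⬝ᵥ z) < (EM g x *ᵥ z) ⬝ᵥ (EM g x *ᵥ z)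
          then 1 else 0) := by split_ifs <;> norm_num
      linarith
    · push Not at hu
      have hgood : Good G k (2 * r + 4 * (B / L) * B * s) (EM g x) := by
        intro lam v hlam hv he u
        have hsy : (G + zrow u (EM g x)).IsSymm := by
          rw [Matrix.IsSymm, Matrix.transpose_add, h.gs.eq, (zrow_symm u (EM_symm x)).eq]
        have := h.loo hs (EM_symm x) hB ho hBL hv (evc_spec hsy).1 he u (evc_spec hsy).2
          (T := univ.filter fun i : Fin n => (i : ℕ) < k)
          (T' := tset (G + zrow u (EM g x)) (L / 2))
          (fun i hi => h.top (EM_symm x) hB.le ho hlam hv he i (Finset.mem_filter.1 hi).2)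
          (fun j hj => Finset.mem_filter.2 ⟨Finset.mem_univ _, hj⟩)
        linarith [hu u]
      rw [if_pos hgood]
      refine add_nonneg ?_ (Finset.sum_nonneg fun u _ => hpos u)
      split_ifs <;> norm_num
  · have h1 : ∃ z, B ^ 2 * (z ⬝ᵥ z) < (EM g x *ᵥ z) ⬝ᵥ (EM g x *ᵥ z) := by
      unfold OpBd at ho; push Not at ho; exact ho
    rw [if_pos h1]
    have h2 : (if Good G k (2 * r + 4 * (B / L) * B * s) (EM g x) then (0 : ℝ) else 1) ≤ 1 := by
      split_ifs <;> norm_num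
    have h3 := Finset.sum_nonneg fun u (_ : u ∈ Finset.univ) => hpos u
    linarith

end
end SBMAux

namespace SBMAux
set_option linter.unusedSectionVars false

section
variable {n k : ℕ}

/-- Real cluster size. -/
noncomputable def cs' (cl : Fin n → Fin k) (i : Fin k) : ℝ := (SBM.clusterSize cl i : ℝ)

/-- Projection on block-constant vectors. -/
noncomputable def QM (cl : Fin n → Fin k) : Matrix (Fin n) (Fin n) ℝ :=
  Matrix.of fun u v => if cl u = cl v then (cs' cl (cl u))⁻¹ else 0

lemma sum_cl (cl : Fin n → Fin k) (i : Fin k) (c : ℝ) :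
    ∑ v, (if i = cl v then c else 0) = cs' cl i * c := by
  rw [← Finset.sum_filter, Finset.sum_const, nsmul_eq_mul, cs', SBM.clusterSize]
  simp only [eq_comm]

lemma sum_fib (cl : Fin n → Fin k) (f : Fin n → ℝ) :
    ∑ v, f v = ∑ i, ∑ v, if i = cl v then f v else 0 := by
  rw [Finset.sum_comm]
  refine Finset.sum_congr rfl fun v _ => ?_
  simp

lemma meanData (cl : Fin n → Fin k) {p q m s : ℝ} (hq : 0 ≤ q) (hpq : q < p)
    (hm : 0 < m) (hS : ∀ i, m ≤ cs' cl i) (hs : m⁻¹ ≤ s ^ 2) :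
    MeanData (SBM.meanMatrix n k p q cl) (QM cl) k ((p - q) * m) s := by
  have hS0 : ∀ i, 0 < cs' cl i := fun i => hm.trans_le (hS i)
  have hQs : (QM cl).IsSymm := by
    ext u v
    simp only [QM, Matrix.transpose_apply, Matrix.of_apply]
    by_cases h : cl u = cl v
    · simp [h]
    · simp [h, Ne.symm h]
  have hQQ : QM cl * QM cl = QM cl := by
    ext u v
    rw [Matrix.mul_apply]
    have : ∀ w, QM cl u w * QM cl w v =
        if cl u = cl w then (if cl u = cl v then (cs' cl (cl u))⁻¹ * (cs' cl (cl u))⁻¹ else 0)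
          else 0 := by
      intro w
      simp only [QM, Matrix.of_apply]
      by_cases h : cl u = cl w
      · rw [← h]; simp
      · simp [h]
    simp only [this, sum_cl]
    simp only [QM, Matrix.of_apply]
    have := (hS0 (cl u)).ne'
    split_ifs
    · field_simp
    · simp
  have hdot : ∀ x, (QM cl *ᵥ x) ⬝ᵥ (QM cl *ᵥ x) = x ⬝ᵥ (QM cl *ᵥ x) := by
    intro x
    rw [← dot_symm hQs, Matrix.mulVec_mulVec, hQQ]
  refine ⟨?_, hQs, hQQ, ?_, ?_, ?_, ?_, ?_⟩
  · ext u v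
    simp only [SBM.meanMatrix, Matrix.transpose_apply, Matrix.of_apply, eq_comm]
  · ext u v
    rw [Matrix.mul_apply]
    have : ∀ w, SBM.meanMatrix n k p q cl u w * QM cl w v =
        if cl v = cl w then (SBM.meanMatrix n k p q cl u v * (cs' cl (cl v))⁻¹) else 0 := by
      intro w
      simp only [SBM.meanMatrix, QM, Matrix.of_apply]
      by_cases h : cl v = cl w
      · rw [← h]; simp
      · simp [h, Ne.symm h]
    simp only [this, sum_cl]
    have := (hS0 (cl v)).ne'
    field_simp
  · intro x
    rw [hdot]
    set X : Fin k → ℝ := fun i => ∑ v, if i = cl v then x v else 0 with hX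
    have e1 : x ⬝ᵥ (QM cl *ᵥ x) = ∑ i, (cs' cl i)⁻¹ * X i ^ 2 := by
      have hu : ∀ u, (QM cl *ᵥ x) u = (cs' cl (cl u))⁻¹ * X (cl u) := by
        intro u
        simp only [Matrix.mulVec, dotProduct, QM, Matrix.of_apply, hX, Finset.mul_sum, ite_mul,
          zero_mul, mul_ite, mul_zero]
      simp only [dotProduct, hu]
      rw [sum_fib cl]
      refine Finset.sum_congr rfl fun i _ => ?_
      rw [sq, ← mul_assoc]
      nth_rewrite 2 [hX]
      dsimp only
      rw [Finset.mul_sum]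
      refine Finset.sum_congr rfl fun v _ => ?_
      split_ifs with h
      · rw [h]; ring
      · ring
    have e2 : x ⬝ᵥ (SBM.meanMatrix n k p q cl *ᵥ x) =
        q * (∑ v, x v) ^ 2 + (p - q) * ∑ i, X i ^ 2 := by
      have hu : ∀ u, (SBM.meanMatrix n k p q cl *ᵥ x) u = q * (∑ v, x v) + (p - q) * X (cl u) := by
        intro u
        simp only [Matrix.mulVec, dotProduct, SBM.meanMatrix, Matrix.of_apply, hX, Finset.mul_sum]
        rw [← Finset.sum_add_distrib]
        refine Finset.sum_congr rfl fun v _ => ?_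
        split_ifs <;> ring
      simp only [dotProduct, hu, mul_add, Finset.sum_add_distrib]
      congr 1
      · rw [← Finset.sum_mul]; ring
      · rw [sum_fib cl, Finset.mul_sum]
        refine Finset.sum_congr rfl fun i _ => ?_
        rw [sq, ← mul_assoc]
        nth_rewrite 3 [hX]
        dsimp only
        rw [Finset.mul_sum]
        refine Finset.sum_congr rfl fun v _ => ?_
        split_ifs with h
        · rw [h]; ring
        · ring
    rw [e1, e2]
    have h1 : (p - q) * m * ∑ i, (cs' cl i)⁻¹ * X i ^ 2 ≤ (p - q) * ∑ i, X i ^ 2 := by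
      rw [mul_assoc]
      refine mul_le_mul_of_nonneg_left ?_ (by linarith)
      rw [Finset.mul_sum]
      refine Finset.sum_le_sum fun i _ => ?_
      rw [← mul_assoc]
      refine mul_le_of_le_one_left (sq_nonneg _) ?_
      rw [← div_eq_mul_inv, div_le_one (hS0 i)]
      exact hS i
    have h2 : 0 ≤ q * (∑ v, x v) ^ 2 := by positivity
    linarith
  · rw [Matrix.trace]
    simp only [Matrix.diag_apply, QM, Matrix.of_apply, if_true]
    rw [sum_fib cl]
    have : ∀ i, ∑ v, (if i = cl v then (cs' cl (cl v))⁻¹ else 0) = 1 := by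
      intro i
      have h1 : ∀ v, (if i = cl v then (cs' cl (cl v))⁻¹ else 0) =
          if i = cl v then (cs' cl i)⁻¹ else 0 := by
        intro v; split_ifs with h
        · rw [h]
        · rfl
      simp only [h1, sum_cl]
      exact mul_inv_cancel₀ (hS0 i).ne'
    simp [this]
  · intro u
    simp only [QM, Matrix.of_apply, if_true]
    exact (inv_anti₀ hm (hS _)).trans hs
  · intro i hi f
    let φ : (Fin k → ℝ) →ₗ[ℝ] (Fin i → ℝ) :=
      { toFun := fun c j => f j ⬝ᵥ fun v => c (cl v)
        map_add' := by
          intro c d; funext j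
          simp only [dotProduct, Pi.add_apply, mul_add, Finset.sum_add_distrib]
        map_smul' := by
          intro a c; funext j
          simp only [dotProduct, Pi.smul_apply, smul_eq_mul, RingHom.id_apply, Finset.mul_sum]
          refine Finset.sum_congr rfl fun v _ => by ring }
    have hker : LinearMap.ker φ ≠ ⊥ := LinearMap.ker_ne_bot_of_finrank_lt (by simpa using hi)
    obtain ⟨c, hc, hc0⟩ := (Submodule.ne_bot_iff _).1 hker
    refine ⟨fun v => c (cl v), ?_, ?_, ?_⟩
    · intro h0
      apply hc0
      funext j
      have hj := hS0 j
      have : 0 < SBM.clusterSize cl j := by simpa [cs'] using hj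
      obtain ⟨v, hv⟩ := Finset.card_pos.1 this
      have hv' := (Finset.mem_filter.1 hv).2
      have := congrFun h0 v
      simpa [hv'] using this
    · funext u
      have : ∀ v, (if cl u = cl v then (cs' cl (cl u))⁻¹ else 0) * c (cl v) =
          if cl u = cl v then (cs' cl (cl u))⁻¹ * c (cl u) else 0 := by
        intro v; split_ifs with h
        · rw [h]
        · simp
      simp only [Matrix.mulVec, dotProduct, QM, Matrix.of_apply, this, sum_cl]
      have := (hS0 (cl u)).ne'
      field_simp
    · intro j
      exact congrFun (LinearMap.mem_ker.1 hc) j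

end
end SBMAux

namespace SBMAux
set_option linter.unusedSectionVars false

section
variable {n k : ℕ}

lemma vmv (a b y : Fin n → ℝ) : Matrix.vecMulVec a b *ᵥ y = (b ⬝ᵥ y) • a := by
  funext i
  simp only [Matrix.mulVec, dotProduct, Matrix.vecMulVec_apply, Pi.smul_apply, smul_eq_mul,
    Finset.sum_mul]
  refine Finset.sum_congr rfl fun j _ => by ring

lemma enorm_proj {v : Fin n → Fin n → ℝ} (hv : ONB v) (y : Fin n → ℝ) :
    SBM.enorm ((SBM.projTop k v).mulVec y) =
      pn (univ.filter fun i : Fin n => (i : ℕ) < k) v y := by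
  set T := univ.filter fun i : Fin n => (i : ℕ) < k
  have h1 : (SBM.projTop k v).mulVec y = ∑ i ∈ T, (v i ⬝ᵥ y) • v i := by
    rw [SBM.projTop, Matrix.sum_mulVec]
    exact Finset.sum_congr rfl fun i _ => vmv _ _ _
  rw [h1]
  set z := ∑ i ∈ T, (v i ⬝ᵥ y) • v i with hz
  have hvz : ∀ j, v j ⬝ᵥ z = if j ∈ T then v j ⬝ᵥ y else 0 := by
    intro j
    rw [hz, dotProduct_sum]
    simp only [dotProduct_smul, hv j, smul_eq_mul, mul_ite, mul_one, mul_zero]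
    simp
  have h2 : SBM.enorm z = Real.sqrt (z ⬝ᵥ z) := by
    simp [SBM.enorm, dotProduct, sq]
  rw [h2, ← parseval hv z z, pn]
  congr 1
  simp only [hvz, ← sq, ite_pow]
  simp [Finset.sum_ite_mem]

lemma good_link {G E : Matrix (Fin n) (Fin n) ℝ} {R : ℝ} (h : Good G k R E)
    (lam : Fin n → ℝ) (v : Fin n → Fin n → ℝ) (hd : SBM.IsSpectralDecomp (G + E) lam v)
    (u : Fin n) : SBM.enorm ((SBM.projTop k v).mulVec (SBM.column E u)) ≤ R := by
  obtain ⟨h1, h2, h3⟩ := hd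
  have hv : ONB v := h2
  rw [enorm_proj hv]
  have hc : SBM.column E u = E *ᵥ bs u := by
    funext b; rw [mulVec_bs]; rfl
  rw [hc]
  refine h lam v h1 hv (fun i => ?_) u
  rw [h3, Matrix.sum_mulVec]
  simp only [Matrix.smul_mulVec, vmv, hv _ i]
  simp

/-- Edge parameters. -/
noncomputable def gp (n k : ℕ) (p q : ℝ) (cl : Fin n → Fin k) (e : Edge n) : ℝ :=
  SBM.meanMatrix n k p q cl e.1.1 e.1.2

lemma gp_bds {p q : ℝ} (hq : 0 ≤ q) (hpq : q < p) (cl : Fin n → Fin k) (e : Edge n) :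
    0 ≤ gp n k p q cl e ∧ gp n k p q cl e ≤ p := by
  simp only [gp, SBM.meanMatrix, Matrix.of_apply]
  split_ifs <;> constructor <;> linarith

open Classical in
lemma transfer {Ω : Type} [MeasureSpace Ω] [IsProbabilityMeasure (ℙ : Measure Ω)] {p q : ℝ}
    (hq : 0 ≤ q) (hpq : q < p) (hp : p ≤ 1) (cl : Fin n → Fin k)
    (E : Ω → Matrix (Fin n) (Fin n) ℝ) (hE : SBM.NoiseModel p q cl E)
    (P : Matrix (Fin n) (Fin n) ℝ → Prop) :
    ENNReal.ofReal (1 - ex (gp n k p q cl) (fun x => if P (EM (gp n k p q cl) x) then 0 else 1))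
      ≤ ℙ {ω : Ω | P (E ω)} := by
  obtain ⟨hsym, hmeas, hind, hlaw⟩ := hE
  set g := gp n k p q cl with hg
  have hgb : ∀ e, 0 ≤ g e ∧ g e ≤ 1 := fun e =>
    ⟨(gp_bds hq hpq cl e).1, (gp_bds hq hpq cl e).2.trans hp⟩
  set A : (Edge n → Bool) → Set Ω := fun x =>
    ⋂ e ∈ (Finset.univ : Finset (Edge n)), (fun ω => E ω e.1.1 e.1.2) ⁻¹' {bv (x e) - g e} with hA
  have hAm : ∀ x, MeasurableSet (A x) := by
    intro x
    refine Finset.measurableSet_biInter _ fun e _ => ?_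
    exact hmeas _ _ (measurableSet_singleton _)
  have hAP : ∀ x, ℙ (A x) = ENNReal.ofReal (pw g x) := by
    intro x
    have h1 := hind.measure_inter_preimage_eq_mul (Finset.univ : Finset (Edge n))
      (sets := fun e => {bv (x e) - g e}) (fun e _ => measurableSet_singleton _)
    rw [hA]
    dsimp only
    rw [h1, pw, ENNReal.ofReal_prod_of_nonneg (fun e _ => wt_nonneg (hgb e).1 (hgb e).2 _)]
    refine Finset.prod_congr rfl fun e _ => ?_
    rw [← Measure.map_apply (hmeas _ _) (measurableSet_singleton _), hlaw _ _ e.2]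
    have hge : SBM.meanMatrix n k p q cl e.1.1 e.1.2 = g e := rfl
    rw [hge]
    simp only [Measure.coe_add, Measure.coe_smul, Pi.add_apply, Pi.smul_apply,
      Measure.dirac_apply' _ (measurableSet_singleton _), smul_eq_mul]
    cases x e
    · have : (1 - g e) ≠ bv false - g e := by simp [bv]
      simp [bv, wt, Set.indicator]
    · simp [bv, wt, Set.indicator]
      intro hc; exfalso; linarith
  have hAE : ∀ x, ∀ ω ∈ A x, E ω = EM g x := by
    intro x ω hω
    have hω' : ∀ e : Edge n, E ω e.1.1 e.1.2 = bv (x e) - g e := by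
      intro e
      have := Set.mem_iInter₂.1 hω e (Finset.mem_univ e)
      simpa using this
    ext u v
    rw [EM, Matrix.of_apply, ← hω']
    unfold eg
    split_ifs with h
    · rfl
    · exact ((hsym ω).apply u v).symm
  have hdis : ∀ x y, x ≠ y → Disjoint (A x) (A y) := by
    intro x y hxy
    rw [Set.disjoint_left]
    intro ω hx hy
    apply hxy
    funext e
    have h1 : E ω e.1.1 e.1.2 = bv (x e) - g e := by
      simpa using Set.mem_iInter₂.1 hx e (Finset.mem_univ e)
    have h2 : E ω e.1.1 e.1.2 = bv (y e) - g e := by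
      simpa using Set.mem_iInter₂.1 hy e (Finset.mem_univ e)
    have h3 : bv (x e) = bv (y e) := by linarith
    revert h3
    cases x e <;> cases y e <;> simp [bv]
  set S : Finset (Edge n → Bool) := univ.filter fun x => P (EM g x) with hS
  have hsub : (⋃ x ∈ S, A x) ⊆ {ω : Ω | P (E ω)} := by
    intro ω hω
    obtain ⟨x, hx, hωx⟩ := Set.mem_iUnion₂.1 hω
    change P (E ω)
    rw [hAE x ω hωx]
    exact (Finset.mem_filter.1 hx).2
  refine le_trans (le_of_eq ?_) (measure_mono hsub)
  rw [measure_biUnion_finset (fun x _ y _ hxy => hdis x y hxy) (fun x _ => hAm x)]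
  simp only [hAP]
  rw [← ENNReal.ofReal_sum_of_nonneg (fun x _ => pw_nonneg hgb x)]
  congr 1
  have h1 := ex_one (g := g)
  nth_rewrite 1 [← h1]
  rw [hS, Finset.sum_filter]
  simp only [ex]
  rw [← Finset.sum_sub_distrib]
  refine Finset.sum_congr rfl fun x _ => ?_
  split_ifs <;> ring

end
end SBMAux

namespace SBMAux
set_option linter.unusedSectionVars false

section
variable {n k : ℕ}

lemma le_of_sq_le_sq' {a b : ℝ} (h : a ^ 2 ≤ b ^ 2) (hb : 0 ≤ b) : a ≤ b :=
  (le_abs_self a).trans (abs_le_of_sq_le_sq h hb)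

set_option maxHeartbeats 1000000 in
open Classical in
lemma final_prob (hn : 0 < n) (hk : 2 ≤ k) {p q : ℝ} (hq : 0 ≤ q) (hpq : q < p) (hp : p ≤ 1)
    (cl : Fin n → Fin k) (hbal : SBM.Balanced n k cl)
    (hsize : (n : ℝ) ≥ 20000000 * k ^ 2 * p * (Real.log n) ^ 12 / (p - q) ^ 2)
    (hl16 : 16 ≤ Real.log n) :
    ex (gp n k p q cl) (fun x => if Good (SBM.meanMatrix n k p q cl) k
      (10 * (Real.sqrt ((k : ℝ) * p) * (Real.log n) ^ 2 + Real.sqrt (Real.log n)))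
      (EM (gp n k p q cl) x) then 0 else 1) ≤ 2 / (n : ℝ) ^ 2 := by
  set ℓ := Real.log n with hℓ
  have hn0 : (0 : ℝ) < n := by exact_mod_cast hn
  have hk2 : (2 : ℝ) ≤ k := by exact_mod_cast hk
  have hk0 : (0 : ℝ) < k := by linarith
  have hℓ0 : 0 < ℓ := by linarith
  have hp0 : 0 < p := by linarith
  set δ := p - q with hδ
  have hδ0 : 0 < δ := by rw [hδ]; linarith
  have hδp : δ ≤ p := by rw [hδ]; linarith
  have F1 : 20000000 * k ^ 2 * p * ℓ ^ 12 ≤ n * δ ^ 2 := by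
    rwa [ge_iff_le, div_le_iff₀ (by positivity)] at hsize
  have F2 : 20000000 * k ^ 2 * ℓ ^ 12 ≤ n * p := by
    have h1 : n * δ ^ 2 ≤ n * p ^ 2 := by gcongr
    have h2 : (20000000 * k ^ 2 * ℓ ^ 12) * p ≤ (n * p) * p := by nlinarith
    exact le_of_mul_le_mul_right h2 hp0
  have F2' : 20000000 * k ^ 2 * ℓ ^ 12 ≤ n := by
    refine F2.trans (mul_le_of_le_one_right hn0.le hp)
  have hl12 : ℓ ^ 2 ≤ ℓ ^ 12 := pow_le_pow_right₀ (by linarith) (by norm_num)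
  have hl2 : 1 ≤ ℓ ^ 2 := by nlinarith
  have hkk : (1 : ℝ) ≤ k ^ 2 := by nlinarith
  have F5 : 20000000 * ℓ ^ 2 ≤ n * p := by
    refine le_trans ?_ F2
    calc 20000000 * ℓ ^ 2 = 20000000 * 1 * ℓ ^ 2 := by ring
      _ ≤ 20000000 * k ^ 2 * ℓ ^ 12 := by gcongr
  set B := Real.sqrt (500 * (n * p) * ℓ) with hB
  have hB0 : 0 < B := Real.sqrt_pos.2 (by positivity)
  have hB2 : B ^ 2 = 500 * (n * p) * ℓ := Real.sq_sqrt (by positivity)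
  set m : ℝ := n / (2 * k) with hm
  have hm0 : 0 < m := by positivity
  set s := Real.sqrt (2 * k / n) with hs
  have hs0 : 0 ≤ s := Real.sqrt_nonneg _
  have hs2 : s ^ 2 = 2 * k / n := Real.sq_sqrt (by positivity)
  have hS : ∀ i, m ≤ cs' cl i := by
    intro i
    refine le_trans ?_ (hbal i).1
    have h1 : 1 / (16 * Real.log n) ≤ 1 / 2 := by
      apply one_div_le_one_div_of_le (by norm_num)
      linarith
    calc m = (1 - 1 / 2) * ((n : ℝ) / k) := by rw [hm]; field_simp; norm_num
      _ ≤ _ := by gcongr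
  have hMD := meanData cl hq hpq hm0 hS (s := s) (by
    rw [hs2, hm]; apply le_of_eq; field_simp)
  set L := (p - q) * m with hLdef
  have hL0 : 0 < L := mul_pos hδ0 hm0
  have hBL2 : (B / L) ^ 2 * ℓ ^ 11 ≤ 1 / 10000 := by
    have e1 : (B / L) ^ 2 * ℓ ^ 11 = 2000 * k ^ 2 * p * ℓ ^ 12 / (n * δ ^ 2) := by
      rw [div_pow, hB2, hLdef, hm, ← hδ]
      field_simp
      norm_num
    rw [e1, div_le_iff₀ (by positivity)]
    linarith
  have hl11 : ℓ ^ 2 ≤ ℓ ^ 11 := pow_le_pow_right₀ (by linarith) (by norm_num)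
  have hε0 : 0 ≤ B / L := by positivity
  have hεℓ : ℓ * (B / L) ≤ 1 / 100 := by
    refine le_of_sq_le_sq' ?_ (by norm_num)
    calc (ℓ * (B / L)) ^ 2 = (B / L) ^ 2 * ℓ ^ 2 := by ring
      _ ≤ (B / L) ^ 2 * ℓ ^ 11 := by gcongr
      _ ≤ _ := hBL2.trans (by norm_num)
  have hε : B / L ≤ 1 / 100 := by nlinarith
  have hBL : 100 * B ≤ L := by
    rw [div_le_iff₀ hL0] at hε; linarith
  have hsℓ : ℓ * s ≤ 1 / 10 := by
    refine le_of_sq_le_sq' ?_ (by norm_num)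
    rw [mul_pow, hs2, mul_div_assoc', div_le_iff₀ hn0]
    calc ℓ ^ 2 * (2 * k) ≤ ℓ ^ 12 * (2 * k ^ 2) := by gcongr; nlinarith
      _ ≤ _ := by nlinarith [mul_nonneg (sq_nonneg (k : ℝ)) (pow_nonneg hℓ0.le 12)]
  have hkp : 0 < (k : ℝ) * p := by positivity
  set κ := Real.sqrt (k * p) with hκ
  have hκ0 : 0 < κ := Real.sqrt_pos.2 hkp
  have hκ2 : κ ^ 2 = k * p := Real.sq_sqrt hkp.le
  have hterm : (B / L) * B * s ≤ κ := by
    refine le_of_sq_le_sq' ?_ hκ0.le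
    calc ((B / L) * B * s) ^ 2 = (B / L) ^ 2 * B ^ 2 * s ^ 2 := by ring
      _ = ((B / L) ^ 2 * ℓ) * (1000 * (k * p)) := by
        rw [hB2, hs2]; field_simp; norm_num
      _ ≤ ((B / L) ^ 2 * ℓ ^ 11) * (1000 * (k * p)) := by
        gcongr
        exact le_self_pow₀ (by linarith) (by norm_num)
      _ ≤ (1 / 10000) * (1000 * (k * p)) := by gcongr
      _ ≤ κ ^ 2 := by rw [hκ2]; linarith
  set l := min ℓ (1 / κ) with hl
  have hl0 : 0 < l := lt_min hℓ0 (by positivity)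
  have hlℓ : l ≤ ℓ := min_le_left _ _
  have hd : l * (s + 2 * (B / L)) ≤ 1 / 2 := by
    calc l * (s + 2 * (B / L)) ≤ ℓ * (s + 2 * (B / L)) := by gcongr
      _ ≤ 1 / 2 := by linarith
  set r := κ * ℓ ^ 2 + Real.sqrt ℓ with hr
  have hsq4 : 4 ≤ Real.sqrt ℓ := Real.le_sqrt_of_sq_le (by linarith)
  have hlr : 4 * ℓ ≤ l * r := by
    rcases min_cases ℓ (1 / κ) with ⟨h1, _⟩ | ⟨h1, _⟩
    · rw [hl, h1, hr]
      have : 0 ≤ ℓ * (κ * ℓ ^ 2) := by positivity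
      have h3 : 4 * ℓ ≤ ℓ * Real.sqrt ℓ := by
        rw [mul_comm]; exact mul_le_mul_of_nonneg_left hsq4 hℓ0.le
      rw [mul_add]; linarith
    · rw [hl, h1, hr, mul_add]
      have e1 : 1 / κ * (κ * ℓ ^ 2) = ℓ ^ 2 := by field_simp
      rw [e1]
      have : 0 ≤ 1 / κ * Real.sqrt ℓ := by positivity
      have h3 : 4 * ℓ ≤ ℓ ^ 2 := by
        rw [sq]; exact mul_le_mul_of_nonneg_right (by linarith) hℓ0.le
      linarith
  have hl2k : l ^ 2 * p * k ≤ 1 := by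
    have h1 : l ≤ 1 / κ := min_le_right _ _
    calc l ^ 2 * p * k = l ^ 2 * κ ^ 2 := by rw [hκ2]; ring
      _ ≤ (1 / κ) ^ 2 * κ ^ 2 := by gcongr
      _ = 1 := by field_simp
  have hg := gp_bds (n := n) (k := k) hq hpq cl
  have hF := hMD.fail_prob hs0 (g := gp n k p q cl) hn
    (fun i => ⟨(hg i).1, (hg i).2.trans hp⟩) hp0.le (fun i => (hg i).2)
    (by linarith) (by linarith) (by linarith) hB0 hB2 hBL (l := l) (r := r) hl0 hd
  have hexp : Real.exp (1 + 6 * l ^ 2 * p * k) / Real.exp (l * r) ≤ 1 / (n : ℝ) ^ 3 := by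
    rw [← Real.exp_sub]
    have e1 : 1 / (n : ℝ) ^ 3 = Real.exp (-(3 * ℓ)) := by
      have : (n : ℝ) = Real.exp ℓ := (Real.exp_log hn0).symm
      rw [this, Real.exp_neg, ← Real.exp_nat_mul, one_div]
      norm_num
    rw [e1]
    apply Real.exp_le_exp.2
    have : 6 * l ^ 2 * p * k = 6 * (l ^ 2 * p * k) := by ring
    rw [this]
    linarith
  have hR : 2 * r + 4 * (B / L) * B * s ≤ 10 * r := by
    have h1 : κ ≤ κ * ℓ ^ 2 := le_mul_of_one_le_right hκ0.le hl2
    have h2 : 4 * (B / L) * B * s = 4 * ((B / L) * B * s) := by ring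
    rw [h2]
    linarith
  refine le_trans (ex_mono (fun i => ⟨(hg i).1, (hg i).2.trans hp⟩) fun x => ?_) (hF.trans ?_)
  · by_cases hG : Good (SBM.meanMatrix n k p q cl) k (2 * r + 4 * (B / L) * B * s)
        (EM (gp n k p q cl) x)
    · have : Good (SBM.meanMatrix n k p q cl) k (10 * r) (EM (gp n k p q cl) x) :=
        fun lam v h1 h2 h3 u => (hG lam v h1 h2 h3 u).trans hR
      rw [if_pos hG, if_pos this]
    · rw [if_neg hG]; split_ifs <;> norm_num
  · calc _ ≤ 1 / (n : ℝ) ^ 2 + n * (1 / (n : ℝ) ^ 3) := by gcongr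
      _ = _ := by field_simp; norm_num

end
end SBMAux

open SBM in
/-- Upper bound of the noise term. There are constants `C, c, C₃ > 0`
such that: if the partition is balanced, `k ≥ 2` and `n ≥ C·k²·p·(log n)¹²/(p−q)²`, then
with probability at least `1 − c/n` over `E`, for every vertex `u`,
`‖P_{Ĝ_k}·E_u‖ ≤ C₃(√(kp)(log n)² + √(log n))`. -/
theorem noise_term_bound :
    ∃ C > (0 : ℝ), ∃ c > (0 : ℝ), ∃ C₃ > (0 : ℝ),
      ∀ (n k : ℕ) (hn : 0 < n) (hk : 2 ≤ k)
        (p q : ℝ) (hq : 0 ≤ q) (hpq : q < p) (hp : p ≤ 1)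
        (cl : Fin n → Fin k) (hbal : Balanced n k cl)
        (hsize : (n : ℝ) ≥ C * k ^ 2 * p * (Real.log n) ^ 12 / (p - q) ^ 2)
        (Ω : Type) (_ : MeasureSpace Ω) (_ : IsProbabilityMeasure (ℙ : Measure Ω))
        (E : Ω → Matrix (Fin n) (Fin n) ℝ) (hE : NoiseModel p q cl E),
        ENNReal.ofReal (1 - c / (n : ℝ)) ≤
          ℙ {ω : Ω |
            ∀ (lam : Fin n → ℝ) (v : Fin n → Fin n → ℝ),
              IsSpectralDecomp (meanMatrix n k p q cl + E ω) lam v →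
              ∀ u : Fin n,
                SBM.enorm ((projTop k v).mulVec (column (E ω) u)) ≤
                  C₃ * (Real.sqrt ((k : ℝ) * p) * (Real.log n) ^ 2 +
                    Real.sqrt (Real.log n))} := by
  classical
  refine ⟨20000000, by norm_num, Real.exp 16, Real.exp_pos _, 10, by norm_num, ?_⟩
  intro n k hn hk p q hq hpq hp cl hbal hsize Ω _ _ E hE
  have hn0 : (0 : ℝ) < n := by exact_mod_cast hn
  by_cases hl : 16 ≤ Real.log n
  · have h1 := SBMAux.final_prob hn hk hq hpq hp cl hbal hsize hl
    have h2 := SBMAux.transfer hq hpq hp cl E hE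
      (SBMAux.Good (meanMatrix n k p q cl) k
        (10 * (Real.sqrt ((k : ℝ) * p) * (Real.log n) ^ 2 + Real.sqrt (Real.log n))))
    refine le_trans (ENNReal.ofReal_le_ofReal ?_) (h2.trans (measure_mono ?_))
    · have h3 : 2 / (n : ℝ) ^ 2 ≤ Real.exp 16 / n := by
        rw [sq, ← div_div]
        gcongr
        have hn1 : (1 : ℝ) ≤ n := by exact_mod_cast hn
        have h4 : (2 : ℝ) ≤ Real.exp 16 := by
          have := Real.add_one_le_exp (16 : ℝ)
          linarith
        rw [div_le_iff₀ hn0]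
        nlinarith
      linarith
    · intro ω hω lam v hd u
      exact SBMAux.good_link hω lam v hd u
  · have h1 : (n : ℝ) ≤ Real.exp 16 := by
      rw [← Real.log_le_iff_le_exp hn0]; exact (not_le.1 hl).le
    have h2 : 1 - Real.exp 16 / (n : ℝ) ≤ 0 := by
      have : 1 ≤ Real.exp 16 / (n : ℝ) := by rwa [le_div_iff₀ hn0, one_mul]
      linarith
    rw [ENNReal.ofReal_of_nonpos h2]
    exact zero_le
end

section
/- Suppose n ≥ 3, k ≥ 2 and the partition is balanced. Then with probability at least 1 − 2·n^{−2} over the choice of E, ‖E·ψ(G)‖_{2→∞} ≤ 10·(√(k·p·log n) + √(log n)). -/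
open MeasureTheory ProbabilityTheory Matrix Finset

lemma aux_cosh_convex (u r s w : ℝ) (hw0 : 0 ≤ w) (hw1 : w ≤ 1)
    (h : u ^ 2 = (1 - w) * r ^ 2 + w * s ^ 2) :
    Real.cosh u ≤ (1 - w) * Real.cosh r + w * Real.cosh s := by
  refine hasSum_le (fun n => ?_) (Real.hasSum_cosh u)
    (((Real.hasSum_cosh r).mul_left (1 - w)).add ((Real.hasSum_cosh s).mul_left w))
  have hc := (convexOn_pow (𝕜 := ℝ) n).2 (Set.mem_Ici.2 (sq_nonneg r)) (Set.mem_Ici.2 (sq_nonneg s))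
    (show 0 ≤ 1 - w by linarith) hw0 (by ring)
  simp only [smul_eq_mul] at hc
  rw [← h, ← pow_mul, ← pow_mul, ← pow_mul] at hc
  have hf : (0 : ℝ) < ((2 * n).factorial : ℝ) := by positivity
  calc u ^ (2 * n) / ((2 * n).factorial : ℝ)
      ≤ ((1 - w) * r ^ (2 * n) + w * s ^ (2 * n)) / ((2 * n).factorial : ℝ) := by gcongr
    _ = _ := by ring

lemma aux_cosh_norm_add {H : Type*} [NormedAddCommGroup H] [InnerProductSpace ℝ H] (x h : H)
    (hh : ‖h‖ ≤ 1) :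
    Real.cosh ‖x + h‖ ≤ Real.cosh ‖x‖ * (1 + ‖h‖ ^ 2)
      + (Real.sinh ‖x‖ / ‖x‖) * inner ℝ x h := by
  set a := ‖x‖ with ha
  set b := ‖h‖ with hb
  have ha0 : 0 ≤ a := norm_nonneg _
  have hb0 : 0 ≤ b := norm_nonneg _
  obtain ⟨w, hw0, hw1, hw⟩ : ∃ w : ℝ, 0 ≤ w ∧ w ≤ 1 ∧ inner ℝ x h = a * b * (2 * w - 1) := by
    have hz := abs_le.1 (abs_real_inner_le_norm x h)
    rw [← ha, ← hb] at hz
    rcases eq_or_ne (a * b) 0 with h0 | h0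
    · refine ⟨1 / 2, by norm_num, by norm_num, ?_⟩
      rw [h0] at hz ⊢
      linarith [hz.1, hz.2]
    · have hpos : 0 < a * b := lt_of_le_of_ne (by positivity) (Ne.symm h0)
      refine ⟨(inner ℝ x h / (a * b) + 1) / 2, ?_, ?_, ?_⟩
      · have : -1 ≤ inner ℝ x h / (a * b) := by rw [le_div_iff₀ hpos]; linarith
        linarith
      · have : inner ℝ x h / (a * b) ≤ 1 := by rw [div_le_iff₀ hpos]; linarith
        linarith
      · have : a * b * (inner ℝ x h / (a * b)) = inner ℝ x h := mul_div_cancel₀ _ h0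
        linear_combination -this
  have hsq : ‖x + h‖ ^ 2 = (1 - w) * (a - b) ^ 2 + w * (a + b) ^ 2 := by
    rw [norm_add_sq_real, hw]
    ring
  have h1 := aux_cosh_convex _ _ _ w hw0 hw1 hsq
  rw [Real.cosh_sub, Real.cosh_add] at h1
  have h2 : Real.sinh a / a * inner ℝ x h = Real.sinh a * b * (2 * w - 1) := by
    rw [hw]
    rcases eq_or_ne a 0 with h0 | h0
    · simp [h0]
    · field_simp
  rw [h2]
  have h3 : Real.exp b - 1 - b ≤ b ^ 2 := by
    have := Real.abs_exp_sub_one_sub_id_le (x := b) (by rwa [abs_of_nonneg hb0])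
    exact (abs_le.1 this).2
  rw [← Real.cosh_add_sinh] at h3
  have h4 : b ≤ Real.sinh b := Real.self_le_sinh_iff.2 hb0
  have h5 : 0 ≤ Real.sinh a := Real.sinh_nonneg_iff.2 ha0
  have h6 : Real.sinh a ≤ Real.cosh a := (Real.sinh_lt_cosh a).le
  have h7 : 0 < Real.cosh a := Real.cosh_pos a
  have h8 : 0 ≤ (Real.sinh b - b) * (Real.cosh a - (2 * w - 1) * Real.sinh a) := by
    apply mul_nonneg (by linarith)
    nlinarith
  nlinarith

lemma aux_vec_mgf {Ω : Type*} [MeasurableSpace Ω] {P : Measure Ω} [IsProbabilityMeasure P]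
    {ι : Type*} {m : ℕ} (X : ι → Ω → ℝ) (hX : ∀ i, Measurable (X i))
    (hind : iIndepFun X P) (hb : ∀ i, ∀ᵐ ω ∂P, |X i ω| ≤ 1) (h0 : ∀ i, ∫ ω, X i ω ∂P = 0)
    (p : ℝ) (hv : ∀ i, ∫ ω, X i ω ^ 2 ∂P ≤ p)
    (w : ι → EuclideanSpace ℝ (Fin m)) (hw : ∀ i, ‖w i‖ ≤ 1) (T : Finset ι) :
    Integrable (fun ω => Real.cosh ‖∑ i ∈ T, X i ω • w i‖) P ∧
    ∫ ω, Real.cosh ‖∑ i ∈ T, X i ω • w i‖ ∂P ≤ Real.exp (∑ i ∈ T, ‖w i‖ ^ 2 * p) := by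
  classical
  have hSm : ∀ T : Finset ι, Measurable fun ω => ∑ i ∈ T, X i ω • w i := by
    intro T
    exact Finset.measurable_sum _ fun i _ => (hX i).smul_const _
  have hint : ∀ T : Finset ι, Integrable (fun ω => Real.cosh ‖∑ i ∈ T, X i ω • w i‖) P := by
    intro T
    refine Integrable.of_bound (C := Real.cosh T.card) ?_ ?_
    · exact (Real.continuous_cosh.measurable.comp (hSm T).norm).aestronglyMeasurable
    · have hall : ∀ᵐ ω ∂P, ∀ i ∈ T, |X i ω| ≤ 1 :=
        (Finset.eventually_all T).2 fun i _ => hb i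
      filter_upwards [hall] with ω hω
      rw [Real.norm_eq_abs, abs_of_pos (Real.cosh_pos _), Real.cosh_le_cosh, abs_of_nonneg (norm_nonneg _),
        abs_of_nonneg (by positivity)]
      calc ‖∑ i ∈ T, X i ω • w i‖ ≤ ∑ i ∈ T, (1 : ℝ) := by
            refine norm_sum_le_of_le _ fun i hi => ?_
            rw [norm_smul, Real.norm_eq_abs]
            exact mul_le_one₀ (hω i hi) (norm_nonneg _) (hw i)
        _ = T.card := by simp
  refine ⟨hint T, ?_⟩
  induction T using Finset.induction_on with
  | empty => simp
  | insert a T ha ih =>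
    set S : Ω → EuclideanSpace ℝ (Fin m) := fun ω => ∑ i ∈ T, X i ω • w i with hS
    have hindST : IndepFun S (X a) P := by
      have h1 := hind.indepFun_finset T {a} (Finset.disjoint_singleton_right.2 ha) hX
      have h2 := h1.comp (_mγ' := Real.measurableSpace) (φ := fun f : (T → ℝ) => ∑ i : T, f i • w i)
        (ψ := fun f : (({a} : Finset ι) → ℝ) => f ⟨a, by simp⟩)
        (Finset.measurable_sum _ fun i _ => (measurable_pi_apply i).smul_const _)
        (by fun_prop)
      have e1 : S = (fun f : (T → ℝ) => ∑ i : T, f i • w i) ∘ fun ω (i : T) => X i ω := by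
        funext ω
        simp only [hS, Function.comp]
        exact (Finset.sum_coe_sort T fun i => X i ω • w i).symm
      rw [e1]
      exact h2
    have hXi : Integrable (X a) P := Integrable.of_bound (hX a).aestronglyMeasurable 1 (hb a)
    have hX2i : Integrable (fun ω => 1 + ‖w a‖ ^ 2 * X a ω ^ 2) P := by
      refine (integrable_const 1).add (Integrable.const_mul ?_ _)
      refine Integrable.of_bound ((hX a).pow_const 2).aestronglyMeasurable 1 ?_
      filter_upwards [hb a] with ω hω
      rw [Real.norm_eq_abs, abs_pow]
      exact pow_le_one₀ (abs_nonneg _) hω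
    let F : EuclideanSpace ℝ (Fin m) → ℝ := fun x => Real.sinh ‖x‖ / ‖x‖ * inner ℝ x (w a)
    have hFm : Measurable F := by
      refine Measurable.mul (Measurable.div ?_ measurable_norm) ?_
      · exact Real.continuous_sinh.measurable.comp measurable_norm
      · fun_prop
    have hFi : Integrable (fun ω => F (S ω)) P := by
      refine (hint T).mono (hFm.comp (hSm T)).aestronglyMeasurable (ae_of_all _ fun ω => ?_)
      simp only [F]
      rw [Real.norm_eq_abs, Real.norm_eq_abs, abs_of_pos (Real.cosh_pos _), abs_mul, abs_div,
        abs_of_nonneg (norm_nonneg (S ω)), abs_of_nonneg (Real.sinh_nonneg_iff.2 (norm_nonneg _))]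
      have h1 : |inner ℝ (S ω) (w a)| ≤ ‖S ω‖ := by
        refine (abs_real_inner_le_norm _ _).trans ?_
        exact mul_le_of_le_one_right (norm_nonneg _) (hw a)
      have h5 : 0 ≤ Real.sinh ‖S ω‖ := Real.sinh_nonneg_iff.2 (norm_nonneg _)
      calc Real.sinh ‖S ω‖ / ‖S ω‖ * |inner ℝ (S ω) (w a)|
          ≤ Real.sinh ‖S ω‖ / ‖S ω‖ * ‖S ω‖ := by gcongr
        _ ≤ Real.sinh ‖S ω‖ := by
            rcases eq_or_ne ‖S ω‖ 0 with h | h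
            · simp [h]
            · rw [div_mul_cancel₀ _ h]
        _ ≤ Real.cosh ‖S ω‖ := (Real.sinh_lt_cosh _).le
    have hC : Measurable fun x : EuclideanSpace ℝ (Fin m) => Real.cosh ‖x‖ :=
      Real.continuous_cosh.measurable.comp measurable_norm
    have hI1 : IndepFun (fun ω => Real.cosh ‖S ω‖) (fun ω => 1 + ‖w a‖ ^ 2 * X a ω ^ 2) P :=
      hindST.comp (φ := fun x => Real.cosh ‖x‖) (ψ := fun y => 1 + ‖w a‖ ^ 2 * y ^ 2) hC
        (by fun_prop)
    have hI2 : IndepFun (fun ω => F (S ω)) (X a) P := hindST.comp hFm measurable_id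
    have hi1 := hI1.integrable_mul (hint T) hX2i
    have hi2 := hI2.integrable_mul hFi hXi
    have hle : ∀ᵐ ω ∂P, Real.cosh ‖∑ i ∈ insert a T, X i ω • w i‖ ≤
        Real.cosh ‖S ω‖ * (1 + ‖w a‖ ^ 2 * X a ω ^ 2) + F (S ω) * X a ω := by
      filter_upwards [hb a] with ω hω
      have h := aux_cosh_norm_add (S ω) (X a ω • w a) (by
        rw [norm_smul, Real.norm_eq_abs]
        exact mul_le_one₀ hω (norm_nonneg _) (hw a))
      rw [Finset.sum_insert ha, add_comm (X a ω • w a)]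
      refine h.trans (le_of_eq ?_)
      rw [norm_smul, Real.norm_eq_abs, mul_pow, sq_abs, inner_smul_right]
      simp only [F]
      ring
    have hmono := integral_mono_ae (hint (insert a T)) (hi1.add hi2) hle
    refine hmono.trans ?_
    have e : ∫ ω, ((((fun ω => Real.cosh ‖S ω‖) * (fun ω => 1 + ‖w a‖ ^ 2 * X a ω ^ 2)) +
        ((fun ω => F (S ω)) * X a) : Ω → ℝ)) ω ∂P =
        (∫ ω, Real.cosh ‖S ω‖ ∂P) * (1 + ‖w a‖ ^ 2 * ∫ ω, X a ω ^ 2 ∂P) := by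
      rw [integral_add' hi1 hi2, hI1.integral_mul_eq_mul_integral (hint T).1 hX2i.1,
        hI2.integral_mul_eq_mul_integral hFi.1 hXi.1, h0 a, mul_zero, add_zero]
      congr 1
      have hX2 : Integrable (fun ω => ‖w a‖ ^ 2 * X a ω ^ 2) P := by
        refine (hX2i.sub (integrable_const (1 : ℝ))).congr (ae_of_all _ fun ω => ?_)
        simp
      rw [integral_add (integrable_const 1) hX2, integral_const_mul]
      simp
    rw [e, Finset.sum_insert ha, add_comm (‖w a‖ ^ 2 * p), Real.exp_add]
    have hcosh : 0 ≤ ∫ ω, Real.cosh ‖S ω‖ ∂P := integral_nonneg fun ω => (Real.cosh_pos _).le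
    have h2 : 1 + ‖w a‖ ^ 2 * ∫ ω, X a ω ^ 2 ∂P ≤ Real.exp (‖w a‖ ^ 2 * p) := by
      have : ‖w a‖ ^ 2 * ∫ ω, X a ω ^ 2 ∂P ≤ ‖w a‖ ^ 2 * p := by
        gcongr
        exact hv a
      linarith [Real.add_one_le_exp (‖w a‖ ^ 2 * p)]
    calc _ ≤ (∫ ω, Real.cosh ‖S ω‖ ∂P) * Real.exp (‖w a‖ ^ 2 * p) := by gcongr
      _ ≤ _ := by gcongr

lemma aux_vec_tail {Ω : Type*} [MeasurableSpace Ω] {P : Measure Ω} [IsProbabilityMeasure P]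
    {m : ℕ} (X : Fin m → Ω → ℝ) (hX : ∀ i, Measurable (X i))
    (hind : iIndepFun X P) (hb : ∀ i, ∀ᵐ ω ∂P, |X i ω| ≤ 1) (h0 : ∀ i, ∫ ω, X i ω ∂P = 0)
    (p : ℝ) (hp : 0 ≤ p) (hv : ∀ i, ∫ ω, X i ω ^ 2 ∂P ≤ p)
    (w : Fin m → EuclideanSpace ℝ (Fin m)) (R l t : ℝ) (hl : 0 < l) (hw : ∀ i, ‖w i‖ ^ 2 ≤ R)
    (hlR : l ^ 2 * R ≤ 1) :
    P.real {ω | t ≤ ‖∑ i, X i ω • w i‖} ≤ 2 * Real.exp (l ^ 2 * (m * R * p) - l * t) := by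
  have hws : ∀ i, ‖l • w i‖ ^ 2 ≤ l ^ 2 * R := by
    intro i
    rw [norm_smul, mul_pow, Real.norm_eq_abs, sq_abs]
    gcongr
    exact hw i
  obtain ⟨hi, hle⟩ := aux_vec_mgf X hX hind hb h0 p hv (fun i => l • w i)
    (fun i => by
      have := (hws i).trans hlR
      nlinarith [norm_nonneg (l • w i)]) Finset.univ
  have hsum : ∀ ω, ‖∑ i, X i ω • l • w i‖ = l * ‖∑ i, X i ω • w i‖ := by
    intro ω
    rw [← abs_of_pos hl, ← Real.norm_eq_abs, ← norm_smul, Finset.smul_sum, Real.norm_eq_abs,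
      abs_of_pos hl]
    congr 1
    exact Finset.sum_congr rfl fun i _ => smul_comm _ _ _
  have hM := mul_meas_ge_le_integral_of_nonneg (ae_of_all _ fun ω => (Real.cosh_pos _).le) hi
    (Real.exp (l * t) / 2)
  have hsub : {ω | t ≤ ‖∑ i, X i ω • w i‖} ⊆
      {ω | Real.exp (l * t) / 2 ≤ Real.cosh ‖∑ i, X i ω • l • w i‖} := by
    intro ω hω
    simp only [Set.mem_ofPred_eq] at hω ⊢
    rw [hsum, Real.cosh_eq]
    have : Real.exp (l * t) ≤ Real.exp (l * ‖∑ i, X i ω • w i‖) := by gcongr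
    linarith [Real.exp_pos (-(l * ‖∑ i, X i ω • w i‖))]
  have h1 := measureReal_mono (μ := P) hsub
  have h2 : ∑ i, ‖l • w i‖ ^ 2 * p ≤ l ^ 2 * (m * R * p) := by
    calc ∑ i, ‖l • w i‖ ^ 2 * p ≤ ∑ i : Fin m, l ^ 2 * R * p :=
          Finset.sum_le_sum fun i _ => mul_le_mul_of_nonneg_right (hws i) hp
      _ = _ := by simp; ring
  have h3 := Real.exp_le_exp.2 h2
  rw [Real.exp_sub, ← mul_div_assoc, le_div_iff₀ (Real.exp_pos _)]
  nlinarith [Real.exp_pos (l * t)]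

lemma aux_scal_tail {Ω : Type*} [MeasurableSpace Ω] {P : Measure Ω} [IsProbabilityMeasure P]
    {m : ℕ} (X : Fin m → Ω → ℝ) (hX : ∀ i, Measurable (X i))
    (hind : iIndepFun X P) (hb : ∀ i, ∀ᵐ ω ∂P, |X i ω| ≤ 1)
    (p : ℝ) (hv : ∀ i, ∫ ω, X i ω ^ 2 ∂P ≤ p) (t : ℝ) :
    P.real {ω | t ≤ ∑ i, X i ω ^ 2} ≤ Real.exp (2 * m * p - t) := by
  have hind2 : iIndepFun (fun i ω => X i ω ^ 2) P :=
    hind.comp (fun _ x => x ^ 2) (fun _ => by fun_prop)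
  have hm2 : ∀ i, Measurable fun ω => X i ω ^ 2 := fun i => (hX i).pow_const 2
  have hi2 : ∀ i, Integrable (fun ω => X i ω ^ 2) P := by
    intro i
    refine Integrable.of_bound (hm2 i).aestronglyMeasurable 1 ?_
    filter_upwards [hb i] with ω hω
    rw [Real.norm_eq_abs, abs_pow]
    exact pow_le_one₀ (abs_nonneg _) hω
  have hexp : ∀ i, Integrable (fun ω => Real.exp (1 * X i ω ^ 2)) P := by
    intro i
    refine Integrable.of_bound (by fun_prop) (Real.exp 1) ?_
    filter_upwards [hb i] with ω hω
    rw [Real.norm_eq_abs, abs_of_pos (Real.exp_pos _), Real.exp_le_exp, one_mul, ← sq_abs]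
    exact pow_le_one₀ (abs_nonneg _) hω
  have hmgf : ∀ i, mgf (fun ω => X i ω ^ 2) P 1 ≤ Real.exp (2 * p) := by
    intro i
    have h1 : mgf (fun ω => X i ω ^ 2) P 1 ≤ ∫ ω, (1 + 2 * X i ω ^ 2) ∂P := by
      refine integral_mono_ae (hexp i) ((integrable_const 1).add ((hi2 i).const_mul 2)) ?_
      filter_upwards [hb i] with ω hω
      have hy0 : 0 ≤ X i ω ^ 2 := sq_nonneg _
      have hy1 : X i ω ^ 2 ≤ 1 := by
        rw [← sq_abs]
        exact pow_le_one₀ (abs_nonneg _) hω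
      have := (abs_le.1 (Real.abs_exp_sub_one_sub_id_le (x := X i ω ^ 2)
        (by rwa [abs_of_nonneg hy0]))).2
      simp only [one_mul]
      nlinarith
    rw [integral_add (integrable_const 1) ((hi2 i).const_mul 2), integral_const_mul] at h1
    simp at h1
    linarith [hv i, Real.add_one_le_exp (2 * p)]
  have h := measure_ge_le_exp_mul_mgf (μ := P) (X := ∑ i, fun ω => X i ω ^ 2) (t := 1) t zero_le_one
    (hind2.integrable_exp_mul_sum hm2 fun i _ => hexp i)
  rw [hind2.mgf_sum hm2] at h
  have h3 : ∏ i, mgf (fun ω => X i ω ^ 2) P 1 ≤ Real.exp (2 * m * p) := by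
    calc _ ≤ ∏ i : Fin m, Real.exp (2 * p) :=
          Finset.prod_le_prod (fun i _ => mgf_nonneg) fun i _ => hmgf i
      _ = _ := by
        rw [← Real.exp_sum]
        simp
        ring
  simp only [Finset.sum_apply] at h
  refine h.trans ?_
  rw [sub_eq_neg_add, Real.exp_add]
  simp only [neg_mul, one_mul]
  gcongr

open SBM in
lemma aux_mean_apply (n k : ℕ) (p q : ℝ) (cl : Fin n → Fin k) (u v : Fin n) :
    meanMatrix n k p q cl u v = q + (p - q) * (if cl u = cl v then 1 else 0) := by
  unfold meanMatrix
  simp only [Matrix.of_apply]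
  split_ifs <;> ring

open SBM in
lemma aux_size_sum {n k : ℕ} (cl : Fin n → Fin k) (i : Fin k) :
    ∑ v, (if i = cl v then (1 : ℝ) else 0) = clusterSize cl i := by
  unfold clusterSize
  rw [Finset.sum_boole]
  simp [eq_comm]

open SBM in
lemma aux_row_sum (n k : ℕ) (p q : ℝ) (cl : Fin n → Fin k) (u : Fin n) :
    ∑ v, meanMatrix n k p q cl u v = q * n + (p - q) * clusterSize cl (cl u) := by
  simp only [aux_mean_apply, Finset.sum_add_distrib, ← Finset.mul_sum, aux_size_sum]
  simp
  ring

open SBM in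
lemma aux_mean_sq (n k : ℕ) (p q : ℝ) (cl : Fin n → Fin k) (u v : Fin n) :
    (meanMatrix n k p q cl * meanMatrix n k p q cl) u v =
      q ^ 2 * n + q * (p - q) * (clusterSize cl (cl u) + clusterSize cl (cl v))
      + (p - q) ^ 2 * clusterSize cl (cl u) * (if cl u = cl v then 1 else 0) := by
  rw [Matrix.mul_apply]
  have e : ∀ x, meanMatrix n k p q cl u x * meanMatrix n k p q cl x v =
      q ^ 2 + q * (p - q) * (if cl u = cl x then (1 : ℝ) else 0)
      + q * (p - q) * (if cl v = cl x then (1 : ℝ) else 0)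
      + (p - q) ^ 2 * (if cl u = cl v then 1 else 0) * (if cl u = cl x then (1 : ℝ) else 0) := by
    intro x
    rw [aux_mean_apply, aux_mean_apply]
    by_cases h1 : cl u = cl x <;> by_cases h2 : cl v = cl x
    · have h3 : cl u = cl v := h1.trans h2.symm
      rw [if_pos h1, if_pos h2, if_pos h2.symm, if_pos h3]; ring
    · have h3 : ¬ cl u = cl v := fun h => h2 (h.symm.trans h1)
      rw [if_pos h1, if_neg h2, if_neg (Ne.symm h2), if_neg h3]; ring
    · rw [if_neg h1, if_pos h2, if_pos h2.symm]; ring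
    · rw [if_neg h1, if_neg h2, if_neg (Ne.symm h2)]; ring
  simp only [e, Finset.sum_add_distrib, ← Finset.mul_sum, aux_size_sum]
  simp
  ring

open SBM in
lemma aux_sizes_total {n k : ℕ} (cl : Fin n → Fin k) :
    ∑ i, (clusterSize cl i : ℝ) = n := by
  simp only [← aux_size_sum]
  rw [Finset.sum_comm]
  simp

open SBM in
lemma aux_sizes_sq {n k : ℕ} (cl : Fin n → Fin k) :
    ∑ u, (clusterSize cl (cl u) : ℝ) = ∑ i, (clusterSize cl i : ℝ) ^ 2 := by
  have h : ∀ u, (clusterSize cl (cl u) : ℝ) =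
      ∑ i, (if i = cl u then (1 : ℝ) else 0) * clusterSize cl i := by
    intro u
    simp
  rw [Finset.sum_congr rfl fun u _ => h u, Finset.sum_comm]
  refine Finset.sum_congr rfl fun i _ => ?_
  rw [← Finset.sum_mul, aux_size_sum]
  ring

open SBM in
lemma aux_lam_lower (n k : ℕ) (hn : 0 < n) (hk : 0 < k) (p q : ℝ) (hpq : q < p)
    (cl : Fin n → Fin k) (lamG : Fin n → ℝ) (vG : Fin n → Fin n → ℝ)
    (hdecG : IsSpectralDecomp (meanMatrix n k p q cl) lamG vG) :
    q * n + (p - q) * ((n : ℝ) / k) ≤ lamG ⟨0, hn⟩ := by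
  obtain ⟨hanti, horth, hdec⟩ := hdecG
  have hn' : (0 : ℝ) < n := by exact_mod_cast hn
  have hk' : (0 : ℝ) < k := by exact_mod_cast hk
  let V : Matrix (Fin n) (Fin n) ℝ := Matrix.of vG
  have hV : V * Vᵀ = 1 := by
    ext i j
    rw [Matrix.mul_apply, Matrix.one_apply, ← horth i j]
    rfl
  have hV' : Vᵀ * V = 1 := mul_eq_one_comm.1 hV
  have hpars : ∑ i, (∑ u, vG i u) ^ 2 = n := by
    have h1 : ∀ u v, ∑ i, vG i u * vG i v = if u = v then (1 : ℝ) else 0 := by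
      intro u v
      have := congrFun (congrFun hV' u) v
      rw [Matrix.mul_apply, Matrix.one_apply] at this
      exact this
    calc ∑ i, (∑ u, vG i u) ^ 2 = ∑ i, ∑ u, ∑ v, vG i u * vG i v := by
          refine Finset.sum_congr rfl fun i _ => ?_
          rw [sq, Finset.sum_mul_sum]
      _ = ∑ u, ∑ v, ∑ i, vG i u * vG i v := by
          rw [Finset.sum_comm]
          refine Finset.sum_congr rfl fun u _ => ?_
          rw [Finset.sum_comm]
      _ = n := by simp [h1]
  have hq : ∑ u, ∑ v, meanMatrix n k p q cl u v = ∑ i, lamG i * (∑ u, vG i u) ^ 2 := by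
    have h1 : ∀ u v, meanMatrix n k p q cl u v = ∑ i, lamG i * (vG i u * vG i v) := by
      intro u v
      rw [hdec]
      simp [Matrix.sum_apply, Matrix.vecMulVec_apply]
    simp only [h1]
    calc ∑ u, ∑ v, ∑ i, lamG i * (vG i u * vG i v)
        = ∑ i, ∑ u, ∑ v, lamG i * (vG i u * vG i v) := by
          rw [Finset.sum_comm (f := fun i u => ∑ v, lamG i * (vG i u * vG i v))]
          refine Finset.sum_congr rfl fun u _ => ?_
          rw [Finset.sum_comm]
      _ = _ := by
          refine Finset.sum_congr rfl fun i _ => ?_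
          rw [sq, Finset.sum_mul_sum, Finset.mul_sum]
          refine Finset.sum_congr rfl fun u _ => ?_
          rw [Finset.mul_sum]
  have hup : ∑ i, lamG i * (∑ u, vG i u) ^ 2 ≤ lamG ⟨0, hn⟩ * n := by
    rw [← hpars, Finset.mul_sum]
    refine Finset.sum_le_sum fun i _ => ?_
    exact mul_le_mul_of_nonneg_right (hanti (Fin.mk_le_of_le_val (Nat.zero_le _))) (sq_nonneg _)
  have hlow : (q * n + (p - q) * ((n : ℝ) / k)) * n ≤ ∑ u, ∑ v, meanMatrix n k p q cl u v := by
    simp only [aux_row_sum, Finset.sum_add_distrib, ← Finset.mul_sum, aux_sizes_sq]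
    have hcs := sq_sum_le_card_mul_sum_sq (s := univ) (f := fun i => (clusterSize cl i : ℝ))
    rw [aux_sizes_total] at hcs
    simp only [Finset.card_univ, Fintype.card_fin] at hcs
    have h2 : (n : ℝ) / k * n ≤ ∑ i, (clusterSize cl i : ℝ) ^ 2 := by
      rw [div_mul_eq_mul_div, div_le_iff₀ hk']
      linarith
    have h3 := mul_le_mul_of_nonneg_left h2 (sub_pos.2 hpq).le
    simp
    linarith
  have := hlow.trans (hq.le.trans hup)
  exact le_of_mul_le_mul_right this hn'

open SBM in
lemma aux_lam_upper (n k : ℕ) (hn : 0 < n) (p q : ℝ) (hq : 0 ≤ q) (hpq : q < p)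
    (cl : Fin n → Fin k) (lamG : Fin n → ℝ) (vG : Fin n → Fin n → ℝ)
    (hdecG : IsSpectralDecomp (meanMatrix n k p q cl) lamG vG) (M : ℝ)
    (hM : ∀ i, (clusterSize cl i : ℝ) ≤ M) :
    lamG ⟨0, hn⟩ ≤ q * n + (p - q) * M := by
  obtain ⟨hanti, horth, hdec⟩ := hdecG
  set z : Fin n := ⟨0, hn⟩
  have hG0 : ∀ u v, 0 ≤ meanMatrix n k p q cl u v := by
    intro u v
    unfold meanMatrix
    simp only [Matrix.of_apply]
    split_ifs <;> linarith
  have heig : ∀ u, ∑ v, meanMatrix n k p q cl u v * vG z v = lamG z * vG z u := by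
    intro u
    have h1 : ∀ v, meanMatrix n k p q cl u v * vG z v
        = ∑ i, lamG i * vG i u * (vG i v * vG z v) := by
      intro v
      rw [hdec]
      simp only [Matrix.sum_apply, Matrix.smul_apply, Matrix.vecMulVec_apply, smul_eq_mul]
      rw [Finset.sum_mul]
      exact Finset.sum_congr rfl fun i _ => by ring
    simp only [h1]
    rw [Finset.sum_comm]
    simp only [← Finset.mul_sum]
    have h2 : ∀ i, ∑ v, vG i v * vG z v = if i = z then (1 : ℝ) else 0 := fun i => horth i z
    simp [h2]
  have : Nonempty (Fin n) := ⟨z⟩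
  obtain ⟨m, -, hm⟩ := Finset.exists_max_image univ (fun u => |vG z u|) Finset.univ_nonempty
  have hmpos : 0 < |vG z m| := by
    rcases (abs_nonneg (vG z m)).lt_or_eq with h | h
    · exact h
    · exfalso
      have h0 : ∀ u, vG z u = 0 := fun u =>
        abs_eq_zero.1 (le_antisymm ((hm u (mem_univ _)).trans h.symm.le) (abs_nonneg _))
      have := horth z z
      simp [dotProduct, h0] at this
  have h3 : lamG z * |vG z m| ≤ (q * n + (p - q) * M) * |vG z m| := by
    calc lamG z * |vG z m| ≤ |lamG z * vG z m| := by
          rw [abs_mul]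
          exact mul_le_mul_of_nonneg_right (le_abs_self _) (abs_nonneg _)
      _ = |∑ v, meanMatrix n k p q cl m v * vG z v| := by rw [heig]
      _ ≤ ∑ v, |meanMatrix n k p q cl m v * vG z v| := Finset.abs_sum_le_sum_abs _ _
      _ ≤ ∑ v, meanMatrix n k p q cl m v * |vG z m| := by
          refine Finset.sum_le_sum fun v _ => ?_
          rw [abs_mul, abs_of_nonneg (hG0 m v)]
          exact mul_le_mul_of_nonneg_left (hm v (mem_univ _)) (hG0 m v)
      _ = (q * n + (p - q) * clusterSize cl (cl m)) * |vG z m| := by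
          rw [← Finset.sum_mul, aux_row_sum]
      _ ≤ _ := by
          have := mul_le_mul_of_nonneg_left (hM (cl m)) (sub_pos.2 hpq).le
          exact mul_le_mul_of_nonneg_right (by linarith) hmpos.le
  exact le_of_mul_le_mul_right h3 hmpos

open SBM in
lemma aux_psi_entry (n k : ℕ) (hn : 0 < n) (hk : 0 < k) (p q : ℝ) (hq : 0 ≤ q) (hpq : q < p)
    (cl : Fin n → Fin k) (l δ : ℝ)
    (hlo : ∀ i, (1 - δ) * ((n : ℝ) / k) ≤ clusterSize cl i)
    (hhi : ∀ i, (clusterSize cl i : ℝ) ≤ (1 + δ) * ((n : ℝ) / k)) (hδ : 0 ≤ δ)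
    (hl1 : q * n + (p - q) * ((n : ℝ) / k) ≤ l)
    (hl2 : l ≤ q * n + (p - q) * ((1 + δ) * ((n : ℝ) / k))) (u v : Fin n) :
    |psiM l ((p - q) * ((n : ℝ) / k)) (meanMatrix n k p q cl) u v| ≤
      (1 + δ) * ((k : ℝ) / n) * (if cl u = cl v then 1 else 0) + 3 * δ / n := by
  have hn' : (0 : ℝ) < n := by exact_mod_cast hn
  have hk' : (0 : ℝ) < k := by exact_mod_cast hk
  set d : ℝ := (n : ℝ) / k with hd
  have hdpos : 0 < d := by positivity
  set a : ℝ := p - q with ha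
  have hapos : 0 < a := sub_pos.2 hpq
  have hmu : 0 < a * d := by positivity
  have hlpos : 0 < l := lt_of_lt_of_le (by positivity) hl1
  have hlmu : a * d ≤ l := le_trans (by nlinarith [mul_nonneg hq hn'.le]) hl1
  set su : ℝ := ((clusterSize cl (cl u) : ℕ) : ℝ)
  set sv : ℝ := ((clusterSize cl (cl v) : ℕ) : ℝ)
  have hsu1 := mul_le_mul_of_nonneg_left (hlo (cl u)) hapos.le
  have hsu2 := mul_le_mul_of_nonneg_left (hhi (cl u)) hapos.le
  have hsv1 := mul_le_mul_of_nonneg_left (hlo (cl v)) hapos.le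
  have hsv2 := mul_le_mul_of_nonneg_left (hhi (cl v)) hapos.le
  have key : psiM l (a * d) (meanMatrix n k p q cl) u v =
      (1 / d) * (1 + (a * d - a * su) / l) * (if cl u = cl v then 1 else 0)
      + q / l * ((l + a * d - a * su - a * sv - q * n) / (a * d)) := by
    unfold psiM
    rw [Matrix.add_apply, Matrix.smul_apply, Matrix.smul_apply, aux_mean_sq, aux_mean_apply]
    simp only [smul_eq_mul]
    rw [← ha]
    change -(1 / (l * (a * d))) * (q ^ 2 * n + q * a * (su + sv) + a ^ 2 * su * _) + _ = _
    field_simp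
    ring
  rw [key]
  have hkd : (k : ℝ) / n = 1 / d := by rw [hd, one_div_div]
  rw [hkd]
  have h1 : |(a * d - a * su) / l| ≤ δ := by
    rw [abs_div, abs_of_pos hlpos, div_le_iff₀ hlpos, abs_le]
    have := mul_le_mul_of_nonneg_left hlmu hδ
    constructor <;> nlinarith
  have h2 : |(1 / d) * (1 + (a * d - a * su) / l)| ≤ (1 + δ) * (1 / d) := by
    rw [abs_mul, abs_of_pos (by positivity : 0 < 1 / d), mul_comm]
    gcongr
    refine (abs_add_le _ _).trans ?_
    rw [abs_one]
    linarith
  have h3 : |q / l| ≤ 1 / n := by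
    rw [abs_of_nonneg (by positivity), div_le_div_iff₀ hlpos hn']
    nlinarith
  have h4 : |(l + a * d - a * su - a * sv - q * n) / (a * d)| ≤ 3 * δ := by
    rw [abs_div, abs_of_pos hmu, div_le_iff₀ hmu, abs_le]
    constructor <;> nlinarith
  refine (abs_add_le _ _).trans (add_le_add ?_ ?_)
  · rw [abs_mul]
    refine mul_le_mul h2 ?_ (abs_nonneg _) (by positivity)
    split_ifs <;> simp
  · rw [abs_mul]
    calc _ ≤ 1 / (n : ℝ) * (3 * δ) := mul_le_mul h3 h4 (abs_nonneg _) (by positivity)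
      _ = _ := by ring

open SBM in
lemma aux_psi_norms (n k : ℕ) (hn : 0 < n) (hk : 2 ≤ k)
    (cl : Fin n → Fin k) (δ : ℝ)
    (hhi : ∀ i, (clusterSize cl i : ℝ) ≤ (1 + δ) * ((n : ℝ) / k)) (hδ : 0 ≤ δ) (hδ1 : δ ≤ 1 / 16)
    (A : Matrix (Fin n) (Fin n) ℝ)
    (hA : ∀ u v, |A u v| ≤ (1 + δ) * ((k : ℝ) / n) * (if cl u = cl v then 1 else 0) + 3 * δ / n)
    (u : Fin n) :
    ∑ v, |A u v| ≤ 1.4 ∧ ∑ v, |A v u| ≤ 1.4 ∧ ∑ v, A u v ^ 2 ≤ 1.5 * ((k : ℝ) / n) := by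
  have hn' : (0 : ℝ) < n := by exact_mod_cast hn
  have hk' : (2 : ℝ) ≤ k := by exact_mod_cast hk
  have hr : 0 < (k : ℝ) / n := by positivity
  have hr2 : 2 / (n : ℝ) ≤ (k : ℝ) / n := by gcongr
  set s : ℝ := ((clusterSize cl (cl u) : ℕ) : ℝ) with hs
  have hs0 : 0 ≤ s := by positivity
  have hsr : s * ((k : ℝ) / n) ≤ 1 + δ := by
    have := mul_le_mul_of_nonneg_right (hhi (cl u)) hr.le
    have e : (1 + δ) * ((n : ℝ) / k) * (k / n) = 1 + δ := by field_simp
    linarith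
  have hβ : (n : ℝ) * (3 * δ / n) = 3 * δ := by field_simp
  have hrow : (1 + δ) * ((k : ℝ) / n) * s + n * (3 * δ / n) ≤ 1.4 := by
    rw [hβ]
    nlinarith
  refine ⟨?_, ?_, ?_⟩
  · calc ∑ v, |A u v| ≤ ∑ v, ((1 + δ) * ((k : ℝ) / n) * (if cl u = cl v then 1 else 0) + 3 * δ / n) :=
          Finset.sum_le_sum fun v _ => hA u v
      _ = (1 + δ) * ((k : ℝ) / n) * s + n * (3 * δ / n) := by
          rw [Finset.sum_add_distrib, ← Finset.mul_sum, aux_size_sum, ← hs]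
          simp
      _ ≤ _ := hrow
  · calc ∑ v, |A v u| ≤ ∑ v, ((1 + δ) * ((k : ℝ) / n) * (if cl u = cl v then 1 else 0) + 3 * δ / n) := by
          refine Finset.sum_le_sum fun v _ => ?_
          have := hA v u
          simp only [eq_comm (a := cl v)] at this
          exact this
      _ = (1 + δ) * ((k : ℝ) / n) * s + n * (3 * δ / n) := by
          rw [Finset.sum_add_distrib, ← Finset.mul_sum, aux_size_sum, ← hs]
          simp
      _ ≤ _ := hrow
  · set α : ℝ := (1 + δ) * ((k : ℝ) / n) with hα
    set β : ℝ := 3 * δ / n with hβd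
    have hβ0 : 0 ≤ β := by positivity
    have hα0 : 0 ≤ α := by positivity
    calc ∑ v, A u v ^ 2 ≤ ∑ v, ((α ^ 2 + 2 * α * β) * (if cl u = cl v then 1 else 0) + β ^ 2) := by
          refine Finset.sum_le_sum fun v _ => ?_
          have h := pow_le_pow_left₀ (abs_nonneg _) (hA u v) 2
          rw [sq_abs] at h
          refine h.trans (le_of_eq ?_)
          split_ifs <;> ring
      _ = (α ^ 2 + 2 * α * β) * s + n * β ^ 2 := by
          rw [Finset.sum_add_distrib, ← Finset.mul_sum, aux_size_sum, ← hs]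
          simp
      _ ≤ _ := by
          have hβr : β ≤ 1.5 * δ * ((k : ℝ) / n) := by
            have : β = 1.5 * δ * (2 / n) := by rw [hβd]; ring
            rw [this]
            gcongr
          have hsα : s * α ≤ (1 + δ) ^ 2 := by rw [hα]; nlinarith
          have e1 : (α ^ 2 + 2 * α * β) * s + n * β ^ 2 = (s * α) * (α + 2 * β) + (3 * δ) * β := by
            rw [← hβ]; ring
          rw [e1]
          have hab : α + 2 * β ≤ (1 + 4 * δ) * ((k : ℝ) / n) := by rw [hα]; linarith
          calc (s * α) * (α + 2 * β) + (3 * δ) * β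
              ≤ (1 + δ) ^ 2 * ((1 + 4 * δ) * ((k : ℝ) / n)) + 3 * δ * (1.5 * δ * ((k : ℝ) / n)) := by
                gcongr
            _ = ((1 + δ) ^ 2 * (1 + 4 * δ) + 4.5 * δ ^ 2) * ((k : ℝ) / n) := by ring
            _ ≤ _ := by
                gcongr
                nlinarith [mul_nonneg hδ hδ, mul_nonneg hδ (sub_nonneg.2 hδ1),
                  mul_nonneg (mul_nonneg hδ hδ) (sub_nonneg.2 hδ1)]

lemma aux_two_point {Ω : Type*} [MeasurableSpace Ω] {P : Measure Ω} [IsProbabilityMeasure P]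
    (Y : Ω → ℝ) (hY : Measurable Y) (g : ℝ) (hg0 : 0 ≤ g) (hg1 : g ≤ 1)
    (hmap : Measure.map Y P = ENNReal.ofReal g • Measure.dirac (1 - g) +
      ENNReal.ofReal (1 - g) • Measure.dirac (-g)) :
    (∀ᵐ ω ∂P, |Y ω| ≤ 1) ∧ ∫ ω, Y ω ∂P = 0 ∧ ∫ ω, Y ω ^ 2 ∂P ≤ g := by
  have hint : ∀ f : ℝ → ℝ, Measurable f →
      ∫ ω, f (Y ω) ∂P = g * f (1 - g) + (1 - g) * f (-g) := by
    intro f hf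
    rw [← integral_map (f := f) hY.aemeasurable hf.aestronglyMeasurable, hmap, integral_add_measure,
      integral_smul_measure, integral_smul_measure, integral_dirac, integral_dirac,
      ENNReal.toReal_ofReal hg0, ENNReal.toReal_ofReal (by linarith)]
    · simp
    · exact (integrable_dirac (by simp)).smul_measure ENNReal.ofReal_ne_top
    · exact (integrable_dirac (by simp)).smul_measure ENNReal.ofReal_ne_top
  refine ⟨?_, ?_, ?_⟩
  · have hs : MeasurableSet {y : ℝ | |y| ≤ 1} := measurableSet_le (by fun_prop) (by fun_prop)
    have h : ∀ᵐ y ∂(Measure.map Y P), |y| ≤ 1 := by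
      rw [hmap, ae_add_measure_iff]
      constructor
      · refine Measure.ae_smul_measure ?_ _
        rw [ae_dirac_iff hs, abs_le]
        constructor <;> linarith
      · refine Measure.ae_smul_measure ?_ _
        rw [ae_dirac_iff hs, abs_le]
        constructor <;> linarith
    exact ae_of_ae_map hY.aemeasurable h
  · have := hint id measurable_id
    simp only [id] at this
    rw [this]
    ring
  · rw [hint (fun y => y ^ 2) (by fun_prop)]
    nlinarith

lemma aux_schur {n : ℕ} (A : Matrix (Fin n) (Fin n) ℝ) (c : ℝ) (hc : 0 ≤ c)
    (h1 : ∀ u, ∑ v, |A u v| ≤ c) (h2 : ∀ u, ∑ v, |A v u| ≤ c) (x : Fin n → ℝ) :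
    ∑ w, (∑ v, x v * A v w) ^ 2 ≤ c ^ 2 * ∑ v, x v ^ 2 := by
  calc ∑ w, (∑ v, x v * A v w) ^ 2 ≤ ∑ w, c * ∑ v, |A v w| * x v ^ 2 := by
        refine Finset.sum_le_sum fun w _ => ?_
        have h := Finset.sum_sq_le_sum_mul_sum_of_sq_le_mul univ (r := fun v => x v * A v w)
          (f := fun v => |A v w|) (g := fun v => |A v w| * x v ^ 2) (fun v _ => abs_nonneg _)
          (fun v _ => by positivity)
          (fun v _ => le_of_eq (by rw [mul_pow, ← sq_abs (A v w)]; ring))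
        refine h.trans ?_
        exact mul_le_mul_of_nonneg_right (h2 w) (Finset.sum_nonneg fun v _ => by positivity)
    _ = c * ∑ v, (∑ w, |A v w|) * x v ^ 2 := by
        rw [← Finset.mul_sum, Finset.sum_comm]
        simp only [Finset.sum_mul]
    _ ≤ c * ∑ v, c * x v ^ 2 := by
        gcongr with v
        exact h1 v
    _ = _ := by rw [← Finset.mul_sum]; ring

open SBM in
lemma aux_row_tail (n k : ℕ) (hn : 3 ≤ n) (hk : 2 ≤ k)
    (p q : ℝ) (hq : 0 ≤ q) (hpq : q < p) (hp : p ≤ 1)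
    (cl : Fin n → Fin k) {Ω : Type*} [MeasureSpace Ω] [IsProbabilityMeasure (ℙ : Measure Ω)]
    (E : Ω → Matrix (Fin n) (Fin n) ℝ) (hE : NoiseModel p q cl E)
    (A : Matrix (Fin n) (Fin n) ℝ)
    (hA : ∀ u, ∑ v, |A u v| ≤ 1.4 ∧ ∑ v, |A v u| ≤ 1.4 ∧ ∑ v, A u v ^ 2 ≤ 1.5 * ((k : ℝ) / n))
    (u : Fin n) :
    (ℙ : Measure Ω).real {ω | 10 * (Real.sqrt ((k : ℝ) * p * Real.log n) + Real.sqrt (Real.log n))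
      < SBM.enorm ((E ω * A) u)} ≤ 2 / (n : ℝ) ^ 3 := by
  obtain ⟨hsymm, hmeas, hindE, hmap⟩ := hE
  have hn' : (3 : ℝ) ≤ n := by exact_mod_cast hn
  have hk' : (2 : ℝ) ≤ k := by exact_mod_cast hk
  have hnpos : (0 : ℝ) < n := by linarith
  have hkpos : (0 : ℝ) < k := by linarith
  have hppos : 0 < p := by linarith
  have hL : 1 ≤ Real.log n := by
    rw [Real.le_log_iff_exp_le (by linarith)]
    linarith [Real.exp_one_lt_d9]
  have hexp : Real.exp (-3 * Real.log n) = 1 / (n : ℝ) ^ 3 := by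
    rw [show -3 * Real.log n = -(Real.log ((n : ℝ) ^ 3)) by rw [Real.log_pow]; push_cast; ring,
      Real.exp_neg, Real.exp_log (by positivity), one_div]
  set L : ℝ := Real.log n with hLd
  have hsE : ∀ ω a b, E ω a b = E ω b a := fun ω a b => by
    have := congrFun (congrFun (hsymm ω) b) a
    exact this
  let X : Fin n → Ω → ℝ := fun v ω => E ω u v
  have hX : ∀ v, Measurable (X v) := fun v => hmeas u v
  have hind : iIndepFun X ℙ := by
    let g : Fin n → {e : Fin n × Fin n // e.1 ≤ e.2} :=
      fun v => ⟨(min u v, max u v), min_le_max⟩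
    have hg : Function.Injective g := by
      intro v w h
      simp only [g, Subtype.mk.injEq, Prod.mk.injEq] at h
      obtain ⟨h1, h2⟩ := h
      rw [Fin.ext_iff, Fin.coe_min, Fin.coe_min] at h1
      rw [Fin.ext_iff, Fin.coe_max, Fin.coe_max] at h2
      rw [Fin.ext_iff]
      omega
    have h := hindE.precomp hg
    have e : X = fun v ω => E ω (g v).1.1 (g v).1.2 := by
      funext v ω
      simp only [X, g]
      rcases le_total u v with h3 | h3
      · rw [min_eq_left h3, max_eq_right h3]
      · rw [min_eq_right h3, max_eq_left h3, hsE]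
    rw [e]
    exact h
  have hmom : ∀ v, (∀ᵐ ω ∂(ℙ : Measure Ω), |X v ω| ≤ 1) ∧ ∫ ω, X v ω = 0 ∧
      ∫ ω, X v ω ^ 2 ≤ p := by
    intro v
    have hgen : ∀ a b : Fin n, a ≤ b → (∀ᵐ ω ∂(ℙ : Measure Ω), |E ω a b| ≤ 1) ∧
        ∫ ω, E ω a b = 0 ∧ ∫ ω, E ω a b ^ 2 ≤ p := by
      intro a b hab
      have hG : 0 ≤ meanMatrix n k p q cl a b ∧ meanMatrix n k p q cl a b ≤ p := by
        unfold meanMatrix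
        simp only [Matrix.of_apply]
        split_ifs <;> constructor <;> linarith
      obtain ⟨h1, h2, h3⟩ := aux_two_point (fun ω => E ω a b) (hmeas a b) _ hG.1 (hG.2.trans hp)
        (hmap a b hab)
      exact ⟨h1, h2, h3.trans hG.2⟩
    rcases le_total u v with h3 | h3
    · exact hgen u v h3
    · have := hgen v u h3
      simp only [hsE _ v u] at this
      exact this
  set D : ℝ := Real.sqrt ((k : ℝ) * p * L) + Real.sqrt L with hD
  have hs1 : 0 ≤ Real.sqrt ((k : ℝ) * p * L) := Real.sqrt_nonneg _
  have hs2 : 0 < Real.sqrt L := Real.sqrt_pos.2 (by linarith)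
  have hq1 : Real.sqrt ((k : ℝ) * p * L) ^ 2 = k * p * L := Real.sq_sqrt (by positivity)
  have hq2 : Real.sqrt L ^ 2 = L := Real.sq_sqrt (by linarith)
  have hDpos : 0 < D := by linarith
  have hD2 : k * p * L + L ≤ D ^ 2 := by
    rw [hD]
    nlinarith [mul_nonneg hs1 hs2.le]
  by_cases hcase : L / 5 ≤ (n : ℝ) / k
  · -- large clusters: vector Bernstein
    let w : Fin n → EuclideanSpace ℝ (Fin n) := fun v => WithLp.toLp 2 (A v)
    have hw : ∀ v, ‖w v‖ ^ 2 ≤ 1.5 * ((k : ℝ) / n) := by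
      intro v
      rw [EuclideanSpace.norm_sq_eq]
      simp only [Real.norm_eq_abs, sq_abs]
      exact (hA v).2.2
    have hnorm : ∀ ω, SBM.enorm ((E ω * A) u) = ‖∑ v, X v ω • w v‖ := by
      intro ω
      rw [EuclideanSpace.norm_eq]
      unfold SBM.enorm
      congr 1
      refine Finset.sum_congr rfl fun j _ => ?_
      rw [Real.norm_eq_abs, sq_abs, Matrix.mul_apply]
      simp [w, X]
    set l : ℝ := 0.35 * L / D with hl
    have hlpos : 0 < l := by positivity
    have hlD : l * D = 0.35 * L := by rw [hl]; field_simp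
    have hlD2 : l ^ 2 * D ^ 2 = 0.1225 * L ^ 2 := by rw [← mul_pow, hlD]; ring
    have hlsq : l ^ 2 * (k * p * L + L) ≤ 0.1225 * L ^ 2 := by
      rw [← hlD2]
      gcongr
    have hlsq' : l ^ 2 * (k * p + 1) ≤ 0.1225 * L := by
      refine le_of_mul_le_mul_right ?_ (by linarith : 0 < L)
      linarith
    have hl2 : 0 ≤ l ^ 2 * (k * p) := by positivity
    have hlR : l ^ 2 * (1.5 * ((k : ℝ) / n)) ≤ 1 := by
      have h1 : l ^ 2 ≤ 0.1225 * L := by linarith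
      have h2 : L * ((k : ℝ) / n) ≤ 5 := by
        rw [le_div_iff₀ hkpos] at hcase
        rw [← mul_div_assoc, div_le_iff₀ hnpos]
        linarith
      have h3 : 0 < (k : ℝ) / n := by positivity
      have h4 := mul_le_mul_of_nonneg_right h1 h3.le
      linarith
    have htail := aux_vec_tail X hX hind (fun v => (hmom v).1) (fun v => (hmom v).2.1) p hppos.le
      (fun v => (hmom v).2.2) w (1.5 * ((k : ℝ) / n)) l (10 * D) hlpos hw hlR
    have hsub : {ω | 10 * D < SBM.enorm ((E ω * A) u)} ⊆ {ω | 10 * D ≤ ‖∑ v, X v ω • w v‖} := by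
      intro ω hω
      have hω' : 10 * D < SBM.enorm ((E ω * A) u) := hω
      rw [hnorm] at hω'
      exact hω'.le
    refine (measureReal_mono hsub).trans (htail.trans ?_)
    have he : l ^ 2 * ((n : ℝ) * (1.5 * ((k : ℝ) / n)) * p) - l * (10 * D) ≤ -3 * L := by
      have e1 : (n : ℝ) * (1.5 * ((k : ℝ) / n)) * p = 1.5 * (k * p) := by field_simp
      rw [e1]
      have e2 : l * (10 * D) = 3.5 * L := by linear_combination 10 * hlD
      rw [e2]
      nlinarith [sq_nonneg l]
    have := Real.exp_le_exp.2 he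
    rw [hexp] at this
    calc _ ≤ 2 * (1 / (n : ℝ) ^ 3) := by gcongr
      _ = _ := by ring
  · -- small clusters: scalar bound
    push Not at hcase
    have htail := aux_scal_tail X hX hind (fun v => (hmom v).1) p (fun v => (hmom v).2.2)
      (2 * n * p + 3 * L)
    have hnp : 2 * n * p ≤ 0.4 * (k * p * L) := by
      rw [div_lt_iff₀ hkpos] at hcase
      nlinarith
    have hsub : {ω | 10 * D < SBM.enorm ((E ω * A) u)} ⊆
        {ω | 2 * n * p + 3 * L ≤ ∑ v, X v ω ^ 2} := by
      intro ω hω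
      have hω' : 10 * D < SBM.enorm ((E ω * A) u) := hω
      change 2 * n * p + 3 * L ≤ ∑ v, X v ω ^ 2
      have hs := aux_schur A 1.4 (by norm_num) (fun u => (hA u).1) (fun u => (hA u).2.1)
        (fun v => X v ω)
      have h1 : SBM.enorm ((E ω * A) u) ^ 2 = ∑ w, (∑ v, X v ω * A v w) ^ 2 := by
        unfold SBM.enorm
        rw [Real.sq_sqrt (Finset.sum_nonneg fun i _ => sq_nonneg _)]
        rfl
      have h2 : (10 * D) ^ 2 ≤ SBM.enorm ((E ω * A) u) ^ 2 :=
        pow_le_pow_left₀ (by positivity) hω'.le 2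
      have h3 : 0 ≤ (k : ℝ) * p * L := by positivity
      rw [h1] at h2
      nlinarith
    refine (measureReal_mono hsub).trans (htail.trans ?_)
    rw [show 2 * (n : ℝ) * p - (2 * n * p + 3 * L) = -3 * L by ring, hexp]
    gcongr
    norm_num

open SBM in
/-- If `n ≥ 3`, `k ≥ 2` and the partition is balanced, then with
probability at least `1 − 2n^{−2}` over the choice of `E`,
`‖E·ψ(G)‖_{2→∞} ≤ 10(√(k·p·log n) + √(log n))`. -/
theorem E_mul_psi_mean_bound (n k : ℕ) (hn : 3 ≤ n) (hk : 2 ≤ k)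
    (p q : ℝ) (hq : 0 ≤ q) (hpq : q < p) (hp : p ≤ 1)
    (cl : Fin n → Fin k) (hbal : Balanced n k cl)
    (lamG : Fin n → ℝ) (vG : Fin n → Fin n → ℝ)
    (hdecG : IsSpectralDecomp (meanMatrix n k p q cl) lamG vG)
    (Ω : Type*) [MeasureSpace Ω] [IsProbabilityMeasure (ℙ : Measure Ω)]
    (E : Ω → Matrix (Fin n) (Fin n) ℝ) (hE : NoiseModel p q cl E) :
    ENNReal.ofReal (1 - 2 / (n : ℝ) ^ 2) ≤
      ℙ {ω : Ω |
        n2i (E ω * psiM (lamG ⟨0, by omega⟩) ((p - q) * ((n : ℝ) / k))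
            (meanMatrix n k p q cl)) ≤
          10 * (Real.sqrt ((k : ℝ) * p * Real.log n) + Real.sqrt (Real.log n))} := by
  have hn0 : 0 < n := by omega
  have hk0 : 0 < k := by omega
  have hn' : (3 : ℝ) ≤ n := by exact_mod_cast hn
  have hk' : (2 : ℝ) ≤ k := by exact_mod_cast hk
  have hL : 1 ≤ Real.log n := by
    rw [Real.le_log_iff_exp_le (by linarith)]
    linarith [Real.exp_one_lt_d9]
  set L : ℝ := Real.log n with hLd
  set δ : ℝ := 1 / (16 * L) with hδd
  have hδ0 : 0 ≤ δ := by positivity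
  have hδ1 : δ ≤ 1 / 16 := by
    rw [hδd]
    gcongr
    linarith
  have hl1 := aux_lam_lower n k hn0 hk0 p q hpq cl lamG vG hdecG
  have hl2 := aux_lam_upper n k hn0 p q hq hpq cl lamG vG hdecG _ fun i => (hbal i).2
  set A := psiM (lamG ⟨0, by omega⟩) ((p - q) * ((n : ℝ) / k)) (meanMatrix n k p q cl) with hA
  have hent : ∀ u v, |A u v| ≤
      (1 + δ) * ((k : ℝ) / n) * (if cl u = cl v then 1 else 0) + 3 * δ / n :=
    fun u v => aux_psi_entry n k hn0 hk0 p q hq hpq cl _ δ (fun i => (hbal i).1)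
      (fun i => (hbal i).2) hδ0 hl1 hl2 u v
  have hnorms := aux_psi_norms n k hn0 hk cl δ (fun i => (hbal i).2) hδ0 hδ1 A hent
  set t : ℝ := 10 * (Real.sqrt ((k : ℝ) * p * L) + Real.sqrt L) with ht
  have hrow : ∀ u, (ℙ : Measure Ω).real {ω | t < SBM.enorm ((E ω * A) u)} ≤ 2 / (n : ℝ) ^ 3 := by
    intro u
    exact aux_row_tail n k hn hk p q hq hpq hp cl E hE A hnorms u
  have hbad : (ℙ : Measure Ω).real (⋃ u, {ω | t < SBM.enorm ((E ω * A) u)}) ≤ 2 / (n : ℝ) ^ 2 := by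
    refine (measureReal_iUnion_fintype_le _).trans ?_
    calc _ ≤ ∑ u : Fin n, 2 / (n : ℝ) ^ 3 := Finset.sum_le_sum fun u _ => hrow u
      _ = _ := by
        simp
        field_simp
  have hcover : (Set.univ : Set Ω) ⊆ {ω | n2i (E ω * A) ≤ t} ∪
      ⋃ u, {ω | t < SBM.enorm ((E ω * A) u)} := by
    intro ω _
    by_cases h : ∃ u, t < SBM.enorm ((E ω * A) u)
    · right
      exact Set.mem_iUnion.2 h
    · left
      push Not at h
      have : Nonempty (Fin n) := ⟨⟨0, hn0⟩⟩
      exact ciSup_le h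
  have h1 := (measureReal_mono (μ := (ℙ : Measure Ω)) hcover).trans (measureReal_union_le _ _)
  rw [probReal_univ] at h1
  refine ENNReal.ofReal_le_of_le_toReal ?_
  change _ ≤ (ℙ : Measure Ω).real _
  linarith
end

section
/- Suppose n ≥ 3, k ≥ 2 and the partition is balanced, and let F := ψ(G). Then for all vertices u, v ∈ V: if u and v lie in the same cluster then 0 ≤ F_{uv} ≤ 5k/n, and if u and v lie in different clusters then |F_{uv}| ≤ 10/n. -/
open MeasureTheory ProbabilityTheory Matrix Finset

namespace SBM

lemma quad_decomp {n : ℕ} {A : Matrix (Fin n) (Fin n) ℝ} {lam : Fin n → ℝ}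
    {v : Fin n → Fin n → ℝ} (h : A = ∑ i, lam i • Matrix.vecMulVec (v i) (v i))
    (x : Fin n → ℝ) :
    ∑ i, ∑ j, A i j * (x i * x j) = ∑ l, lam l * (dotProduct (v l) x) ^ 2 := by
  subst h
  simp only [Matrix.sum_apply, Matrix.smul_apply, Matrix.vecMulVec_apply, smul_eq_mul,
    dotProduct, Finset.sum_mul, pow_two, Finset.mul_sum]
  have h1 : ∀ i : Fin n, ∑ j, ∑ l, lam l * (v l i * v l j) * (x i * x j)
      = ∑ l, ∑ j, lam l * (v l i * v l j) * (x i * x j) := fun i => Finset.sum_comm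
  simp only [h1]
  rw [Finset.sum_comm]
  refine Finset.sum_congr rfl fun l _ => ?_
  rw [Finset.sum_comm]
  refine Finset.sum_congr rfl fun i _ => Finset.sum_congr rfl fun j _ => ?_
  ring

lemma parseval {n : ℕ} {v : Fin n → Fin n → ℝ}
    (h : ∀ i j, dotProduct (v i) (v j) = if i = j then (1 : ℝ) else 0) (x : Fin n → ℝ) :
    ∑ l, (dotProduct (v l) x) ^ 2 = ∑ i, x i ^ 2 := by
  have h1 : (Matrix.of v) * (Matrix.of v)ᵀ = 1 := by
    ext i j
    rw [Matrix.mul_apply, Matrix.one_apply]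
    simpa [dotProduct] using h i j
  have h2 : (Matrix.of v)ᵀ * (Matrix.of v) = 1 := mul_eq_one_comm.mp h1
  have h3 : (1 : Matrix (Fin n) (Fin n) ℝ) =
      ∑ i, (fun _ => (1 : ℝ)) i • Matrix.vecMulVec (v i) (v i) := by
    rw [← h2]
    ext i j
    simp [Matrix.mul_apply, Matrix.sum_apply, Matrix.vecMulVec_apply]
  have h4 := quad_decomp h3 x
  simp only [one_mul] at h4
  rw [← h4]
  simp [Matrix.one_apply, pow_two]

lemma top_upper {n : ℕ} {A : Matrix (Fin n) (Fin n) ℝ} {lam : Fin n → ℝ}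
    {v : Fin n → Fin n → ℝ} (h : IsSpectralDecomp A lam v)
    (hpos : ∀ i j, 0 ≤ A i j) (hsymm : ∀ i j, A i j = A j i) (R : ℝ)
    (hR : ∀ i, ∑ j, A i j ≤ R) (l : Fin n) : lam l ≤ R := by
  obtain ⟨-, ho, hd⟩ := h
  have h1 := quad_decomp hd (v l)
  have h2 : ∑ m, lam m * (dotProduct (v m) (v l)) ^ 2 = lam l := by
    simp [ho]
  rw [h2] at h1
  have h3 : ∑ i, v l i * v l i = 1 := by simpa [dotProduct] using ho l l
  rw [← h1]
  have h4 : ∑ i, ∑ j, A i j * (v l i * v l j)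
      ≤ ∑ i, ∑ j, (A i j * (v l i * v l i) / 2 + A i j * (v l j * v l j) / 2) := by
    refine Finset.sum_le_sum fun i _ => Finset.sum_le_sum fun j _ => ?_
    nlinarith [mul_nonneg (hpos i j) (sq_nonneg (v l i - v l j))]
  have h5 : ∑ i, ∑ j, A i j * (v l j * v l j) / 2 = ∑ i, ∑ j, A i j * (v l i * v l i) / 2 := by
    rw [Finset.sum_comm]
    refine Finset.sum_congr rfl fun i _ => Finset.sum_congr rfl fun j _ => ?_
    rw [hsymm]
  refine h4.trans ?_
  simp only [Finset.sum_add_distrib]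
  rw [h5, ← Finset.sum_add_distrib]
  calc _ = ∑ i, (∑ j, A i j) * (v l i * v l i) := by
        refine Finset.sum_congr rfl fun i _ => ?_
        rw [← Finset.sum_add_distrib, Finset.sum_mul]
        exact Finset.sum_congr rfl fun j _ => by ring
    _ ≤ ∑ i, R * (v l i * v l i) :=
        Finset.sum_le_sum fun i _ => mul_le_mul_of_nonneg_right (hR i) (mul_self_nonneg _)
    _ = R := by rw [← Finset.mul_sum, h3, mul_one]

lemma top_lower {n : ℕ} {A : Matrix (Fin n) (Fin n) ℝ} {lam : Fin n → ℝ}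
    {v : Fin n → Fin n → ℝ} (h : IsSpectralDecomp A lam v) (R : ℝ) (hn : 0 < n)
    (hR : ∀ i, R ≤ ∑ j, A i j) : R ≤ lam ⟨0, hn⟩ := by
  obtain ⟨ha, ho, hd⟩ := h
  have h1 := quad_decomp hd (fun _ => 1)
  have h2 := parseval ho (fun _ => 1)
  have h3 : ∑ l, lam l * (dotProduct (v l) (fun _ => 1)) ^ 2
      ≤ ∑ l, lam ⟨0, hn⟩ * (dotProduct (v l) (fun _ => 1)) ^ 2 := by
    refine Finset.sum_le_sum fun l _ => mul_le_mul_of_nonneg_right (ha ?_) (sq_nonneg _)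
    exact Fin.mk_le_of_le_val (Nat.zero_le _)
  rw [← Finset.mul_sum, h2, ← h1] at h3
  have h4 : ∑ _i : Fin n, R ≤ ∑ i, ∑ j, A i j := Finset.sum_le_sum fun i _ => hR i
  simp at h3 h4
  have hn' : (0 : ℝ) < n := by exact_mod_cast hn
  nlinarith

lemma sum_ind {n k : ℕ} (cl : Fin n → Fin k) (i : Fin k) :
    ∑ w, (if cl w = i then (1 : ℝ) else 0) = clusterSize cl i := by
  simp [clusterSize]

lemma mean_apply (n k : ℕ) (p q : ℝ) (cl : Fin n → Fin k) (u w : Fin n) :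
    meanMatrix n k p q cl u w = q + (p - q) * (if cl w = cl u then (1 : ℝ) else 0) := by
  simp only [meanMatrix, Matrix.of_apply, eq_comm (a := cl u)]
  split_ifs <;> ring

lemma mean_symm (n k : ℕ) (p q : ℝ) (cl : Fin n → Fin k) (u w : Fin n) :
    meanMatrix n k p q cl u w = meanMatrix n k p q cl w u := by
  simp only [meanMatrix, Matrix.of_apply, eq_comm (a := cl u)]

lemma row_sum (n k : ℕ) (p q : ℝ) (cl : Fin n → Fin k) (u : Fin n) :
    ∑ w, meanMatrix n k p q cl u w = n * q + (p - q) * clusterSize cl (cl u) := by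
  simp only [mean_apply, Finset.sum_add_distrib, ← Finset.mul_sum, sum_ind]
  simp

lemma sq_same (n k : ℕ) (p q : ℝ) (cl : Fin n → Fin k) (u v : Fin n) (h : cl u = cl v) :
    (meanMatrix n k p q cl * meanMatrix n k p q cl) u v
      = n * q ^ 2 + (p - q) * (p + q) * clusterSize cl (cl u) := by
  rw [Matrix.mul_apply, ← sum_ind, Finset.mul_sum]
  have : (n : ℝ) * q ^ 2 = ∑ _w : Fin n, q ^ 2 := by simp
  rw [this, ← Finset.sum_add_distrib]
  refine Finset.sum_congr rfl fun w _ => ?_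
  rw [mean_symm n k p q cl w v, mean_apply, mean_apply, ← h]
  split_ifs <;> ring

lemma sq_diff (n k : ℕ) (p q : ℝ) (cl : Fin n → Fin k) (u v : Fin n) (h : cl u ≠ cl v) :
    (meanMatrix n k p q cl * meanMatrix n k p q cl) u v
      = n * q ^ 2 + (p - q) * q * clusterSize cl (cl u)
        + (p - q) * q * clusterSize cl (cl v) := by
  rw [Matrix.mul_apply, ← sum_ind, ← sum_ind, Finset.mul_sum, Finset.mul_sum]
  have : (n : ℝ) * q ^ 2 = ∑ _w : Fin n, q ^ 2 := by simp
  rw [this, ← Finset.sum_add_distrib, ← Finset.sum_add_distrib]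
  refine Finset.sum_congr rfl fun w _ => ?_
  rw [mean_symm n k p q cl w v, mean_apply, mean_apply]
  by_cases h1 : cl w = cl u
  · have h2 : cl w ≠ cl v := fun h' => h (h1.symm.trans h')
    simp only [h1, h, if_true, if_false]; ring
  · simp only [h1, if_false]; ring

/-- Pure real-arithmetic core. Here `N = n`, `m = n / k`, `d = p - q`. -/
lemma core (N m d q L s t e : ℝ) (hm : 0 < m) (hN : 2 * m ≤ N) (hd : 0 < d) (hq : 0 ≤ q)
    (he : 0 ≤ e) (he' : e ≤ 1 / 16)
    (hL1 : N * q + d * ((1 - e) * m) ≤ L) (hL2 : L ≤ N * q + d * ((1 + e) * m))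
    (hs1 : (1 - e) * m ≤ s) (hs2 : s ≤ (1 + e) * m)
    (ht1 : (1 - e) * m ≤ t) (ht2 : t ≤ (1 + e) * m) :
    0 < L ∧ 
    0 ≤ -(N * q ^ 2 + d * (d + 2 * q) * s) + (d * m + L) * (q + d) ∧
    -(N * q ^ 2 + d * (d + 2 * q) * s) + (d * m + L) * (q + d) ≤ 5 * (L * d) ∧
    |-(N * q ^ 2 + d * q * s + d * q * t) + (d * m + L) * q| * N ≤ 10 * (L * d * m) := by
  have hem : e * m ≤ m / 16 := by nlinarith
  have hem0 : 0 ≤ e * m := by positivity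
  have hNq : 2 * m * q ≤ N * q := mul_le_mul_of_nonneg_right hN hq
  have hdm : 0 < d * m := by positivity
  have hmq : 0 ≤ m * q := by positivity
  have hdem : d * (e * m) ≤ d * (m / 16) := mul_le_mul_of_nonneg_left hem hd.le
  have hL0 : 0 < L := by nlinarith
  have hLm : (15 / 16) * (m * (q + d)) ≤ L := by nlinarith
  have hLN : N * q ≤ L := by nlinarith
  have hN0 : 0 < N := by linarith
  refine ⟨hL0, ?_, ?_, ?_⟩
  · have a1 : (N * q + d * ((1 - e) * m)) * (q + d) ≤ L * (q + d) :=
      mul_le_mul_of_nonneg_right hL1 (by linarith)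
    have a2 : (d + 2 * q) * s ≤ (d + 2 * q) * ((1 + 1/16) * m) :=
      mul_le_mul_of_nonneg_left (by nlinarith) (by linarith)
    have a3 : d * ((d + 2 * q) * s) ≤ d * ((d + 2 * q) * ((1 + 1/16) * m)) :=
      mul_le_mul_of_nonneg_left a2 hd.le
    have a4 : d * (q + d) * (e * m) ≤ d * (q + d) * (m / 16) :=
      mul_le_mul_of_nonneg_left hem (by positivity)
    have a5 : d * (2 * m * q) ≤ d * (N * q) := mul_le_mul_of_nonneg_left hNq hd.le
    have a6 : 0 ≤ d * d * m := by positivity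
    have a7 : 0 ≤ d * q * m := by positivity
    nlinarith
  · have b1 : q * L ≤ q * (N * q + d * ((1 + e) * m)) := mul_le_mul_of_nonneg_left hL2 hq
    have a2 : (d + 2 * q) * ((1 - 1/16) * m) ≤ (d + 2 * q) * s :=
      mul_le_mul_of_nonneg_left (by nlinarith) (by linarith)
    have a3 : d * ((d + 2 * q) * ((1 - 1/16) * m)) ≤ d * ((d + 2 * q) * s) :=
      mul_le_mul_of_nonneg_left a2 hd.le
    have a4 : d * q * (e * m) ≤ d * q * (m / 16) :=
      mul_le_mul_of_nonneg_left hem (by positivity)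
    have a5 : d * ((15 / 16) * (m * (q + d))) ≤ d * L := mul_le_mul_of_nonneg_left hLm hd.le
    have a6 : 0 ≤ d * d * m := by positivity
    have a7 : 0 ≤ d * q * m := by positivity
    nlinarith
  · have hdq : 0 ≤ d * q := by positivity
    have c1 : q * L ≤ q * (N * q + d * ((1 + e) * m)) := mul_le_mul_of_nonneg_left hL2 hq
    have c2 : q * (N * q + d * ((1 - e) * m)) ≤ q * L := mul_le_mul_of_nonneg_left hL1 hq
    have c3 := mul_le_mul_of_nonneg_left hs1 hdq
    have c4 := mul_le_mul_of_nonneg_left hs2 hdq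
    have c5 := mul_le_mul_of_nonneg_left ht1 hdq
    have c6 := mul_le_mul_of_nonneg_left ht2 hdq
    have a4 : d * q * (e * m) ≤ d * q * (m / 16) := mul_le_mul_of_nonneg_left hem hdq
    have a7 : 0 ≤ d * q * m := by positivity
    have h1 : |-(N * q ^ 2 + d * q * s + d * q * t) + (d * m + L) * q| ≤ 10 * (d * q * m) := by
      rw [abs_le]; constructor <;> nlinarith
    have h2 := mul_le_mul_of_nonneg_right h1 hN0.le
    have h3 : d * m * (N * q) ≤ d * m * L := mul_le_mul_of_nonneg_left hLN hdm.le
    nlinarith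

end SBM

open SBM in
/-- Entries of `F = ψ(G)`. Suppose `n ≥ 3`, `k ≥ 2` and the partition is
balanced.  For all `u, v`: if `u, v` are in the same cluster then `0 ≤ F_{uv} ≤ 5k/n`;
otherwise `|F_{uv}| ≤ 10/n`. -/
theorem entries_of_psi_mean (n k : ℕ) (hn : 3 ≤ n) (hk : 2 ≤ k)
    (p q : ℝ) (hq : 0 ≤ q) (hpq : q < p) (hp : p ≤ 1)
    (cl : Fin n → Fin k) (hbal : Balanced n k cl)
    (lamG : Fin n → ℝ) (vG : Fin n → Fin n → ℝ)
    (hdecG : IsSpectralDecomp (meanMatrix n k p q cl) lamG vG) :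
    ∀ u v : Fin n,
      (cl u = cl v →
        0 ≤ psiM (lamG ⟨0, by omega⟩) ((p - q) * ((n : ℝ) / k))
              (meanMatrix n k p q cl) u v ∧
        psiM (lamG ⟨0, by omega⟩) ((p - q) * ((n : ℝ) / k))
              (meanMatrix n k p q cl) u v ≤ 5 * (k : ℝ) / n) ∧
      (cl u ≠ cl v →
        |psiM (lamG ⟨0, by omega⟩) ((p - q) * ((n : ℝ) / k))
              (meanMatrix n k p q cl) u v| ≤ 10 / (n : ℝ)) := by
  have hn0 : 0 < n := by omega
  have hnR : (0 : ℝ) < n := by exact_mod_cast hn0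
  have hkR : (2 : ℝ) ≤ k := by exact_mod_cast hk
  have hk0 : (0 : ℝ) < k := by linarith
  have hlog : 1 ≤ Real.log n := by
    rw [Real.le_log_iff_exp_le hnR]
    have h3 : (3 : ℝ) ≤ n := by exact_mod_cast hn
    linarith [Real.exp_one_lt_d9]
  have he0 : 0 ≤ 1 / (16 * Real.log n) := by positivity
  have he1 : 1 / (16 * Real.log n) ≤ 1 / 16 :=
    one_div_le_one_div_of_le (by norm_num) (by linarith)
  have hm : 0 < (n : ℝ) / k := by positivity
  have hNm : (n : ℝ) = k * ((n : ℝ) / k) := by field_simp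
  have hN : 2 * ((n : ℝ) / k) ≤ n := by
    calc 2 * ((n : ℝ) / k) ≤ k * ((n : ℝ) / k) := mul_le_mul_of_nonneg_right hkR hm.le
      _ = n := hNm.symm
  have hd : 0 < p - q := by linarith
  have h5 : 5 * (k : ℝ) / n = 5 / ((n : ℝ) / k) := by field_simp
  unfold SBM.Balanced at hbal
  have hL1 := top_lower hdecG (n * q + (p - q) * ((1 - 1 / (16 * Real.log n)) * ((n : ℝ) / k))) hn0
    (fun i => by
      rw [row_sum]
      have := mul_le_mul_of_nonneg_left (hbal (cl i)).1 hd.le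
      linarith)
  have hL2 := top_upper hdecG
    (fun i j => by
      simp only [meanMatrix, Matrix.of_apply]
      split_ifs <;> linarith) (mean_symm n k p q cl)
    (n * q + (p - q) * ((1 + 1 / (16 * Real.log n)) * ((n : ℝ) / k)))
    (fun i => by
      rw [row_sum]
      have := mul_le_mul_of_nonneg_left (hbal (cl i)).2 hd.le
      linarith) ⟨0, hn0⟩
  rw [h5]
  generalize lamG ⟨0, hn0⟩ = L at hL1 hL2 ⊢
  intro u v
  obtain ⟨hs1, hs2⟩ := hbal (cl u)
  obtain ⟨ht1, ht2⟩ := hbal (cl v)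
  generalize 1 / (16 * Real.log n) = e at *
  generalize (n : ℝ) / k = m at *
  obtain ⟨hL, c1, c2, c3⟩ := core n m (p - q) q L _ _ e hm hN hd hq he0 he1 hL1 hL2
    hs1 hs2 ht1 ht2
  have hden : 0 < L * ((p - q) * m) := by positivity
  refine ⟨fun h => ?_, fun h => ?_⟩
  · have hF : psiM L ((p - q) * m) (meanMatrix n k p q cl) u v
        = (-(n * q ^ 2 + (p - q) * ((p - q) + 2 * q) * clusterSize cl (cl u))
          + ((p - q) * m + L) * (q + (p - q))) / (L * ((p - q) * m)) := by
      simp only [psiM, Matrix.add_apply, Matrix.smul_apply, smul_eq_mul, sq_same n k p q cl u v h]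
      simp only [meanMatrix, Matrix.of_apply, h, if_true]
      field_simp
      ring
    rw [hF]
    refine ⟨div_nonneg c1 hden.le, ?_⟩
    rw [div_le_div_iff₀ hden hm]
    have := mul_le_mul_of_nonneg_right c2 hm.le
    linarith
  · have hF : psiM L ((p - q) * m) (meanMatrix n k p q cl) u v
        = (-(n * q ^ 2 + (p - q) * q * clusterSize cl (cl u)
            + (p - q) * q * clusterSize cl (cl v))
          + ((p - q) * m + L) * q) / (L * ((p - q) * m)) := by
      simp only [psiM, Matrix.add_apply, Matrix.smul_apply, smul_eq_mul, sq_diff n k p q cl u v h]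
      simp only [meanMatrix, Matrix.of_apply, h, if_false]
      field_simp
    rw [hF, abs_div, abs_of_pos hden, div_le_div_iff₀ hden hnR]
    linarith
end
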